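/- arXiv:2308.01388 — 2 statements merged into one kernel-verified Lean document; each statement's English description precedes it below -/
import Mathlib

section
/- (Lemma 5.2, formula (beta−).) Uniformly over all λ ∈ C⁺ and all X ∈ a with x3 ≥ x2, one has V(λ)^{2k}·E_k(X,λ) ≍ ∫_{λ3}^{λ2} ∫_{λ2}^{λ1} [(ν1−ν2)(β_λ − β_X(ν1−λ2)(ν2−λ3)) / (1−β_X(ν1−ν2))^{k+1}] (λ1−ν1)(λ1−ν2) e^{(x3−x1)ν1 + (x2−x1)ν2} W_k(λ,ν) dν1 dν2. -/
/-!
The point is the symmetry `E_k(X, λ) = E_k(-w₀X, -w₀λ)`, with `w₀` the longest Weyl group element.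
The integral formula for `E_k` hides this symmetry, which turns the case `x₃ ≥ x₂` into one where
the rank-one kernels can be estimated under the integral sign.

Writing the rank-one kernel as an integral over `ζ ∈ (ν₂, ν₁)` makes `V(λ)^{2k} E_k(X, λ)` a triple
integral over Gelfand–Tsetlin patterns. In the coordinates `s = ν₁ + ν₂`, `ζ`, `τ = (ν₁ - ν₂) / 2`
the integrand is a constant times `exp (x₁ ζ + x₂ (s - ζ) - x₃ s) K(τ) R(τ)^{k-1}`, where `K` and
`R` depend on the positions `e₁, e₂, e₃, e₄` of `λ₁, λ₂, λ₃, ζ` relative to `s / 2`. Passing to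
`(-w₀X, -w₀λ)` exchanges `s` and `ζ`, and replaces `e`, up to signs and order, by its reflection in
the vector `(1, 1, 1, 1)`, which represents an outer automorphism of `D₄` (triality). So it is
enough that the push-forward under `R` of the measure `K(τ) dτ` is invariant under this reflection.
For `r > 0` the set `{R > r}` is an interval `(t₂, t₃)`, where `t₁², …, t₄²` are the roots of
`∏ (eᵢ² - v) - r v` and `∏ tᵢ = ∏ eᵢ`. The reflection changes the `D₄`-invariants of `e` and of `t`
in the same way, hence it carries `t` along with `e`, and it preserves the integral of `K` over
`(t₂, t₃)`, which is elementary.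

After the symmetry the rank-one kernels have the arguments `± y` with `y = (x₃ - x₂)(ν₁ - ν₂) / 2`,
which is nonnegative, and are comparable to `e^y / (1 + 2y)^k` and `e^y / (1 + 2y)^{k+1}`.
-/

open Real MeasureTheory

/-- The rank-one Dunkl kernel `E_k^{rk1}(x,v)`. -/
noncomputable def Erk1 (k x v : ℝ) : ℝ :=
  (Real.Gamma (k + 1/2) / (Real.sqrt Real.pi * Real.Gamma k)) *
    ∫ z in (-1 : ℝ)..1, Real.exp (z * x * v) * (1 - z) ^ (k - 1) * (1 + z) ^ k

/-- The normalized modified Bessel function `𝒥_a(y)`, for `a > -1/2`. -/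
noncomputable def besselJ (a y : ℝ) : ℝ :=
  (Real.Gamma (a + 1) / (Real.sqrt Real.pi * Real.Gamma (a + 1/2))) *
    ∫ z in (-1 : ℝ)..1, Real.exp (y * z) * (1 - z ^ 2) ^ (a - 1/2)

/-- `W_k(λ,ν)`. -/
noncomputable def Wk (k l1 l2 l3 n1 n2 : ℝ) : ℝ :=
  ((l1 - n1) * (l1 - n2) * (n1 - l2) * (l2 - n2) * (n1 - l3) * (n2 - l3)) ^ (k - 1)

/-- `V(λ) = (λ1-λ2)(λ1-λ3)(λ2-λ3)`. -/
def Vlam (l1 l2 l3 : ℝ) : ℝ := (l1 - l2) * (l1 - l3) * (l2 - l3)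

/-- The `A₂` Dunkl kernel `E_k(X,λ)`, defined via the rank-one kernel formula. -/
noncomputable def EkA2 (k x1 x2 x3 l1 l2 l3 : ℝ) : ℝ :=
  (3 * Real.Gamma (3 * k) / (Vlam l1 l2 l3 ^ (2 * k) * Real.Gamma k ^ 2)) *
    ∫ n2 in l3..l2, ∫ n1 in l2..l1,
      ((n1 - l2) * (l1 - n2) * Erk1 k ((x1 - x2) / 2) (n1 - n2)
        + (l1 - n1) * (l2 - n2) * Erk1 k (-(x1 - x2) / 2) (n1 - n2))
      * ((n1 - l3) * (n2 - l3)) * Real.exp ((x1 + x2 - 2 * x3) * (n1 + n2) / 2)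
      * Wk k l1 l2 l3 n1 n2

lemma measure_eq_of_forall_pos_Ioi {μ ν : Measure ℝ} [IsFiniteMeasure μ] (hμ : μ (Set.Iic 0) = 0)
    (hν : ν (Set.Iic 0) = 0) (h : ∀ r, 0 < r → μ (Set.Ioi r) = ν (Set.Ioi r)) : μ = ν := by
  have Ioi_zero_eq : Set.Ioi (0 : ℝ) = ⋃ n : ℕ, Set.Ioi (1 / ((n : ℝ) + 1)) := by
    ext x
    simp only [Set.mem_Ioi, Set.mem_iUnion]
    exact ⟨exists_nat_one_div_lt, fun ⟨n, hn⟩ ↦ lt_trans (by positivity) hn⟩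
  have monotone_Ioi : Monotone fun n : ℕ ↦ Set.Ioi (1 / ((n : ℝ) + 1)) := fun _ _ hmn ↦
    Set.Ioi_subset_Ioi (one_div_le_one_div_of_le (by positivity) (by gcongr))
  have Ioi_zero : μ (Set.Ioi 0) = ν (Set.Ioi 0) := by
    simp only [Ioi_zero_eq, monotone_Ioi.measure_iUnion]
    exact iSup_congr fun n ↦ h _ (by positivity)
  have Ioi_eq_of_nonpos {ρ : Measure ℝ} (hρ : ρ (Set.Iic 0) = 0) {a : ℝ} (ha : a ≤ 0) :
      ρ (Set.Ioi a) = ρ (Set.Ioi 0) := by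
    rw [← Set.Ioc_union_Ioi_eq_Ioi ha, measure_union (Set.Ioc_disjoint_Ioi le_rfl)
      measurableSet_Ioi, measure_mono_null Set.Ioc_subset_Iic_self hρ, zero_add]
  have univ_eq {ρ : Measure ℝ} (hρ : ρ (Set.Iic 0) = 0) : ρ Set.univ = ρ (Set.Ioi 0) := by
    rw [← Set.Iic_union_Ioi (a := (0 : ℝ)), measure_union (Set.Iic_disjoint_Ioi le_rfl)
      measurableSet_Ioi, hρ, zero_add]
  refine ext_of_generate_finite _ (BorelSpace.measurable_eq.trans (borel_eq_generateFrom_Ioi ℝ))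
    isPiSystem_Ioi ?_ (by rw [univ_eq hμ, univ_eq hν, Ioi_zero])
  rintro _ ⟨a, rfl⟩
  rcases lt_or_ge 0 a with ha | ha
  · exact h a ha
  · rw [Ioi_eq_of_nonpos hμ ha, Ioi_eq_of_nonpos hν ha, Ioi_zero]

section Quartic

lemma cubic_eq_zero_of_four_roots {a b c d x₁ x₂ x₃ x₄ : ℝ} (h₁₂ : x₁ < x₂) (h₂₃ : x₂ < x₃)
    (h₃₄ : x₃ < x₄)
    (h : ∀ x ∈ ({x₁, x₂, x₃, x₄} : Finset ℝ), a * x ^ 3 + b * x ^ 2 + c * x + d = 0) (v : ℝ) :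
    a * v ^ 3 + b * v ^ 2 + c * v + d = 0 := by
  let p : Polynomial ℝ := (⟨a, b, c, d⟩ : Cubic ℝ).toPoly
  have eval_p (x : ℝ) : p.eval x = a * x ^ 3 + b * x ^ 2 + c * x + d := by
    simp [p, Cubic.toPoly]
  have card_roots : ({x₁, x₂, x₃, x₄} : Finset ℝ).card = 4 := by
    have := h₁₂.trans h₂₃
    have := h₂₃.trans h₃₄
    have := h₁₂.trans this
    grind
  have p_eq_zero : p = 0 :=
    p.eq_zero_of_natDegree_lt_card_of_eval_eq_zero' _ (fun x hx ↦ by rw [eval_p, h x hx])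
      (by rw [card_roots]; exact Nat.lt_succ_of_le Polynomial.natDegree_cubic_le)
  rw [← eval_p, p_eq_zero, Polynomial.eval_zero]

variable {d₁ d₂ d₃ d₄ r v₀ t₁ t₂ t₃ t₄ : ℝ}

lemma quartic_sub_linear_eq_prod (h₁₂ : t₁ < t₂) (h₂₃ : t₂ < t₃) (h₃₄ : t₃ < t₄)
    (h : ∀ t ∈ ({t₁, t₂, t₃, t₄} : Finset ℝ), (d₁ - t) * (d₂ - t) * (d₃ - t) * (d₄ - t) = r * t)
    (v : ℝ) :
    (d₁ - v) * (d₂ - v) * (d₃ - v) * (d₄ - v) - r * v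
      = (t₁ - v) * (t₂ - v) * (t₃ - v) * (t₄ - v) := by
  have difference_vanishes := cubic_eq_zero_of_four_roots h₁₂ h₂₃ h₃₄
    (a := (t₁ + t₂ + t₃ + t₄) - (d₁ + d₂ + d₃ + d₄))
    (b := (d₁ * d₂ + d₁ * d₃ + d₁ * d₄ + d₂ * d₃ + d₂ * d₄ + d₃ * d₄)
      - (t₁ * t₂ + t₁ * t₃ + t₁ * t₄ + t₂ * t₃ + t₂ * t₄ + t₃ * t₄))
    (c := (t₁ * t₂ * t₃ + t₁ * t₂ * t₄ + t₁ * t₃ * t₄ + t₂ * t₃ * t₄)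
      - (d₁ * d₂ * d₃ + d₁ * d₂ * d₄ + d₁ * d₃ * d₄ + d₂ * d₃ * d₄) - r)
    (d := d₁ * d₂ * d₃ * d₄ - t₁ * t₂ * t₃ * t₄) ?_ v
  · linear_combination difference_vanishes
  · intro x hx
    have prod_eq_zero : (t₁ - x) * (t₂ - x) * (t₃ - x) * (t₄ - x) = 0 := by
      simp only [Finset.mem_insert, Finset.mem_singleton] at hx
      rcases hx with rfl | rfl | rfl | rfl <;> ring
    linear_combination h x hx - prod_eq_zero

lemma exists_quartic_lt_linear (h₂ : 0 ≤ d₂) (h₃ : 0 ≤ d₃) (h₂v : d₂ < v₀) (h₃v : d₃ < v₀)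
    (hr : 0 < r) :
    ∃ m, 0 < m ∧ m < v₀ ∧ (d₁ - m) * (d₂ - m) * (d₃ - m) * (d₄ - m) < r * m := by
  rcases h₂.eq_or_lt with rfl | h₂
  · rcases h₃.eq_or_lt with rfl | h₃
    · have near_zero : ∀ᶠ m in nhdsWithin (0 : ℝ) (Set.Ioi 0), (d₁ - m) * m * (d₄ - m) < r := by
        have : ContinuousAt (fun m : ℝ ↦ (d₁ - m) * m * (d₄ - m)) 0 := by fun_prop
        exact nhdsWithin_le_nhds (this.eventually_lt_const (by simpa using hr))
      obtain ⟨m, hm, hm₀, hmv⟩ := (near_zero.and (Ioo_mem_nhdsGT h₂v)).exists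
      refine ⟨m, hm₀, hmv, ?_⟩
      linear_combination mul_lt_mul_of_pos_right hm hm₀
    · exact ⟨d₃, h₃, h₃v, by simpa using mul_pos hr h₃⟩
  · exact ⟨d₂, h₂, h₂v, by simpa using mul_pos hr h₂⟩

lemma exists_linear_lt_quartic (h₁ : 0 ≤ d₁) (h₄ : 0 ≤ d₄) (h₂₁ : d₂ ≤ d₁) (h₃₁ : d₃ ≤ d₁)
    (hr : 0 < r) :
    ∃ M, d₁ < M ∧ r * M < (d₁ - M) * (d₂ - M) * (d₃ - M) * (d₄ - M) := by
  refine ⟨d₁ + d₄ + (r + 1), by linarith, ?_⟩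
  set M := d₁ + d₄ + (r + 1) with hM
  have upper : M ≤ (M - d₁) * (M - d₄) := by
    linear_combination hM + mul_nonneg h₁ h₄ + mul_nonneg h₁ hr.le + mul_nonneg h₄ hr.le
      + sq_nonneg r + hr
  have lower : r < (M - d₂) * (M - d₃) :=
    calc r < (r + 1) * (r + 1) := by nlinarith
      _ ≤ (M - d₂) * (M - d₃) := by gcongr <;> linarith
  calc r * M < (M - d₂) * (M - d₃) * M := by gcongr
    _ ≤ (M - d₂) * (M - d₃) * ((M - d₁) * (M - d₄)) := by gcongr; linarith
    _ = _ := by ring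

lemma exists_quartic_sub_linear_eq_prod (h₂ : 0 ≤ d₂) (h₃ : 0 ≤ d₃) (h₂v : d₂ < v₀)
    (h₃v : d₃ < v₀) (hv₁ : v₀ < d₁) (hv₄ : v₀ < d₄) (hr : 0 < r)
    (hv : r * v₀ < (d₁ - v₀) * (d₂ - v₀) * (d₃ - v₀) * (d₄ - v₀)) :
    ∃ t₁ t₂ t₃ t₄, 0 ≤ t₁ ∧ t₁ < t₂ ∧ t₂ < t₃ ∧ t₃ < t₄ ∧
      ∀ v, (d₁ - v) * (d₂ - v) * (d₃ - v) * (d₄ - v) - r * v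
        = (t₁ - v) * (t₂ - v) * (t₃ - v) * (t₄ - v) := by
  have hd₁ : 0 < d₁ := by linarith
  have hd₄ : 0 < d₄ := by linarith
  let f : ℝ → ℝ := fun v ↦ (d₁ - v) * (d₂ - v) * (d₃ - v) * (d₄ - v) - r * v
  have continuousOn_f (s : Set ℝ) : ContinuousOn f s := by fun_prop
  obtain ⟨m, hm₀, hmv, hm⟩ := exists_quartic_lt_linear (d₁ := d₁) (d₄ := d₄) h₂ h₃ h₂v h₃v hr
  obtain ⟨M, hM₁, hM⟩ := exists_linear_lt_quartic hd₁.le hd₄.le (h₂v.trans hv₁).le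
    (h₃v.trans hv₁).le hr
  have f_zero : 0 ≤ f 0 := by simp only [f, sub_zero, mul_zero]; positivity
  have f_m : f m < 0 := sub_neg.2 hm
  have f_v₀ : 0 < f v₀ := sub_pos.2 hv
  have f_d₁ : f d₁ < 0 := by simp only [f, sub_self, zero_mul]; linarith [mul_pos hr hd₁]
  have f_M : 0 < f M := sub_pos.2 hM
  obtain ⟨t₁, ⟨ht₁, ht₁m⟩, root₁⟩ :=
    intermediate_value_Ico' hm₀.le (continuousOn_f _) ⟨f_m, f_zero⟩
  obtain ⟨t₂, ⟨hmt₂, ht₂v⟩, root₂⟩ := intermediate_value_Ioo hmv.le (continuousOn_f _) ⟨f_m, f_v₀⟩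
  obtain ⟨t₃, ⟨hvt₃, ht₃d⟩, root₃⟩ :=
    intermediate_value_Ioo' hv₁.le (continuousOn_f _) ⟨f_d₁, f_v₀⟩
  obtain ⟨t₄, ⟨hdt₄, -⟩, root₄⟩ := intermediate_value_Ioo hM₁.le (continuousOn_f _) ⟨f_d₁, f_M⟩
  refine ⟨t₁, t₂, t₃, t₄, ht₁, by linarith, by linarith, by linarith,
    quartic_sub_linear_eq_prod (by linarith) (by linarith) (by linarith) fun t ht ↦ ?_⟩
  simp only [Finset.mem_insert, Finset.mem_singleton] at ht
  rcases ht with rfl | rfl | rfl | rfl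
  exacts [sub_eq_zero.1 root₁, sub_eq_zero.1 root₂, sub_eq_zero.1 root₃, sub_eq_zero.1 root₄]

lemma coeffs_of_quartic_sub_linear_eq_prod
    (h : ∀ v, (d₁ - v) * (d₂ - v) * (d₃ - v) * (d₄ - v) - r * v
      = (t₁ - v) * (t₂ - v) * (t₃ - v) * (t₄ - v)) :
    d₁ + d₂ + d₃ + d₄ = t₁ + t₂ + t₃ + t₄ ∧
    d₁ * d₂ + d₁ * d₃ + d₁ * d₄ + d₂ * d₃ + d₂ * d₄ + d₃ * d₄
      = t₁ * t₂ + t₁ * t₃ + t₁ * t₄ + t₂ * t₃ + t₂ * t₄ + t₃ * t₄ ∧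
    d₁ * d₂ * d₃ + d₁ * d₂ * d₄ + d₁ * d₃ * d₄ + d₂ * d₃ * d₄ + r
      = t₁ * t₂ * t₃ + t₁ * t₂ * t₄ + t₁ * t₃ * t₄ + t₂ * t₃ * t₄ := by
  have e₁ : d₁ + d₂ + d₃ + d₄ = t₁ + t₂ + t₃ + t₄ := by
    linear_combination (-h 2 + 3 * h 1 - 3 * h 0 + h (-1)) / 6
  have e₂ : d₁ * d₂ + d₁ * d₃ + d₁ * d₄ + d₂ * d₃ + d₂ * d₄ + d₃ * d₄
      = t₁ * t₂ + t₁ * t₃ + t₁ * t₄ + t₂ * t₃ + t₂ * t₄ + t₃ * t₄ := by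
    linear_combination (h 1 + h (-1) - 2 * h 0) / 2
  exact ⟨e₁, e₂, by linear_combination h 0 - h 1 - e₁ + e₂⟩

lemma mem_Icc_or_mem_Icc_of_prod_nonpos {d : ℝ} (h₁₂ : t₁ ≤ t₂) (h₂₃ : t₂ ≤ t₃) (h₃₄ : t₃ ≤ t₄)
    (h : (t₁ - d) * (t₂ - d) * (t₃ - d) * (t₄ - d) ≤ 0) :
    d ∈ Set.Icc t₁ t₂ ∨ d ∈ Set.Icc t₃ t₄ := by
  contrapose! h
  simp only [Set.mem_Icc, not_and_or, not_le] at h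
  obtain ⟨below₁ | above₂, below₃ | above₄⟩ := h
  · exact mul_pos (mul_pos (mul_pos (by linarith) (by linarith)) (by linarith)) (by linarith)
  · linarith
  · exact mul_pos (mul_pos (mul_pos_of_neg_of_neg (by linarith) (by linarith)) (by linarith))
      (by linarith)
  · rw [mul_assoc]
    exact mul_pos (mul_pos_of_neg_of_neg (by linarith) (by linarith))
      (mul_pos_of_neg_of_neg (by linarith) (by linarith))

lemma not_all_mem_Icc_of_power_sums {a b : ℝ} (e₁ : d₁ + d₂ + d₃ + d₄ = t₁ + t₂ + t₃ + t₄)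
    (e₂ : d₁ * d₂ + d₁ * d₃ + d₁ * d₄ + d₂ * d₃ + d₂ * d₄ + d₃ * d₄
      = t₁ * t₂ + t₁ * t₃ + t₁ * t₄ + t₂ * t₃ + t₂ * t₄ + t₃ * t₄)
    (neg : (t₁ - a) * (b - t₁) + (t₂ - a) * (b - t₂) + (t₃ - a) * (b - t₃)
      + (t₄ - a) * (b - t₄) < 0)
    (m₁ : d₁ ∈ Set.Icc a b) (m₂ : d₂ ∈ Set.Icc a b) (m₃ : d₃ ∈ Set.Icc a b)
    (m₄ : d₄ ∈ Set.Icc a b) : False := by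
  have nonneg {d : ℝ} (m : d ∈ Set.Icc a b) : 0 ≤ (d - a) * (b - d) :=
    mul_nonneg (sub_nonneg.2 m.1) (sub_nonneg.2 m.2)
  have sums_eq : (d₁ - a) * (b - d₁) + (d₂ - a) * (b - d₂) + (d₃ - a) * (b - d₃)
      + (d₄ - a) * (b - d₄) = (t₁ - a) * (b - t₁) + (t₂ - a) * (b - t₂) + (t₃ - a) * (b - t₃)
      + (t₄ - a) * (b - t₄) := by
    linear_combination 2 * e₂ + (a + b - (d₁ + d₂ + d₃ + d₄) - (t₁ + t₂ + t₃ + t₄)) * e₁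
  linarith [nonneg m₁, nonneg m₂, nonneg m₃, nonneg m₄]

-- Each `dᵢ` lies in `[t₁, t₂]` or in `[t₃, t₄]`. The sign of the quartic at `t₃` shows that an even
-- number of them lie in `[t₃, t₄]`, and the first two power sums rule out that none or all do.
lemma quartic_roots_location (h₂ : 0 ≤ d₂) (h₃ : 0 ≤ d₃) (h₂₁ : d₂ < d₁) (h₂₄ : d₂ < d₄)
    (h₃₁ : d₃ < d₁) (h₃₄ : d₃ < d₄) (hr : 0 < r) (ht₁ : 0 ≤ t₁) (ht₁₂ : t₁ < t₂) (ht₂₃ : t₂ < t₃)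
    (ht₃₄ : t₃ < t₄)
    (h : ∀ v, (d₁ - v) * (d₂ - v) * (d₃ - v) * (d₄ - v) - r * v
      = (t₁ - v) * (t₂ - v) * (t₃ - v) * (t₄ - v)) :
    d₁ ∈ Set.Icc t₃ t₄ ∧ d₂ ∈ Set.Icc t₁ t₂ ∧ d₃ ∈ Set.Icc t₁ t₂ ∧ d₄ ∈ Set.Icc t₃ t₄ := by
  have location {d : ℝ} (hd : 0 ≤ d)
      (root : (d₁ - d) * (d₂ - d) * (d₃ - d) * (d₄ - d) = 0) :
      d ∈ Set.Icc t₁ t₂ ∨ d ∈ Set.Icc t₃ t₄ :=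
    mem_Icc_or_mem_Icc_of_prod_nonpos ht₁₂.le ht₂₃.le ht₃₄.le
      (by linear_combination -h d + root + mul_nonneg hr.le hd)
  have value_t₃ : 0 < (d₁ - t₃) * ((d₂ - t₃) * (d₃ - t₃)) * (d₄ - t₃) := by
    linear_combination -h t₃ + mul_pos hr (ht₁.trans_lt (ht₁₂.trans ht₂₃))
  obtain ⟨e₁, e₂, -⟩ := coeffs_of_quartic_sub_linear_eq_prod h
  rcases location h₂ (by ring) with low₂ | up₂ <;> rcases location h₃ (by ring) with low₃ | up₃
  · have sign₂₃ : 0 ≤ (d₂ - t₃) * (d₃ - t₃) :=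
      mul_nonneg_of_nonpos_of_nonpos (by linarith [low₂.2]) (by linarith [low₃.2])
    rcases location (h₂.trans h₂₁.le) (by ring) with low₁ | up₁ <;>
      rcases location (h₂.trans h₂₄.le) (by ring) with low₄ | up₄
    · exact (not_all_mem_Icc_of_power_sums e₁ e₂ (by nlinarith) low₁ low₂ low₃ low₄).elim
    · exact (value_t₃.not_ge (mul_nonpos_of_nonpos_of_nonneg
        (mul_nonpos_of_nonpos_of_nonneg (by linarith [low₁.2]) sign₂₃) (by linarith [up₄.1]))).elim
    · exact (value_t₃.not_ge (mul_nonpos_of_nonneg_of_nonpos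
        (mul_nonneg (by linarith [up₁.1]) sign₂₃) (by linarith [low₄.2]))).elim
    · exact ⟨up₁, low₂, low₃, up₄⟩
  · exact (value_t₃.not_ge (mul_nonpos_of_nonpos_of_nonneg (mul_nonpos_of_nonneg_of_nonpos
      (by linarith [up₃.1]) (mul_nonpos_of_nonpos_of_nonneg (by linarith [low₂.2])
        (by linarith [up₃.1]))) (by linarith [up₃.1]))).elim
  · exact (value_t₃.not_ge (mul_nonpos_of_nonpos_of_nonneg (mul_nonpos_of_nonneg_of_nonpos
      (by linarith [up₂.1]) (mul_nonpos_of_nonneg_of_nonpos (by linarith [up₂.1])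
        (by linarith [low₃.2]))) (by linarith [up₂.1]))).elim
  · have up₁ := (location (h₂.trans h₂₁.le) (by ring)).resolve_left
      fun low ↦ by linarith [low.2, up₂.1]
    have up₄ := (location (h₂.trans h₂₄.le) (by ring)).resolve_left
      fun low ↦ by linarith [low.2, up₂.1]
    exact (not_all_mem_Icc_of_power_sums e₁ e₂ (by nlinarith) up₁ up₂ up₃ up₄).elim

end Quartic

/-- Parameters of a one-dimensional fibre of Gelfand–Tsetlin patterns: for a pattern with top row
`λ`, middle row `ν₁, ν₂` and bottom entry `ζ`, and with `s = ν₁ + ν₂`, they are the positions of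
`λ₁, λ₂, λ₃, ζ` relative to `s / 2`, with signs; the coordinate on the fibre is `(ν₁ - ν₂) / 2`. -/
structure Quadruple where
  (e₁ e₂ e₃ e₄ : ℝ)

namespace Quadruple

/-- The reflection of `ℝ⁴` in the vector `(1, 1, 1, 1)`, followed by reversal and a sign. -/
noncomputable def reflect (e : Quadruple) : Quadruple :=
  let h := (e.e₁ + e.e₂ + e.e₃ + e.e₄) / 2
  ⟨h - e.e₄, h - e.e₃, h - e.e₂, h - e.e₁⟩

/-- The first of the invariants of the Weyl group of type `D₄`, which are the elementary symmetric
functions of degree one, two and three in the squares, and the product. -/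
def sqEsymm₁ (e : Quadruple) : ℝ := e.e₁ ^ 2 + e.e₂ ^ 2 + e.e₃ ^ 2 + e.e₄ ^ 2

/-- The second elementary symmetric function of the squares. -/
def sqEsymm₂ (e : Quadruple) : ℝ :=
  e.e₁ ^ 2 * e.e₂ ^ 2 + e.e₁ ^ 2 * e.e₃ ^ 2 + e.e₁ ^ 2 * e.e₄ ^ 2 + e.e₂ ^ 2 * e.e₃ ^ 2
    + e.e₂ ^ 2 * e.e₄ ^ 2 + e.e₃ ^ 2 * e.e₄ ^ 2

/-- The third elementary symmetric function of the squares. -/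
def sqEsymm₃ (e : Quadruple) : ℝ :=
  e.e₁ ^ 2 * e.e₂ ^ 2 * e.e₃ ^ 2 + e.e₁ ^ 2 * e.e₂ ^ 2 * e.e₄ ^ 2 + e.e₁ ^ 2 * e.e₃ ^ 2 * e.e₄ ^ 2
    + e.e₂ ^ 2 * e.e₃ ^ 2 * e.e₄ ^ 2

/-- The Pfaffian invariant of the Weyl group of type `D₄`. -/
def prod (e : Quadruple) : ℝ := e.e₁ * e.e₂ * e.e₃ * e.e₄

/-- The polynomial in `v` whose roots are the squares of the parameters. -/
def quartic (e : Quadruple) (v : ℝ) : ℝ :=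
  (e.e₁ ^ 2 - v) * (e.e₂ ^ 2 - v) * (e.e₃ ^ 2 - v) * (e.e₄ ^ 2 - v)

/-- The range of the coordinate `(ν₁ - ν₂) / 2` on the fibre. -/
def interval (e : Quadruple) : Set ℝ := Set.Ioo (max |e.e₂| |e.e₃|) (min (-e.e₁) e.e₄)

/-- The quantity which enters the integrand with the exponent `k - 1`. -/
noncomputable def ratio (e : Quadruple) (τ : ℝ) : ℝ := e.quartic (τ ^ 2) / τ ^ 2

/-- The factor of the integrand which does not depend on `k`. -/
noncomputable def density (e : Quadruple) (τ : ℝ) : ℝ :=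
  ((e.e₂ - e.e₁ + e.e₃) * τ ^ 2 - e.e₁ * e.e₂ * e.e₃) * (e.e₄ ^ 2 - τ ^ 2) / τ ^ 2

/-- The open Weyl chamber of type `D₄`. -/
def IsDominant (t : Quadruple) : Prop := |t.e₁| < t.e₂ ∧ t.e₂ < t.e₃ ∧ t.e₃ < t.e₄

/-- `t.quartic v = e.quartic v - r * v`, with equality of the square roots `prod` of the constant
coefficients. -/
structure IsDeformation (r : ℝ) (e t : Quadruple) : Prop where
  sqEsymm₁_eq : e.sqEsymm₁ = t.sqEsymm₁
  sqEsymm₂_eq : e.sqEsymm₂ = t.sqEsymm₂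
  sqEsymm₃_add_eq : e.sqEsymm₃ + r = t.sqEsymm₃
  prod_eq : e.prod = t.prod

variable {e t : Quadruple} {r τ : ℝ}

section Reflection

lemma reflect_reflect (e : Quadruple) : e.reflect.reflect = e := by
  obtain ⟨a, b, c, d⟩ := e
  simp only [reflect, mk.injEq]
  refine ⟨?_, ?_, ?_, ?_⟩ <;> ring

lemma sqEsymm₁_reflect (e : Quadruple) : e.reflect.sqEsymm₁ = e.sqEsymm₁ := by
  simp only [sqEsymm₁, reflect]
  ring

lemma sqEsymm₂_reflect (e : Quadruple) :
    e.reflect.sqEsymm₂ = 3 / 8 * e.sqEsymm₁ ^ 2 - 1 / 2 * e.sqEsymm₂ + 3 * e.prod := by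
  simp only [sqEsymm₁, sqEsymm₂, prod, reflect]
  ring

lemma sqEsymm₃_reflect (e : Quadruple) :
    e.reflect.sqEsymm₃ = 1 / 16 * e.sqEsymm₁ ^ 3 - 1 / 4 * e.sqEsymm₁ * e.sqEsymm₂
      + 1 / 2 * e.sqEsymm₁ * e.prod + e.sqEsymm₃ := by
  simp only [sqEsymm₁, sqEsymm₂, sqEsymm₃, prod, reflect]
  ring

lemma prod_reflect (e : Quadruple) :
    e.reflect.prod = -1 / 16 * e.sqEsymm₁ ^ 2 + 1 / 4 * e.sqEsymm₂ + 1 / 2 * e.prod := by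
  simp only [sqEsymm₁, sqEsymm₂, prod, reflect]
  ring

-- A deformation changes only `sqEsymm₃`, which enters the invariants of `e.reflect` only as a
-- summand of `e.reflect.sqEsymm₃`.
lemma IsDeformation.reflect (h : IsDeformation r e t) :
    IsDeformation r e.reflect t.reflect where
  sqEsymm₁_eq := by rw [sqEsymm₁_reflect, sqEsymm₁_reflect, h.sqEsymm₁_eq]
  sqEsymm₂_eq := by
    rw [sqEsymm₂_reflect, sqEsymm₂_reflect, h.sqEsymm₁_eq, h.sqEsymm₂_eq, h.prod_eq]
  sqEsymm₃_add_eq := by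
    rw [sqEsymm₃_reflect, sqEsymm₃_reflect, h.sqEsymm₁_eq, h.sqEsymm₂_eq, h.prod_eq, add_assoc,
      h.sqEsymm₃_add_eq]
  prod_eq := by rw [prod_reflect, prod_reflect, h.sqEsymm₁_eq, h.sqEsymm₂_eq, h.prod_eq]

lemma IsDominant.reflect (ht : t.IsDominant) : t.reflect.IsDominant := by
  obtain ⟨h₁₂, h₂₃, h₃₄⟩ := ht
  rw [abs_lt] at h₁₂
  refine ⟨abs_lt.2 ⟨?_, ?_⟩, ?_, ?_⟩ <;> simp only [Quadruple.reflect] <;> linarith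

lemma nonempty_interval_iff :
    e.interval.Nonempty ↔ (|e.e₂| < -e.e₁ ∧ |e.e₃| < -e.e₁) ∧ |e.e₂| < e.e₄ ∧ |e.e₃| < e.e₄ := by
  rw [interval, Set.nonempty_Ioo, lt_min_iff, max_lt_iff, max_lt_iff]

lemma nonempty_interval_reflect (he : e.interval.Nonempty) : e.reflect.interval.Nonempty := by
  simp only [nonempty_interval_iff, abs_lt, reflect] at he ⊢
  obtain ⟨⟨⟨_, _⟩, _, _⟩, ⟨_, _⟩, _, _⟩ := he
  refine ⟨⟨⟨?_, ?_⟩, ?_, ?_⟩, ⟨?_, ?_⟩, ?_, ?_⟩ <;> linarith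

end Reflection

section Interval

lemma mem_interval_iff :
    τ ∈ e.interval ↔ (|e.e₂| < τ ∧ |e.e₃| < τ) ∧ τ < -e.e₁ ∧ τ < e.e₄ := by
  rw [interval, Set.mem_Ioo, max_lt_iff, lt_min_iff]

lemma pos_of_mem_interval (hτ : τ ∈ e.interval) : 0 < τ :=
  (abs_nonneg _).trans_lt (mem_interval_iff.1 hτ).1.1

lemma mem_interval_iff_sq (he : e.interval.Nonempty) (hτ : 0 < τ) :
    τ ∈ e.interval ↔
      (e.e₂ ^ 2 < τ ^ 2 ∧ e.e₃ ^ 2 < τ ^ 2) ∧ τ ^ 2 < e.e₁ ^ 2 ∧ τ ^ 2 < e.e₄ ^ 2 := by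
  obtain ⟨⟨h₁, -⟩, h₄, -⟩ := nonempty_interval_iff.1 he
  have he₁ : e.e₁ < 0 := by linarith [abs_nonneg e.e₂]
  have he₄ : 0 < e.e₄ := (abs_nonneg _).trans_lt h₄
  simp only [mem_interval_iff, sq_lt_sq, abs_of_pos hτ, abs_of_neg he₁, abs_of_pos he₄]

lemma quartic_pos (hτ : τ ∈ e.interval) : 0 < e.quartic (τ ^ 2) := by
  obtain ⟨⟨h₂, h₃⟩, h₁, h₄⟩ := (mem_interval_iff_sq ⟨τ, hτ⟩ (pos_of_mem_interval hτ)).1 hτ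
  have := mul_pos (mul_pos (sub_pos.2 h₁) (mul_pos (sub_pos.2 h₂) (sub_pos.2 h₃))) (sub_pos.2 h₄)
  rw [quartic]
  linear_combination this

lemma ratio_pos (hτ : τ ∈ e.interval) : 0 < e.ratio τ :=
  div_pos (quartic_pos hτ) (pow_pos (pos_of_mem_interval hτ) 2)

lemma lt_ratio_iff (hτ : 0 < τ) : r < e.ratio τ ↔ r * τ ^ 2 < e.quartic (τ ^ 2) :=
  lt_div_iff₀ (pow_pos hτ 2)

lemma density_nonneg (hτ : τ ∈ e.interval) : 0 ≤ e.density τ := by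
  obtain ⟨-, -, h₄⟩ := (mem_interval_iff_sq ⟨τ, hτ⟩ (pos_of_mem_interval hτ)).1 hτ
  obtain ⟨⟨h₂, h₃⟩, h₁, -⟩ := mem_interval_iff.1 hτ
  have hτ₀ := pos_of_mem_interval hτ
  rw [abs_lt] at h₂ h₃
  have numerator_eq : (e.e₂ - e.e₁ + e.e₃) * τ ^ 2 - e.e₁ * e.e₂ * e.e₃
      = ((τ + e.e₂) * (τ + e.e₃) * (τ - e.e₁) + (τ - e.e₂) * (τ - e.e₃) * (-e.e₁ - τ)) / 2 := by
    ring
  have sum_nonneg : 0 ≤ (τ + e.e₂) * (τ + e.e₃) * (τ - e.e₁) :=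
    mul_nonneg (mul_nonneg (by linarith) (by linarith)) (by linarith)
  have diff_nonneg : 0 ≤ (τ - e.e₂) * (τ - e.e₃) * (-e.e₁ - τ) :=
    mul_nonneg (mul_nonneg (by linarith) (by linarith)) (by linarith)
  rw [density, numerator_eq]
  exact div_nonneg (mul_nonneg (by linarith) (sub_nonneg.2 h₄.le)) (sq_nonneg τ)

lemma density_le (hτ : τ ∈ e.interval) :
    e.density τ ≤ (|e.e₂ - e.e₁ + e.e₃| + |e.e₁|) * e.e₄ ^ 2 := by
  obtain ⟨-, -, h₄⟩ := (mem_interval_iff_sq ⟨τ, hτ⟩ (pos_of_mem_interval hτ)).1 hτ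
  obtain ⟨⟨h₂, h₃⟩, -⟩ := mem_interval_iff.1 hτ
  have hτ₀ := pos_of_mem_interval hτ
  have product_le : -(e.e₁ * e.e₂ * e.e₃) ≤ |e.e₁| * τ ^ 2 :=
    calc -(e.e₁ * e.e₂ * e.e₃) ≤ |e.e₁ * e.e₂ * e.e₃| := neg_le_abs _
      _ = |e.e₁| * (|e.e₂| * |e.e₃|) := by rw [abs_mul, abs_mul, mul_assoc]
      _ ≤ |e.e₁| * τ ^ 2 := by rw [sq]; gcongr
  rw [density, div_le_iff₀ (by positivity)]
  calc ((e.e₂ - e.e₁ + e.e₃) * τ ^ 2 - e.e₁ * e.e₂ * e.e₃) * (e.e₄ ^ 2 - τ ^ 2)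
      ≤ (|e.e₂ - e.e₁ + e.e₃| * τ ^ 2 + |e.e₁| * τ ^ 2) * (e.e₄ ^ 2 - τ ^ 2) := by
        rw [sub_eq_add_neg]
        gcongr
        exact le_abs_self _
    _ ≤ (|e.e₂ - e.e₁ + e.e₃| * τ ^ 2 + |e.e₁| * τ ^ 2) * e.e₄ ^ 2 := by
        gcongr
        linarith [sq_nonneg τ]
    _ = _ := by ring

end Interval

section Superlevel

lemma IsDominant.sq_lt_sq (ht : t.IsDominant) :
    0 < t.e₂ ∧ t.e₁ ^ 2 < t.e₂ ^ 2 ∧ t.e₂ ^ 2 < t.e₃ ^ 2 ∧ t.e₃ ^ 2 < t.e₄ ^ 2 := by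
  obtain ⟨h₁₂, h₂₃, h₃₄⟩ := ht
  have h₂ : 0 < t.e₂ := (abs_nonneg _).trans_lt h₁₂
  have h₃ : 0 < t.e₃ := h₂.trans h₂₃
  exact ⟨h₂, _root_.sq_lt_sq.2 (by rwa [abs_of_pos h₂]), by gcongr, by gcongr⟩

lemma IsDeformation.quartic_sub_eq (h : IsDeformation r e t) (v : ℝ) :
    e.quartic v - r * v = t.quartic v := by
  obtain ⟨h₁, h₂, h₃, h₄⟩ := h
  simp only [sqEsymm₁, sqEsymm₂, sqEsymm₃, prod, quartic] at *
  linear_combination -v ^ 3 * h₁ + v ^ 2 * h₂ - v * h₃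
    + (e.e₁ * e.e₂ * e.e₃ * e.e₄ + t.e₁ * t.e₂ * t.e₃ * t.e₄) * h₄

lemma isDeformation_of_quartic_sub_eq (h : ∀ v, e.quartic v - r * v = t.quartic v)
    (hprod : e.prod = t.prod) : IsDeformation r e t :=
  have ⟨h₁, h₂, h₃⟩ := coeffs_of_quartic_sub_linear_eq_prod h
  ⟨h₁, h₂, h₃, hprod⟩

-- The sign of `t.e₁` is the one which makes the products of the parameters agree.
lemma exists_isDeformation (hτ : τ ∈ e.interval) (hr : 0 < r) (hrτ : r < e.ratio τ) :
    ∃ t : Quadruple, t.IsDominant ∧ IsDeformation r e t := by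
  have hτ₀ := pos_of_mem_interval hτ
  obtain ⟨⟨h₂, h₃⟩, h₁, h₄⟩ := (mem_interval_iff_sq ⟨τ, hτ⟩ hτ₀).1 hτ
  obtain ⟨T₁, T₂, T₃, T₄, hT₁, hT₁₂, hT₂₃, hT₃₄, hT⟩ := exists_quartic_sub_linear_eq_prod
    (sq_nonneg e.e₂) (sq_nonneg e.e₃) h₂ h₃ h₁ h₄ hr ((lt_ratio_iff hτ₀).1 hrτ)
  have hT₂ : 0 ≤ T₂ := hT₁.trans hT₁₂.le
  have hT₃ : 0 ≤ T₃ := hT₂.trans hT₂₃.le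
  have hT₄ : 0 ≤ T₄ := hT₃.trans hT₃₄.le
  have prod_sq : e.prod ^ 2 = (√T₁ * √T₂ * √T₃ * √T₄) ^ 2 := by
    simp only [mul_pow, sq_sqrt, hT₁, hT₂, hT₃, hT₄, prod]
    linear_combination hT 0
  obtain ⟨t₁, ht₁, ht₁_abs, hprod⟩ :
      ∃ t₁, t₁ ^ 2 = T₁ ∧ |t₁| = √T₁ ∧ e.prod = t₁ * √T₂ * √T₃ * √T₄ := by
    rcases sq_eq_sq_iff_eq_or_eq_neg.1 prod_sq with hprod | hprod
    · exact ⟨√T₁, sq_sqrt hT₁, abs_of_nonneg (sqrt_nonneg _), hprod⟩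
    · exact ⟨-√T₁, by rw [neg_sq, sq_sqrt hT₁], by rw [abs_neg, abs_of_nonneg (sqrt_nonneg _)],
        by rw [hprod]; ring⟩
  refine ⟨⟨t₁, √T₂, √T₃, √T₄⟩, ⟨?_, sqrt_lt_sqrt hT₂ hT₂₃, sqrt_lt_sqrt hT₃ hT₃₄⟩,
    isDeformation_of_quartic_sub_eq (fun v ↦ ?_) hprod⟩
  · rw [ht₁_abs]
    exact sqrt_lt_sqrt hT₁ hT₁₂
  · simpa only [quartic, sq_sqrt, hT₂, hT₃, hT₄, ht₁] using hT v

lemma IsDominant.quartic_pos_iff (ht : t.IsDominant) (hτ : 0 < τ) (h₁ : t.e₁ ^ 2 < τ ^ 2)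
    (h₄ : τ ^ 2 < t.e₄ ^ 2) : 0 < t.quartic (τ ^ 2) ↔ τ ∈ Set.Ioo t.e₂ t.e₃ := by
  obtain ⟨ht₂, -, ht₂₃, -⟩ := ht.sq_lt_sq
  have outer_neg : (t.e₁ ^ 2 - τ ^ 2) * (t.e₄ ^ 2 - τ ^ 2) < 0 :=
    mul_neg_of_neg_of_pos (sub_neg.2 h₁) (sub_pos.2 h₄)
  have factorization : t.quartic (τ ^ 2) = (t.e₁ ^ 2 - τ ^ 2) * (t.e₄ ^ 2 - τ ^ 2)
      * ((t.e₂ ^ 2 - τ ^ 2) * (t.e₃ ^ 2 - τ ^ 2)) := by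
    rw [quartic]; ring
  rw [factorization, ← neg_mul_neg, mul_pos_iff_of_pos_left (neg_pos.2 outer_neg), neg_pos,
    mul_neg_iff, Set.mem_Ioo, ← pow_lt_pow_iff_left₀ ht₂.le hτ.le two_ne_zero,
    ← pow_lt_pow_iff_left₀ hτ.le (ht₂.trans ht.2.1).le two_ne_zero]
  grind

lemma IsDeformation.superlevel_eq (h : IsDeformation r e t) (hr : 0 < r)
    (he : e.interval.Nonempty) (ht : t.IsDominant) :
    {τ ∈ e.interval | r < e.ratio τ} = Set.Ioo t.e₂ t.e₃ := by
  obtain ⟨ht₂, ht₁₂, ht₂₃, ht₃₄⟩ := ht.sq_lt_sq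
  obtain ⟨σ, hσ⟩ := he
  obtain ⟨⟨h₂, h₃⟩, h₁, h₄⟩ := (mem_interval_iff_sq ⟨σ, hσ⟩ (pos_of_mem_interval hσ)).1 hσ
  obtain ⟨m₁, m₂, m₃, m₄⟩ := quartic_roots_location (sq_nonneg e.e₂) (sq_nonneg e.e₃) (h₂.trans h₁)
    (h₂.trans h₄) (h₃.trans h₁) (h₃.trans h₄) hr (sq_nonneg t.e₁) ht₁₂ ht₂₃ ht₃₄ h.quartic_sub_eq
  have lt_ratio_iff_mem {τ : ℝ} (hτ : τ ∈ e.interval) : r < e.ratio τ ↔ τ ∈ Set.Ioo t.e₂ t.e₃ := by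
    have hτ₀ := pos_of_mem_interval hτ
    obtain ⟨⟨k₂, -⟩, k₁, -⟩ := (mem_interval_iff_sq ⟨σ, hσ⟩ hτ₀).1 hτ
    rw [lt_ratio_iff hτ₀, ← sub_pos, h.quartic_sub_eq,
      ht.quartic_pos_iff hτ₀ (m₂.1.trans_lt k₂) (k₁.trans_le m₁.2)]
  ext τ
  refine ⟨fun hτ ↦ (lt_ratio_iff_mem hτ.1).1 hτ.2, fun hτ ↦ ?_⟩
  have hτ₀ : 0 < τ := ht₂.trans hτ.1
  have lower : t.e₂ ^ 2 < τ ^ 2 := by gcongr; exact hτ.1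
  have upper : τ ^ 2 < t.e₃ ^ 2 := by gcongr; exact hτ.2
  have mem : τ ∈ e.interval := (mem_interval_iff_sq ⟨σ, hσ⟩ hτ₀).2
    ⟨⟨m₂.2.trans_lt lower, m₃.2.trans_lt lower⟩, upper.trans_le m₁.1, upper.trans_le m₄.1⟩
  exact ⟨mem, (lt_ratio_iff_mem mem).2 hτ⟩

end Superlevel

section FibreMeasure

/-- The integral of the density of `e` over the interval `(t.e₂, t.e₃)`, when `e.prod = t.prod`. -/
noncomputable def superlevelMass (e t : Quadruple) : ℝ :=
  (t.e₃ - t.e₂) * ((e.e₂ - e.e₁ + e.e₃) * e.e₄ ^ 2 + e.e₁ * e.e₂ * e.e₃ - e.e₄ * (t.e₁ * t.e₄)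
    - (e.e₂ - e.e₁ + e.e₃) * (t.e₂ ^ 2 + t.e₂ * t.e₃ + t.e₃ ^ 2) / 3)

lemma superlevelMass_reflect (h : e.sqEsymm₁ = t.sqEsymm₁) :
    superlevelMass e.reflect t.reflect = superlevelMass e t := by
  simp only [superlevelMass, reflect, sqEsymm₁] at *
  linear_combination (t.e₃ - t.e₂) * (e.e₁ - e.e₂ - e.e₃ + e.e₄) / 4 * h

lemma hasDerivAt_density_primitive (e : Quadruple) (hτ : τ ≠ 0) :
    HasDerivAt (fun x ↦ ((e.e₂ - e.e₁ + e.e₃) * e.e₄ ^ 2 + e.e₁ * e.e₂ * e.e₃) * x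
      - (e.e₂ - e.e₁ + e.e₃) / 3 * x ^ 3 + e.prod * e.e₄ * x⁻¹) (e.density τ) τ := by
  refine ((((hasDerivAt_id τ).const_mul _).sub ((hasDerivAt_pow 3 τ).const_mul _)).add
    ((hasDerivAt_inv hτ).const_mul _)).congr_deriv ?_
  simp only [density, prod]
  field_simp
  ring

lemma continuousOn_density (e : Quadruple) : ContinuousOn e.density (Set.Ioi 0) := by
  unfold density
  exact ContinuousOn.div (by fun_prop) (by fun_prop) fun τ hτ ↦ (pow_pos hτ 2).ne'

lemma integral_density (h : e.prod = t.prod) (ht : t.IsDominant) :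
    ∫ τ in t.e₂..t.e₃, e.density τ = superlevelMass e t := by
  obtain ⟨ht₂, -⟩ := ht.sq_lt_sq
  have ht₃ : 0 < t.e₃ := ht₂.trans ht.2.1
  have uIcc_subset : Set.uIcc t.e₂ t.e₃ ⊆ Set.Ioi 0 := by
    rw [Set.uIcc_of_le ht.2.1.le]
    exact fun τ hτ ↦ ht₂.trans_le hτ.1
  rw [intervalIntegral.integral_eq_sub_of_hasDerivAt
    (fun τ hτ ↦ e.hasDerivAt_density_primitive (uIcc_subset hτ).ne')
    (e.continuousOn_density.mono uIcc_subset).intervalIntegrable]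
  rw [h, superlevelMass, prod]
  field_simp
  ring

lemma lintegral_density (h : e.prod = t.prod) (ht : t.IsDominant)
    (hsub : Set.Ioo t.e₂ t.e₃ ⊆ e.interval) :
    ∫⁻ τ in Set.Ioo t.e₂ t.e₃, ENNReal.ofReal (e.density τ)
      = ENNReal.ofReal (superlevelMass e t) := by
  obtain ⟨ht₂, -⟩ := ht.sq_lt_sq
  have integrableOn : IntegrableOn e.density (Set.Ioo t.e₂ t.e₃) :=
    ((e.continuousOn_density.mono fun τ hτ ↦ ht₂.trans_le hτ.1).integrableOn_compact
      isCompact_Icc).mono_set Set.Ioo_subset_Icc_self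
  rw [← integral_density h ht, intervalIntegral.integral_of_le ht.2.1.le,
    integral_Ioc_eq_integral_Ioo, ofReal_integral_eq_lintegral_ofReal integrableOn]
  filter_upwards [ae_restrict_mem measurableSet_Ioo] with τ hτ
  exact density_nonneg (hsub hτ)

@[fun_prop]
lemma measurable_ratio (e : Quadruple) : Measurable e.ratio := by
  unfold ratio quartic
  fun_prop

@[fun_prop]
lemma measurable_density (e : Quadruple) : Measurable e.density := by
  unfold density
  fun_prop

lemma measurableSet_interval (e : Quadruple) : MeasurableSet e.interval := measurableSet_Ioo

/-- The push-forward under `e.ratio` of the measure with density `e.density` on `e.interval`. -/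
noncomputable def fibreMeasure (e : Quadruple) : Measure ℝ :=
  ((volume.restrict e.interval).withDensity fun τ ↦ ENNReal.ofReal (e.density τ)).map e.ratio

lemma fibreMeasure_apply (e : Quadruple) {s : Set ℝ} (hs : MeasurableSet s) :
    e.fibreMeasure s = ∫⁻ τ in {τ ∈ e.interval | e.ratio τ ∈ s}, ENNReal.ofReal (e.density τ) := by
  have hm := e.measurable_ratio hs
  rw [fibreMeasure, Measure.map_apply e.measurable_ratio hs, withDensity_apply _ hm,
    Measure.restrict_restrict hm, Set.inter_comm]
  rfl

lemma fibreMeasure_Ioi (h : IsDeformation r e t) (hr : 0 < r) (he : e.interval.Nonempty)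
    (ht : t.IsDominant) : e.fibreMeasure (Set.Ioi r) = ENNReal.ofReal (superlevelMass e t) := by
  have superlevel_eq := h.superlevel_eq hr he ht
  rw [fibreMeasure_apply _ measurableSet_Ioi]
  simp only [Set.mem_Ioi]
  rw [superlevel_eq, lintegral_density h.prod_eq ht (superlevel_eq ▸ Set.sep_subset _ _)]

lemma fibreMeasure_Ioi_reflect (hr : 0 < r) :
    e.reflect.fibreMeasure (Set.Ioi r) = e.fibreMeasure (Set.Ioi r) := by
  have reflect_eq_of_nonempty {e : Quadruple} (hne : {τ ∈ e.interval | r < e.ratio τ}.Nonempty) :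
      e.reflect.fibreMeasure (Set.Ioi r) = e.fibreMeasure (Set.Ioi r) := by
    obtain ⟨τ, hτ, hrτ⟩ := hne
    obtain ⟨t, ht, h⟩ := exists_isDeformation hτ hr hrτ
    rw [fibreMeasure_Ioi h hr ⟨τ, hτ⟩ ht,
      fibreMeasure_Ioi h.reflect hr (nonempty_interval_reflect ⟨τ, hτ⟩) ht.reflect,
      superlevelMass_reflect h.sqEsymm₁_eq]
  have fibreMeasure_eq_zero {e : Quadruple} (hne : ¬ {τ ∈ e.interval | r < e.ratio τ}.Nonempty) :
      e.fibreMeasure (Set.Ioi r) = 0 := by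
    rw [fibreMeasure_apply _ measurableSet_Ioi]
    simp only [Set.mem_Ioi]
    rw [Set.not_nonempty_iff_eq_empty.1 hne, setLIntegral_empty]
  by_cases hne : {τ ∈ e.interval | r < e.ratio τ}.Nonempty
  · exact reflect_eq_of_nonempty hne
  by_cases hne' : {τ ∈ e.reflect.interval | r < e.reflect.ratio τ}.Nonempty
  · simpa only [reflect_reflect] using (reflect_eq_of_nonempty hne').symm
  · rw [fibreMeasure_eq_zero hne, fibreMeasure_eq_zero hne']

lemma fibreMeasure_Iic_zero (e : Quadruple) : e.fibreMeasure (Set.Iic 0) = 0 := by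
  have sublevel_empty : {τ ∈ e.interval | e.ratio τ ∈ Set.Iic 0} = ∅ :=
    Set.eq_empty_of_forall_notMem fun τ hτ ↦ (ratio_pos hτ.1).not_ge hτ.2
  rw [fibreMeasure_apply _ measurableSet_Iic, sublevel_empty, setLIntegral_empty]

instance isFiniteMeasure_fibreMeasure (e : Quadruple) : IsFiniteMeasure e.fibreMeasure := by
  have integral_lt_top : ∫⁻ τ in e.interval, ENNReal.ofReal (e.density τ) < ⊤ := by
    refine (setLIntegral_mono' e.measurableSet_interval fun τ hτ ↦
      ENNReal.ofReal_le_ofReal (density_le hτ)).trans_lt ?_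
    rw [setLIntegral_const]
    exact ENNReal.mul_lt_top ENNReal.ofReal_lt_top measure_Ioo_lt_top
  have := isFiniteMeasure_withDensity integral_lt_top.ne
  exact Measure.isFiniteMeasure_map _ _

lemma fibreMeasure_reflect (e : Quadruple) : e.reflect.fibreMeasure = e.fibreMeasure :=
  measure_eq_of_forall_pos_Ioi (fibreMeasure_Iic_zero _) (fibreMeasure_Iic_zero _)
    fun _ hr ↦ fibreMeasure_Ioi_reflect hr

lemma lintegral_fibre_reflect (e : Quadruple) {φ : ℝ → ENNReal} (hφ : Measurable φ) :
    ∫⁻ τ in e.reflect.interval, ENNReal.ofReal (e.reflect.density τ) * φ (e.reflect.ratio τ)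
      = ∫⁻ τ in e.interval, ENNReal.ofReal (e.density τ) * φ (e.ratio τ) := by
  have lintegral_fibreMeasure (e : Quadruple) : ∫⁻ r, φ r ∂e.fibreMeasure
      = ∫⁻ τ in e.interval, ENNReal.ofReal (e.density τ) * φ (e.ratio τ) := by
    rw [fibreMeasure, lintegral_map hφ e.measurable_ratio]
    exact lintegral_withDensity_eq_lintegral_mul _ e.measurable_density.ennreal_ofReal
      (hφ.comp e.measurable_ratio)
  rw [← lintegral_fibreMeasure, ← lintegral_fibreMeasure, fibreMeasure_reflect]

end FibreMeasure

end Quadruple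

/-- Comparability `f ≍ g` with constant `C`, in the symmetric form `f ≤ C g` and `g ≤ C f`. -/
def IsComparable (C f g : ℝ) : Prop := f ≤ C * g ∧ g ≤ C * f

namespace IsComparable

variable {C f g : ℝ}

lemma mono {C' : ℝ} (h : IsComparable C f g) (hf : 0 ≤ f) (hg : 0 ≤ g) (hC : C ≤ C') :
    IsComparable C' f g :=
  ⟨h.1.trans (by gcongr), h.2.trans (by gcongr)⟩

lemma add {f' g' : ℝ} (h : IsComparable C f g) (h' : IsComparable C f' g') :
    IsComparable C (f + f') (g + g') :=
  ⟨(add_le_add h.1 h'.1).trans_eq (mul_add ..).symm,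
    (add_le_add h.2 h'.2).trans_eq (mul_add ..).symm⟩

lemma const_mul {a : ℝ} (ha : 0 ≤ a) (h : IsComparable C f g) :
    IsComparable C (a * f) (a * g) :=
  ⟨(mul_le_mul_of_nonneg_left h.1 ha).trans_eq (mul_left_comm ..),
    (mul_le_mul_of_nonneg_left h.2 ha).trans_eq (mul_left_comm ..)⟩

lemma const_mul_left {a : ℝ} (ha : 0 < a) (hC : 0 < C) (hf : 0 ≤ f) (hg : 0 ≤ g)
    (h : IsComparable C f g) : IsComparable (C * max a a⁻¹) (a * f) g := by
  constructor
  · calc a * f ≤ a * (C * g) := by gcongr; exact h.1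
      _ = C * a * g := by ring
      _ ≤ C * max a a⁻¹ * g := by gcongr; exact le_max_left ..
  · calc g ≤ C * f := h.2
      _ = C * a⁻¹ * (a * f) := by field_simp
      _ ≤ C * max a a⁻¹ * (a * f) := by gcongr; exact le_max_right ..

end IsComparable

section Beta

lemma intervalIntegrable_beta_weight {p q a b : ℝ} (hp : 0 < p) (hq : 0 < q) (hab : a < b) :
    IntervalIntegrable (fun x ↦ (b - x) ^ (p - 1) * (x - a) ^ (q - 1)) volume a b := by
  refine IntervalIntegrable.trans (b := (a + b) / 2) ?_ ?_
  · have h : IntervalIntegrable (fun x ↦ (x - a) ^ (q - 1)) volume a ((a + b) / 2) := by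
      simpa using (intervalIntegral.intervalIntegrable_rpow' (a := a - a) (b := (a + b) / 2 - a)
        (r := q - 1) (by linarith)).comp_sub_right a
    refine h.continuousOn_mul (.rpow_const (by fun_prop) fun x hx ↦ .inl ?_)
    rw [Set.uIcc_of_le (by linarith)] at hx
    linarith [hx.2]
  · have h : IntervalIntegrable (fun x ↦ (b - x) ^ (p - 1)) volume ((a + b) / 2) b := by
      simpa using (intervalIntegral.intervalIntegrable_rpow' (a := b - (a + b) / 2) (b := b - b)
        (r := p - 1) (by linarith)).comp_sub_left b
    refine h.mul_continuousOn (.rpow_const (by fun_prop) fun x hx ↦ .inl ?_)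
    rw [Set.uIcc_of_le (by linarith)] at hx
    linarith [hx.1]

lemma intervalIntegrable_rpow_mul_exp_neg {p : ℝ} (hp : 0 < p) (a b y : ℝ) :
    IntervalIntegrable (fun u ↦ u ^ (p - 1) * exp (-(u * y))) volume a b :=
  (intervalIntegral.intervalIntegrable_rpow' (by linarith)).mul_continuousOn (by fun_prop)

lemma integral_rpow_sub_one {p : ℝ} (hp : 0 < p) (d : ℝ) :
    ∫ u in (0 : ℝ)..d, u ^ (p - 1) = d ^ p / p := by
  rw [integral_rpow (.inl (by linarith))]
  simp [hp.ne']

lemma rpow_mul_exp_neg_nonneg {u : ℝ} (hu : 0 ≤ u) (s y : ℝ) :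
    0 ≤ u ^ s * exp (-(u * y)) := by
  positivity

lemma exp_neg_div_le_integral_rpow_mul_exp_neg {p y d : ℝ} (hp : 0 < p) (hy : 0 ≤ y)
    (hd₀ : 0 ≤ d) (hd₁ : d ≤ 1) :
    exp (-(d * y)) * (d ^ p / p) ≤ ∫ u in (0 : ℝ)..1, u ^ (p - 1) * exp (-(u * y)) := by
  calc exp (-(d * y)) * (d ^ p / p)
      = ∫ u in (0 : ℝ)..d, u ^ (p - 1) * exp (-(d * y)) := by
        rw [intervalIntegral.integral_mul_const, integral_rpow_sub_one hp, mul_comm]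
    _ ≤ ∫ u in (0 : ℝ)..d, u ^ (p - 1) * exp (-(u * y)) := by
        refine intervalIntegral.integral_mono_on hd₀
          ((intervalIntegral.intervalIntegrable_rpow' (by linarith)).mul_const _)
          (intervalIntegrable_rpow_mul_exp_neg hp ..) fun u hu ↦ ?_
        have := rpow_nonneg hu.1 (p - 1)
        gcongr
        exact hu.2
    _ ≤ ∫ u in (0 : ℝ)..1, u ^ (p - 1) * exp (-(u * y)) := by
        refine intervalIntegral.integral_mono_interval le_rfl hd₀ hd₁ ?_
          (intervalIntegrable_rpow_mul_exp_neg hp ..)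
        filter_upwards [ae_restrict_mem measurableSet_Ioc] with u hu
        exact rpow_mul_exp_neg_nonneg hu.1.le _ _

lemma le_integral_rpow_mul_exp_neg {p y : ℝ} (hp : 0 < p) (hy : 0 ≤ y) :
    exp (-1 / 2) / p / (1 + 2 * y) ^ p ≤ ∫ u in (0 : ℝ)..1, u ^ (p - 1) * exp (-(u * y)) := by
  have hd : (1 + 2 * y)⁻¹ ≤ 1 := inv_le_one_of_one_le₀ (by linarith)
  refine le_trans ?_ (exp_neg_div_le_integral_rpow_mul_exp_neg hp hy (by positivity) hd)
  have hdy : (1 + 2 * y)⁻¹ * y ≤ 1 / 2 := by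
    rw [inv_mul_le_iff₀ (by positivity)]
    linarith
  calc exp (-1 / 2) / p / (1 + 2 * y) ^ p = exp (-1 / 2) * ((1 + 2 * y)⁻¹ ^ p / p) := by
        rw [inv_rpow (by positivity)]
        field_simp
    _ ≤ _ := by
        gcongr
        linarith

lemma integral_rpow_mul_exp_neg_le {p y : ℝ} (hp : 0 < p) (hy : 0 ≤ y) :
    ∫ u in (0 : ℝ)..1, u ^ (p - 1) * exp (-(u * y)) ≤
      exp (1 / 2) * (Gamma p * 2 ^ p) / (1 + 2 * y) ^ p := by
  have hr : 0 < (1 + 2 * y) / 2 := by positivity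
  have hGamma := integral_rpow_mul_exp_neg_mul_Ioi hp hr
  have hint : IntegrableOn (fun u : ℝ ↦ u ^ (p - 1) * exp (-((1 + 2 * y) / 2 * u)))
      (Set.Ioi 0) := by
    simpa [neg_mul] using integrableOn_rpow_mul_exp_neg_mul_rpow (s := p - 1) (p := 1)
      (b := (1 + 2 * y) / 2) (by linarith) one_pos hr
  calc ∫ u in (0 : ℝ)..1, u ^ (p - 1) * exp (-(u * y))
      = ∫ u in Set.Ioc (0 : ℝ) 1, u ^ (p - 1) * exp (-(u * y)) :=
        intervalIntegral.integral_of_le zero_le_one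
    _ ≤ ∫ u in Set.Ioc (0 : ℝ) 1,
          exp (1 / 2) * (u ^ (p - 1) * exp (-((1 + 2 * y) / 2 * u))) := by
        refine setIntegral_mono_on (intervalIntegrable_rpow_mul_exp_neg hp 0 1 y).1
          ((hint.mono_set Set.Ioc_subset_Ioi_self).const_mul _) measurableSet_Ioc fun u hu ↦ ?_
        have := rpow_nonneg hu.1.le (p - 1)
        rw [mul_left_comm, ← exp_add]
        gcongr
        nlinarith [hu.2]
    _ = exp (1 / 2) * ∫ u in Set.Ioc (0 : ℝ) 1, u ^ (p - 1) * exp (-((1 + 2 * y) / 2 * u)) :=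
        integral_const_mul _ _
    _ ≤ exp (1 / 2) * ∫ u in Set.Ioi (0 : ℝ), u ^ (p - 1) * exp (-((1 + 2 * y) / 2 * u)) := by
        refine mul_le_mul_of_nonneg_left
          (setIntegral_mono_set hint ?_ Set.Ioc_subset_Ioi_self.eventuallyLE) (exp_pos _).le
        filter_upwards [ae_restrict_mem measurableSet_Ioi] with u (hu : 0 < u)
        simp only [Pi.zero_apply]
        positivity
    _ = exp (1 / 2) * (Gamma p * 2 ^ p) / (1 + 2 * y) ^ p := by
        rw [hGamma, one_div_div, div_rpow (by norm_num) (by positivity)]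
        ring

end Beta

/-- The Laplace transform `∫_{-1}^{1} e^{zy} (1 - z)^{p-1} (1 + z)^{q-1} dz` of the beta weight
on `[-1, 1]`; up to a constant, `E_k^{rk1}(±x, v)` are the cases `{p, q} = {k, k + 1}`. -/
noncomputable def betaLaplace (p q y : ℝ) : ℝ :=
  ∫ z in (-1 : ℝ)..1, exp (z * y) * ((1 - z) ^ (p - 1) * (1 + z) ^ (q - 1))

section BetaLaplace

lemma intervalIntegrable_betaLaplace {p q : ℝ} (hp : 0 < p) (hq : 0 < q) (y : ℝ) :
    IntervalIntegrable (fun z ↦ exp (z * y) * ((1 - z) ^ (p - 1) * (1 + z) ^ (q - 1)))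
      volume (-1) 1 := by
  have h := intervalIntegrable_beta_weight hp hq (neg_lt_self one_pos)
  simp only [sub_neg_eq_add, add_comm _ (1 : ℝ)] at h
  exact h.continuousOn_mul (by fun_prop)

lemma betaLaplace_neg (p q y : ℝ) : betaLaplace p q (-y) = betaLaplace q p y := by
  have h := intervalIntegral.integral_comp_neg (a := -1) (b := 1)
    fun z : ℝ ↦ exp (z * y) * ((1 - z) ^ (q - 1) * (1 + z) ^ (p - 1))
  rw [neg_neg] at h
  rw [betaLaplace, betaLaplace, ← h]
  refine intervalIntegral.integral_congr fun z _ ↦ ?_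
  simp only [sub_neg_eq_add, ← sub_eq_add_neg, mul_neg, neg_mul]
  ring

lemma betaLaplace_nonneg (p q y : ℝ) : 0 ≤ betaLaplace p q y :=
  intervalIntegral.integral_nonneg (by norm_num) fun z hz ↦
    mul_nonneg (exp_pos _).le
      (mul_nonneg (rpow_nonneg (by linarith [hz.2]) _) (rpow_nonneg (by linarith [hz.1]) _))

lemma continuous_betaLaplace {p q : ℝ} (hp : 0 < p) (hq : 0 < q) :
    Continuous (betaLaplace p q) := by
  refine continuous_iff_continuousAt.2 fun y₀ ↦
    intervalIntegral.continuousAt_of_dominated_interval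
      (bound := fun z ↦ exp (|y₀| + 1) * ((1 - z) ^ (p - 1) * (1 + z) ^ (q - 1)))
      (.of_forall fun y ↦ ?_) ?_ ?_ (.of_forall fun z _ ↦ by fun_prop)
  · rw [Set.uIoc_of_le (by norm_num)]
    exact (intervalIntegrable_betaLaplace hp hq y).1.aestronglyMeasurable
  · filter_upwards [Metric.ball_mem_nhds y₀ one_pos] with y (hy : |y - y₀| < 1)
    refine .of_forall fun z hz ↦ ?_
    rw [Set.uIoc_of_le (by norm_num)] at hz
    have h₁ : 0 ≤ 1 - z := by linarith [hz.2]
    have h₂ : 0 ≤ 1 + z := by linarith [hz.1]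
    rw [norm_of_nonneg (by positivity)]
    gcongr
    calc z * y ≤ |z| * |y| := (le_abs_self _).trans_eq (abs_mul _ _)
      _ ≤ 1 * |y| := by gcongr; exact abs_le.2 ⟨by linarith, by linarith⟩
      _ ≤ |y₀| + 1 := by linarith [abs_sub_abs_le_abs_sub y y₀]
  · simpa using (intervalIntegrable_betaLaplace hp hq 0).const_mul (exp (|y₀| + 1))

lemma betaLaplace_eq_exp_mul_integral (p q y : ℝ) :
    betaLaplace p q y =
      exp y * ∫ u in (0 : ℝ)..2, u ^ (p - 1) * exp (-(u * y)) * (2 - u) ^ (q - 1) := by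
  have h := intervalIntegral.integral_comp_sub_left (a := 0) (b := 2)
    (fun z : ℝ ↦ exp (z * y) * ((1 - z) ^ (p - 1) * (1 + z) ^ (q - 1))) 1
  rw [sub_zero, show (1 : ℝ) - 2 = -1 by norm_num] at h
  rw [betaLaplace, ← h, ← intervalIntegral.integral_const_mul]
  refine intervalIntegral.integral_congr fun u _ ↦ ?_
  simp only [sub_sub_cancel, one_sub_mul, sub_eq_add_neg y, exp_add, ← add_sub_assoc,
    one_add_one_eq_two]
  ring

lemma min_one_two_rpow_le {w s : ℝ} (h₁ : 1 ≤ w) (h₂ : w ≤ 2) : min 1 (2 ^ s) ≤ w ^ s := by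
  rcases le_total 0 s with hs | hs
  · exact (min_le_left ..).trans (one_le_rpow h₁ hs)
  · exact (min_le_right ..).trans (rpow_le_rpow_of_nonpos (by linarith) h₂ hs)

lemma rpow_le_max_one_two_rpow {w s : ℝ} (h₁ : 1 ≤ w) (h₂ : w ≤ 2) : w ^ s ≤ max 1 (2 ^ s) := by
  rcases le_total 0 s with hs | hs
  · exact (rpow_le_rpow (by linarith) h₂ hs).trans (le_max_right ..)
  · exact (rpow_le_one_of_one_le_of_nonpos h₁ hs).trans (le_max_left ..)

lemma intervalIntegrable_rpow_mul_exp_neg_mul_rpow {p q : ℝ} (hp : 0 < p) (hq : 0 < q) (y : ℝ)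
    {a b : ℝ} (ha : 0 ≤ a) (hab : a ≤ b) (hb : b ≤ 2) :
    IntervalIntegrable (fun u ↦ u ^ (p - 1) * exp (-(u * y)) * (2 - u) ^ (q - 1)) volume a b := by
  have h : IntervalIntegrable (fun u ↦ u ^ (p - 1) * exp (-(u * y)) * (2 - u) ^ (q - 1))
      volume 0 2 :=
    ((intervalIntegrable_beta_weight hq hp two_pos).continuousOn_mul
      (g := fun u ↦ exp (-(u * y))) (by fun_prop)).congr fun u _ ↦ by rw [sub_zero]; ring
  refine h.mono_set ?_
  rw [Set.uIcc_of_le hab, Set.uIcc_of_le zero_le_two]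
  exact Set.Icc_subset_Icc ha hb

lemma le_integral_rpow_mul_exp_neg_mul_rpow {p q y : ℝ} (hp : 0 < p) (hq : 0 < q) :
    min 1 (2 ^ (q - 1)) * ∫ u in (0 : ℝ)..1, u ^ (p - 1) * exp (-(u * y)) ≤
      ∫ u in (0 : ℝ)..2, u ^ (p - 1) * exp (-(u * y)) * (2 - u) ^ (q - 1) := by
  rw [← intervalIntegral.integral_const_mul]
  calc ∫ u in (0 : ℝ)..1, min 1 (2 ^ (q - 1)) * (u ^ (p - 1) * exp (-(u * y)))
      ≤ ∫ u in (0 : ℝ)..1, u ^ (p - 1) * exp (-(u * y)) * (2 - u) ^ (q - 1) := by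
        refine intervalIntegral.integral_mono_on zero_le_one
          ((intervalIntegrable_rpow_mul_exp_neg hp ..).const_mul _)
          (intervalIntegrable_rpow_mul_exp_neg_mul_rpow hp hq y le_rfl zero_le_one one_le_two)
          fun u hu ↦ ?_
        rw [mul_comm]
        exact mul_le_mul_of_nonneg_left
          (min_one_two_rpow_le (by linarith [hu.2]) (by linarith [hu.1]))
          (rpow_mul_exp_neg_nonneg hu.1 ..)
    _ ≤ _ := by
        refine intervalIntegral.integral_mono_interval le_rfl zero_le_one one_le_two ?_
          (intervalIntegrable_rpow_mul_exp_neg_mul_rpow hp hq y le_rfl zero_le_two le_rfl)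
        filter_upwards [ae_restrict_mem measurableSet_Ioc] with u hu
        exact mul_nonneg (rpow_mul_exp_neg_nonneg hu.1.le ..) (rpow_nonneg (by linarith [hu.2]) _)

lemma integral_one_two_rpow_mul_exp_neg_mul_rpow_le {p q y : ℝ} (hp : 0 < p) (hq : 0 < q)
    (hy : 0 ≤ y) :
    ∫ u in (1 : ℝ)..2, u ^ (p - 1) * exp (-(u * y)) * (2 - u) ^ (q - 1) ≤
      exp (-y) * ∫ u in (1 : ℝ)..2, u ^ (p - 1) * (2 - u) ^ (q - 1) := by
  have hint (y : ℝ) :=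
    intervalIntegrable_rpow_mul_exp_neg_mul_rpow hp hq y zero_le_one one_le_two le_rfl
  have hint₀ : IntervalIntegrable (fun u ↦ u ^ (p - 1) * (2 - u) ^ (q - 1)) volume 1 2 := by
    simpa using hint 0
  rw [← intervalIntegral.integral_const_mul]
  refine intervalIntegral.integral_mono_on one_le_two (hint y) (hint₀.const_mul _) fun u hu ↦ ?_
  have h₁ : 0 ≤ u ^ (p - 1) := rpow_nonneg (by linarith [hu.1]) _
  have h₂ : 0 ≤ (2 - u) ^ (q - 1) := rpow_nonneg (by linarith [hu.2]) _
  have hexp : exp (-(u * y)) ≤ exp (-y) := exp_le_exp.2 (by nlinarith [hu.1])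
  rw [mul_right_comm, mul_comm]
  gcongr

lemma exists_integral_rpow_mul_exp_neg_mul_rpow_le {p q : ℝ} (hp : 0 < p) (hq : 0 < q) :
    ∃ C, 0 < C ∧ ∀ y, 0 ≤ y →
      ∫ u in (0 : ℝ)..2, u ^ (p - 1) * exp (-(u * y)) * (2 - u) ^ (q - 1) ≤
        C * ∫ u in (0 : ℝ)..1, u ^ (p - 1) * exp (-(u * y)) := by
  set K := ∫ u in (1 : ℝ)..2, u ^ (p - 1) * (2 - u) ^ (q - 1)
  have hK₀ : 0 ≤ K := intervalIntegral.integral_nonneg one_le_two fun u hu ↦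
    mul_nonneg (rpow_nonneg (by linarith [hu.1]) _) (rpow_nonneg (by linarith [hu.2]) _)
  refine ⟨max 1 (2 ^ (q - 1)) + K * p, by positivity, fun y hy ↦ ?_⟩
  set A := ∫ u in (0 : ℝ)..1, u ^ (p - 1) * exp (-(u * y)) with hA
  have near : ∫ u in (0 : ℝ)..1, u ^ (p - 1) * exp (-(u * y)) * (2 - u) ^ (q - 1) ≤
      max 1 (2 ^ (q - 1)) * A := by
    rw [hA, ← intervalIntegral.integral_const_mul]
    refine intervalIntegral.integral_mono_on zero_le_one
      (intervalIntegrable_rpow_mul_exp_neg_mul_rpow hp hq y le_rfl zero_le_one one_le_two)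
      ((intervalIntegrable_rpow_mul_exp_neg hp ..).const_mul _) fun u hu ↦ ?_
    rw [mul_comm (max _ _)]
    exact mul_le_mul_of_nonneg_left
      (rpow_le_max_one_two_rpow (by linarith [hu.2]) (by linarith [hu.1]))
      (rpow_mul_exp_neg_nonneg hu.1 ..)
  have hexp : exp (-y) ≤ p * A := by
    have h := exp_neg_div_le_integral_rpow_mul_exp_neg hp hy zero_le_one le_rfl
    rw [one_mul, one_rpow, mul_one_div, div_le_iff₀ hp] at h
    linarith
  rw [← intervalIntegral.integral_add_adjacent_intervals
    (intervalIntegrable_rpow_mul_exp_neg_mul_rpow hp hq y le_rfl zero_le_one one_le_two)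
    (intervalIntegrable_rpow_mul_exp_neg_mul_rpow hp hq y zero_le_one one_le_two le_rfl)]
  linarith [integral_one_two_rpow_mul_exp_neg_mul_rpow_le hp hq hy,
    mul_le_mul_of_nonneg_right hexp hK₀]

lemma exists_le_betaLaplace {p q : ℝ} (hp : 0 < p) (hq : 0 < q) :
    ∃ c, 0 < c ∧ ∀ y, 0 ≤ y → c * (exp y / (1 + 2 * y) ^ p) ≤ betaLaplace p q y := by
  refine ⟨min 1 (2 ^ (q - 1)) * (exp (-1 / 2) / p), by positivity, fun y hy ↦ ?_⟩
  calc min 1 (2 ^ (q - 1)) * (exp (-1 / 2) / p) * (exp y / (1 + 2 * y) ^ p)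
      = exp y * (min 1 (2 ^ (q - 1)) * (exp (-1 / 2) / p / (1 + 2 * y) ^ p)) := by ring
    _ ≤ exp y * (min 1 (2 ^ (q - 1)) * ∫ u in (0 : ℝ)..1, u ^ (p - 1) * exp (-(u * y))) := by
        gcongr
        exact le_integral_rpow_mul_exp_neg hp hy
    _ ≤ betaLaplace p q y := by
        rw [betaLaplace_eq_exp_mul_integral]
        gcongr
        exact le_integral_rpow_mul_exp_neg_mul_rpow hp hq

lemma exists_betaLaplace_le {p q : ℝ} (hp : 0 < p) (hq : 0 < q) :
    ∃ C, 0 < C ∧ ∀ y, 0 ≤ y → betaLaplace p q y ≤ C * (exp y / (1 + 2 * y) ^ p) := by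
  obtain ⟨C, hC, hle⟩ := exists_integral_rpow_mul_exp_neg_mul_rpow_le hp hq
  have := Gamma_pos_of_pos hp
  refine ⟨C * (exp (1 / 2) * (Gamma p * 2 ^ p)), by positivity, fun y hy ↦ ?_⟩
  calc betaLaplace p q y
      ≤ exp y * (C * ∫ u in (0 : ℝ)..1, u ^ (p - 1) * exp (-(u * y))) := by
        rw [betaLaplace_eq_exp_mul_integral]
        gcongr
        exact hle y hy
    _ ≤ exp y * (C * (exp (1 / 2) * (Gamma p * 2 ^ p) / (1 + 2 * y) ^ p)) := by
        gcongr
        exact integral_rpow_mul_exp_neg_le hp hy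
    _ = _ := by ring

lemma exists_isComparable_betaLaplace {p q : ℝ} (hp : 0 < p) (hq : 0 < q) :
    ∃ C, 0 < C ∧ ∀ y, 0 ≤ y → IsComparable C (betaLaplace p q y) (exp y / (1 + 2 * y) ^ p) := by
  obtain ⟨c, hc, hle⟩ := exists_le_betaLaplace hp hq
  obtain ⟨C, hC, hge⟩ := exists_betaLaplace_le hp hq
  refine ⟨max C c⁻¹, by positivity, fun y hy ↦ ⟨(hge y hy).trans ?_, ?_⟩⟩
  · gcongr
    exact le_max_left ..
  · calc exp y / (1 + 2 * y) ^ p ≤ c⁻¹ * betaLaplace p q y := (le_inv_mul_iff₀ hc).2 (hle y hy)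
      _ ≤ max C c⁻¹ * betaLaplace p q y :=
        mul_le_mul_of_nonneg_right (le_max_right ..) (betaLaplace_nonneg ..)

lemma betaLaplace_integrand_combination {k A B y z : ℝ} (hz : z ∈ Set.Ioo (-1) 1) :
    A * (exp (z * y) * ((1 - z) ^ (k - 1) * (1 + z) ^ (k + 1 - 1))) +
        B * (exp (z * y) * ((1 - z) ^ (k + 1 - 1) * (1 + z) ^ (k - 1))) =
      exp (z * y) * ((1 - z) * (1 + z)) ^ (k - 1) * (A * (1 + z) + B * (1 - z)) := by
  have h₁ : 0 < 1 - z := by linarith [hz.2]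
  have h₂ : 0 < 1 + z := by linarith [hz.1]
  rw [add_sub_right_comm, rpow_add_one h₁.ne', rpow_add_one h₂.ne', mul_rpow h₁.le h₂.le]
  ring

lemma ofReal_betaLaplace_combination {k A B : ℝ} (hk : 0 < k) (hA : 0 ≤ A) (hB : 0 ≤ B)
    (y : ℝ) :
    ENNReal.ofReal (A * betaLaplace k (k + 1) y + B * betaLaplace (k + 1) k y) =
      ∫⁻ z in Set.Ioo (-1 : ℝ) 1, ENNReal.ofReal
        (exp (z * y) * ((1 - z) * (1 + z)) ^ (k - 1) * (A * (1 + z) + B * (1 - z))) := by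
  have hk₁ := add_pos hk one_pos
  have hintA := (intervalIntegrable_betaLaplace hk hk₁ y).const_mul A
  have hintB := (intervalIntegrable_betaLaplace hk₁ hk y).const_mul B
  rw [betaLaplace, betaLaplace, ← intervalIntegral.integral_const_mul,
    ← intervalIntegral.integral_const_mul, ← intervalIntegral.integral_add hintA hintB,
    intervalIntegral.integral_congr_Ioo_of_le (by norm_num)
      fun z hz ↦ betaLaplace_integrand_combination hz,
    intervalIntegral.integral_of_le (by norm_num), integral_Ioc_eq_integral_Ioo]
  refine ofReal_integral_eq_lintegral_ofReal ?_ ?_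
  · have h := hintA.add hintB
    rw [intervalIntegrable_iff_integrableOn_Ioo_of_le (by norm_num)] at h
    exact h.congr_fun (fun z hz ↦ betaLaplace_integrand_combination hz) measurableSet_Ioo
  · filter_upwards [ae_restrict_mem measurableSet_Ioo] with z hz
    have h₁ : 0 ≤ 1 - z := by linarith [hz.2]
    have h₂ : 0 ≤ 1 + z := by linarith [hz.1]
    simp only [Pi.zero_apply]
    positivity

end BetaLaplace

section RankOne

/-- The normalising constant of the rank-one kernel `Erk1 k`. -/
noncomputable def rankOneConst (k : ℝ) : ℝ := Gamma (k + 1 / 2) / (√π * Gamma k)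

variable {k : ℝ}

lemma rankOneConst_pos (hk : 0 < k) : 0 < rankOneConst k :=
  div_pos (Gamma_pos_of_pos (by linarith))
    (mul_pos (sqrt_pos.2 pi_pos) (Gamma_pos_of_pos hk))

lemma Erk1_eq_betaLaplace (k x v : ℝ) :
    Erk1 k x v = rankOneConst k * betaLaplace k (k + 1) (x * v) := by
  simp only [Erk1, rankOneConst, betaLaplace, add_sub_cancel_right, mul_assoc]

lemma Erk1_neg_eq_betaLaplace (k x v : ℝ) :
    Erk1 k (-x) v = rankOneConst k * betaLaplace (k + 1) k (x * v) := by
  rw [Erk1_eq_betaLaplace, neg_mul, betaLaplace_neg]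

lemma continuous_Erk1 (hk : 0 < k) (x : ℝ) : Continuous (Erk1 k x) := by
  have := continuous_betaLaplace hk (add_pos hk one_pos)
  simp only [funext (Erk1_eq_betaLaplace k x)]
  fun_prop

lemma Erk1_nonneg (hk : 0 < k) (x v : ℝ) : 0 ≤ Erk1 k x v := by
  rw [Erk1_eq_betaLaplace]
  exact mul_nonneg (rankOneConst_pos hk).le (betaLaplace_nonneg ..)

lemma exists_isComparable_Erk1 (hk : 0 < k) :
    ∃ C, 0 < C ∧ ∀ x v, 0 ≤ x * v →
      IsComparable C (Erk1 k x v) (exp (x * v) / (1 + 2 * (x * v)) ^ k) ∧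
      IsComparable C (Erk1 k (-x) v) (exp (x * v) / (1 + 2 * (x * v)) ^ (k + 1)) := by
  obtain ⟨C₁, hC₁, h₁⟩ := exists_isComparable_betaLaplace hk (add_pos hk one_pos)
  obtain ⟨C₂, -, h₂⟩ := exists_isComparable_betaLaplace (add_pos hk one_pos) hk
  have hc := rankOneConst_pos hk
  refine ⟨max C₁ C₂ * max (rankOneConst k) (rankOneConst k)⁻¹, by positivity, fun x v hxv ↦ ?_⟩
  have hpos (s : ℝ) : 0 ≤ exp (x * v) / (1 + 2 * (x * v)) ^ s := by positivity
  rw [Erk1_eq_betaLaplace, Erk1_neg_eq_betaLaplace]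
  exact ⟨((h₁ _ hxv).mono (betaLaplace_nonneg ..) (hpos _) (le_max_left ..)).const_mul_left hc
      (by positivity) (betaLaplace_nonneg ..) (hpos _),
    ((h₂ _ hxv).mono (betaLaplace_nonneg ..) (hpos _) (le_max_right ..)).const_mul_left hc
      (by positivity) (betaLaplace_nonneg ..) (hpos _)⟩

end RankOne

section ChangeOfVariables

lemma setLIntegral_Ioo_eq_setLIntegral_Ioo_neg_one_one {a b : ℝ} (hab : a < b) (f : ℝ → ENNReal) :
    ∫⁻ x in Set.Ioo a b, f x
      = ∫⁻ z in Set.Ioo (-1) 1,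
        ENNReal.ofReal ((b - a) / 2) * f ((b - a) / 2 * z + (a + b) / 2) := by
  have half_pos : 0 < (b - a) / 2 := half_pos (sub_pos.2 hab)
  have image_eq : (fun z ↦ (b - a) / 2 * z + (a + b) / 2) '' Set.Ioo (-1) 1 = Set.Ioo a b := by
    rw [Set.image_affine_Ioo half_pos]
    congr 1 <;> ring
  have hasDerivWithinAt (z : ℝ) (_ : z ∈ Set.Ioo (-1 : ℝ) 1) :
      HasDerivWithinAt (fun z ↦ (b - a) / 2 * z + (a + b) / 2) ((b - a) / 2) (Set.Ioo (-1) 1)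
        z := by
    simpa using
      (((hasDerivAt_id z).const_mul ((b - a) / 2)).add_const ((a + b) / 2)).hasDerivWithinAt
  have injective : Function.Injective fun z ↦ (b - a) / 2 * z + (a + b) / 2 :=
    (add_left_injective _).comp (mul_right_injective₀ half_pos.ne')
  rw [← image_eq, lintegral_image_eq_lintegral_abs_deriv_mul measurableSet_Ioo hasDerivWithinAt
    injective.injOn, abs_of_pos half_pos]

lemma setLIntegral_Ioo_neg_neg (a b : ℝ) (f : ℝ → ENNReal) :
    ∫⁻ x in Set.Ioo (-b) (-a), f x = ∫⁻ x in Set.Ioo a b, f (-x) := by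
  rw [← Set.neg_Ioo, ← (Measure.measurePreserving_neg volume).setLIntegral_comp_preimage_emb
    (MeasurableEquiv.neg ℝ).measurableEmbedding]
  simp

lemma lintegral_lintegral_add_half_sub {ψ : ℝ → ℝ → ENNReal}
    (hψ : Measurable (Function.uncurry ψ)) :
    ∫⁻ y, ∫⁻ x, ψ (x + y) ((x - y) / 2) = ∫⁻ s, ∫⁻ τ, ψ s τ := by
  have inner (y : ℝ) : ∫⁻ x, ψ (x + y) ((x - y) / 2) = ∫⁻ s, ψ s (s / 2 - y) := by
    rw [← lintegral_add_right_eq_self (fun s ↦ ψ s (s / 2 - y)) y]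
    exact lintegral_congr fun x ↦ by ring_nf
  have measurable : Measurable fun p : ℝ × ℝ ↦ ψ p.2 (p.2 / 2 - p.1) :=
    hψ.comp (f := fun p : ℝ × ℝ ↦ (p.2, p.2 / 2 - p.1)) (by fun_prop)
  simp only [inner]
  rw [lintegral_lintegral_swap measurable.aemeasurable]
  exact lintegral_congr fun s ↦ lintegral_sub_left_eq_self (ψ s) (s / 2)

end ChangeOfVariables

/-- The interlacing condition `λ₃ < ν₂ < λ₂ < ν₁ < λ₁` that describes the domain of integration in
`EkA2`. -/
structure Interlaces (l₁ l₂ l₃ n₁ n₂ : ℝ) : Prop where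
  lt_fst : l₂ < n₁
  fst_lt : n₁ < l₁
  lt_snd : l₃ < n₂
  snd_lt : n₂ < l₂

namespace Interlaces

variable {l₁ l₂ l₃ n₁ n₂ : ℝ}

lemma snd_lt_fst (h : Interlaces l₁ l₂ l₃ n₁ n₂) : n₂ < n₁ := h.snd_lt.trans h.lt_fst

end Interlaces

/-- The integrand of the double integral defining `EkA2`. -/
noncomputable def dunklIntegrand (k x₁ x₂ x₃ l₁ l₂ l₃ n₁ n₂ : ℝ) : ℝ :=
  ((n₁ - l₂) * (l₁ - n₂) * Erk1 k ((x₁ - x₂) / 2) (n₁ - n₂)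
    + (l₁ - n₁) * (l₂ - n₂) * Erk1 k (-(x₁ - x₂) / 2) (n₁ - n₂))
  * ((n₁ - l₃) * (n₂ - l₃)) * exp ((x₁ + x₂ - 2 * x₃) * (n₁ + n₂) / 2)
  * Wk k l₁ l₂ l₃ n₁ n₂

/-- The double integral of `dunklIntegrand` over the interlacing domain, as a Lebesgue integral
with values in `[0, ∞]`. -/
noncomputable def dunklLIntegral (k x₁ x₂ x₃ l₁ l₂ l₃ : ℝ) : ENNReal :=
  ∫⁻ n₂ in Set.Ioo l₃ l₂, ∫⁻ n₁ in Set.Ioo l₂ l₁,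
    ENNReal.ofReal (dunklIntegrand k x₁ x₂ x₃ l₁ l₂ l₃ n₁ n₂)

/-- The quadruple attached to a Gelfand–Tsetlin pattern with rows `λ`, `ν` and `ζ`, in terms of
`s = ν₁ + ν₂`. -/
noncomputable def patternQuadruple (l₁ l₂ l₃ s ζ : ℝ) : Quadruple :=
  ⟨s / 2 - l₁, s / 2 - l₂, ζ - s / 2, s / 2 - l₃⟩

/-- The density of the measure on Gelfand–Tsetlin patterns whose `(s, ζ, τ)`-integral is the
Dunkl kernel up to normalization; `s = ν₁ + ν₂` and `τ = (ν₁ - ν₂) / 2`. -/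
noncomputable def patternDensity (k x₁ x₂ x₃ l₁ l₂ l₃ s ζ τ : ℝ) : ℝ :=
  (patternQuadruple l₁ l₂ l₃ s ζ).density τ * (patternQuadruple l₁ l₂ l₃ s ζ).ratio τ ^ (k - 1)
    * (2 * rankOneConst k * exp (x₁ * ζ + x₂ * (s - ζ) - x₃ * s))

/-- `patternDensity` extended by zero to all `τ`. -/
noncomputable def patternIntegrand (k x₁ x₂ x₃ l₁ l₂ l₃ s ζ τ : ℝ) : ENNReal :=
  (patternQuadruple l₁ l₂ l₃ s ζ).interval.indicator
    (fun τ ↦ ENNReal.ofReal (patternDensity k x₁ x₂ x₃ l₁ l₂ l₃ s ζ τ)) τ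

section Representation

variable {k x₁ x₂ x₃ l₁ l₂ l₃ n₁ n₂ s ζ z : ℝ}

lemma mem_interval_patternQuadruple :
    (n₁ - n₂) / 2 ∈ (patternQuadruple l₁ l₂ l₃ (n₁ + n₂) ζ).interval ↔
      Interlaces l₁ l₂ l₃ n₁ n₂ ∧ ζ ∈ Set.Ioo n₂ n₁ := by
  simp only [Quadruple.mem_interval_iff, patternQuadruple, abs_lt, Set.mem_Ioo]
  constructor
  · rintro ⟨⟨⟨_, _⟩, _, _⟩, _, _⟩
    refine ⟨⟨?_, ?_, ?_, ?_⟩, ?_, ?_⟩ <;> linarith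
  · rintro ⟨⟨_, _, _, _⟩, _, _⟩
    refine ⟨⟨⟨?_, ?_⟩, ?_, ?_⟩, ?_, ?_⟩ <;> linarith

lemma two_mul_half_sub_mul_density (h : n₁ ≠ n₂) :
    2 * ((n₁ - n₂) / 2 * (patternQuadruple l₁ l₂ l₃ (n₁ + n₂)
        ((n₁ - n₂) / 2 * z + (n₂ + n₁) / 2)).density ((n₁ - n₂) / 2))
      = ((n₁ - l₂) * (l₁ - n₂) * (1 + z) + (l₁ - n₁) * (l₂ - n₂) * (1 - z))
        * ((n₁ - l₃) * (n₂ - l₃)) := by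
  have sub_ne_zero : n₁ - n₂ ≠ 0 := sub_ne_zero.2 h
  simp only [Quadruple.density, patternQuadruple]
  field_simp
  ring

lemma ratio_patternQuadruple (h : n₁ ≠ n₂) :
    (patternQuadruple l₁ l₂ l₃ (n₁ + n₂)
        ((n₁ - n₂) / 2 * z + (n₂ + n₁) / 2)).ratio ((n₁ - n₂) / 2)
      = (l₁ - n₁) * (l₁ - n₂) * (n₁ - l₂) * (l₂ - n₂) * (n₁ - l₃) * (n₂ - l₃)
        * ((1 - z) * (1 + z)) := by
  have sub_ne_zero : n₁ - n₂ ≠ 0 := sub_ne_zero.2 h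
  simp only [Quadruple.ratio, Quadruple.quartic, patternQuadruple]
  field_simp
  ring

lemma half_sub_mul_patternDensity (h : Interlaces l₁ l₂ l₃ n₁ n₂) (hz : z ∈ Set.Ioo (-1) 1) :
    (n₁ - n₂) / 2 * patternDensity k x₁ x₂ x₃ l₁ l₂ l₃ (n₁ + n₂)
        ((n₁ - n₂) / 2 * z + (n₂ + n₁) / 2) ((n₁ - n₂) / 2)
      = exp (z * ((x₁ - x₂) / 2 * (n₁ - n₂))) * ((1 - z) * (1 + z)) ^ (k - 1)
          * ((n₁ - l₂) * (l₁ - n₂) * (1 + z) + (l₁ - n₁) * (l₂ - n₂) * (1 - z))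
        * (rankOneConst k * ((n₁ - l₃) * (n₂ - l₃))
          * exp ((x₁ + x₂ - 2 * x₃) * (n₁ + n₂) / 2) * Wk k l₁ l₂ l₃ n₁ n₂) := by
  have exp_eq : exp (x₁ * ((n₁ - n₂) / 2 * z + (n₂ + n₁) / 2)
        + x₂ * (n₁ + n₂ - ((n₁ - n₂) / 2 * z + (n₂ + n₁) / 2)) - x₃ * (n₁ + n₂))
      = exp (z * ((x₁ - x₂) / 2 * (n₁ - n₂))) * exp ((x₁ + x₂ - 2 * x₃) * (n₁ + n₂) / 2) := by
    rw [← exp_add]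
    ring_nf
  have ratio_rpow_eq : (patternQuadruple l₁ l₂ l₃ (n₁ + n₂)
        ((n₁ - n₂) / 2 * z + (n₂ + n₁) / 2)).ratio ((n₁ - n₂) / 2) ^ (k - 1)
      = Wk k l₁ l₂ l₃ n₁ n₂ * ((1 - z) * (1 + z)) ^ (k - 1) := by
    obtain ⟨_, _, _, _⟩ := h
    rw [ratio_patternQuadruple (by linarith), Wk, mul_rpow]
    · apply_rules [mul_nonneg] <;> linarith
    · exact mul_nonneg (by linarith [hz.2]) (by linarith [hz.1])
  rw [patternDensity, exp_eq, ratio_rpow_eq]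
  linear_combination rankOneConst k * Wk k l₁ l₂ l₃ n₁ n₂ * ((1 - z) * (1 + z)) ^ (k - 1)
    * exp (z * ((x₁ - x₂) / 2 * (n₁ - n₂))) * exp ((x₁ + x₂ - 2 * x₃) * (n₁ + n₂) / 2)
    * two_mul_half_sub_mul_density (l₁ := l₁) (l₂ := l₂) (l₃ := l₃) (z := z) h.snd_lt_fst.ne'

lemma dunklIntegrand_eq_betaLaplace :
    dunklIntegrand k x₁ x₂ x₃ l₁ l₂ l₃ n₁ n₂
      = ((n₁ - l₂) * (l₁ - n₂) * betaLaplace k (k + 1) ((x₁ - x₂) / 2 * (n₁ - n₂))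
          + (l₁ - n₁) * (l₂ - n₂) * betaLaplace (k + 1) k ((x₁ - x₂) / 2 * (n₁ - n₂)))
        * (rankOneConst k * ((n₁ - l₃) * (n₂ - l₃))
          * exp ((x₁ + x₂ - 2 * x₃) * (n₁ + n₂) / 2) * Wk k l₁ l₂ l₃ n₁ n₂) := by
  rw [dunklIntegrand, neg_div, Erk1_eq_betaLaplace, Erk1_neg_eq_betaLaplace]
  ring

lemma Wk_nonneg (h : Interlaces l₁ l₂ l₃ n₁ n₂) : 0 ≤ Wk k l₁ l₂ l₃ n₁ n₂ := by
  obtain ⟨_, _, _, _⟩ := h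
  refine rpow_nonneg ?_ _
  apply_rules [mul_nonneg] <;> linarith

lemma lintegral_patternIntegrand (h : Interlaces l₁ l₂ l₃ n₁ n₂) :
    ∫⁻ ζ, patternIntegrand k x₁ x₂ x₃ l₁ l₂ l₃ (n₁ + n₂) ζ ((n₁ - n₂) / 2)
      = ∫⁻ ζ in Set.Ioo n₂ n₁,
        ENNReal.ofReal (patternDensity k x₁ x₂ x₃ l₁ l₂ l₃ (n₁ + n₂) ζ ((n₁ - n₂) / 2)) := by
  rw [← lintegral_indicator measurableSet_Ioo]
  refine lintegral_congr fun ζ ↦ ?_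
  simp only [patternIntegrand, Set.indicator, mem_interval_patternQuadruple, h, true_and]

lemma lintegral_patternIntegrand_eq_zero (h : ¬ Interlaces l₁ l₂ l₃ n₁ n₂) :
    ∫⁻ ζ, patternIntegrand k x₁ x₂ x₃ l₁ l₂ l₃ (n₁ + n₂) ζ ((n₁ - n₂) / 2) = 0 := by
  simp [patternIntegrand, Set.indicator, mem_interval_patternQuadruple, h]

lemma ofReal_dunklIntegrand (hk : 0 < k) (h : Interlaces l₁ l₂ l₃ n₁ n₂) :
    ENNReal.ofReal (dunklIntegrand k x₁ x₂ x₃ l₁ l₂ l₃ n₁ n₂)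
      = ∫⁻ ζ, patternIntegrand k x₁ x₂ x₃ l₁ l₂ l₃ (n₁ + n₂) ζ ((n₁ - n₂) / 2) := by
  obtain ⟨_, _, _, _⟩ := id h
  have factor_nonneg : 0 ≤ rankOneConst k * ((n₁ - l₃) * (n₂ - l₃))
      * exp ((x₁ + x₂ - 2 * x₃) * (n₁ + n₂) / 2) * Wk k l₁ l₂ l₃ n₁ n₂ := by
    have := rankOneConst_pos hk
    have := Wk_nonneg (k := k) h
    have : 0 ≤ (n₁ - l₃) * (n₂ - l₃) := mul_nonneg (by linarith) (by linarith)
    positivity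
  rw [lintegral_patternIntegrand h, setLIntegral_Ioo_eq_setLIntegral_Ioo_neg_one_one h.snd_lt_fst,
    dunklIntegrand_eq_betaLaplace, ENNReal.ofReal_mul' factor_nonneg, ofReal_betaLaplace_combination
      hk (mul_nonneg (by linarith) (by linarith)) (mul_nonneg (by linarith) (by linarith)),
    ← lintegral_mul_const' _ _ ENNReal.ofReal_ne_top]
  refine setLIntegral_congr_fun measurableSet_Ioo fun z hz ↦ ?_
  rw [← ENNReal.ofReal_mul' factor_nonneg, ← ENNReal.ofReal_mul (by linarith),
    half_sub_mul_patternDensity h hz]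

lemma measurable_patternIntegrand (k x₁ x₂ x₃ l₁ l₂ l₃ : ℝ) :
    Measurable fun p : ℝ × ℝ × ℝ ↦
      patternIntegrand k x₁ x₂ x₃ l₁ l₂ l₃ p.1 p.2.1 p.2.2 := by
  have measurableSet : MeasurableSet
      {p : ℝ × ℝ × ℝ | p.2.2 ∈ (patternQuadruple l₁ l₂ l₃ p.1 p.2.1).interval} := by
    simp only [Quadruple.mem_interval_iff, patternQuadruple]
    measurability
  have measurable_density : Measurable fun p : ℝ × ℝ × ℝ ↦
      patternDensity k x₁ x₂ x₃ l₁ l₂ l₃ p.1 p.2.1 p.2.2 := by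
    simp only [patternDensity, Quadruple.density, Quadruple.ratio, Quadruple.quartic,
      patternQuadruple]
    fun_prop
  exact measurable_density.ennreal_ofReal.indicator measurableSet

lemma dunklLIntegral_eq_lintegral_patternIntegrand (hk : 0 < k) :
    dunklLIntegral k x₁ x₂ x₃ l₁ l₂ l₃
      = ∫⁻ s, ∫⁻ ζ, ∫⁻ τ, patternIntegrand k x₁ x₂ x₃ l₁ l₂ l₃ s ζ τ := by
  have measurable := measurable_patternIntegrand k x₁ x₂ x₃ l₁ l₂ l₃
  have inner (n₁ n₂ : ℝ) :
      (Set.Ioo l₃ l₂).indicator (fun n₂ ↦ (Set.Ioo l₂ l₁).indicator (fun n₁ ↦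
        ENNReal.ofReal (dunklIntegrand k x₁ x₂ x₃ l₁ l₂ l₃ n₁ n₂)) n₁) n₂
      = ∫⁻ ζ, patternIntegrand k x₁ x₂ x₃ l₁ l₂ l₃ (n₁ + n₂) ζ ((n₁ - n₂) / 2) := by
    by_cases h : Interlaces l₁ l₂ l₃ n₁ n₂
    · rw [Set.indicator_of_mem (Set.mem_Ioo.2 ⟨h.lt_snd, h.snd_lt⟩),
        Set.indicator_of_mem (Set.mem_Ioo.2 ⟨h.lt_fst, h.fst_lt⟩), ofReal_dunklIntegrand hk h]
    · rw [lintegral_patternIntegrand_eq_zero h, Set.indicator_apply_eq_zero]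
      exact fun h₂ ↦ Set.indicator_of_notMem (fun h₁ ↦ h ⟨h₁.1, h₁.2, h₂.1, h₂.2⟩) _
  calc dunklLIntegral k x₁ x₂ x₃ l₁ l₂ l₃
    _ = ∫⁻ n₂, ∫⁻ n₁, ∫⁻ ζ,
          patternIntegrand k x₁ x₂ x₃ l₁ l₂ l₃ (n₁ + n₂) ζ ((n₁ - n₂) / 2) := by
      simp only [dunklLIntegral, ← inner, ← lintegral_indicator measurableSet_Ioo]
      refine lintegral_congr fun n₂ ↦ ?_
      by_cases h₂ : n₂ ∈ Set.Ioo l₃ l₂ <;> simp [h₂]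
    _ = ∫⁻ s, ∫⁻ τ, ∫⁻ ζ, patternIntegrand k x₁ x₂ x₃ l₁ l₂ l₃ s ζ τ :=
      lintegral_lintegral_add_half_sub
        (ψ := fun s τ ↦ ∫⁻ ζ, patternIntegrand k x₁ x₂ x₃ l₁ l₂ l₃ s ζ τ) <|
        (measurable.comp (f := fun p : (ℝ × ℝ) × ℝ ↦ (p.1.1, p.2, p.1.2))
          (by fun_prop)).lintegral_prod_right'
    _ = ∫⁻ s, ∫⁻ ζ, ∫⁻ τ, patternIntegrand k x₁ x₂ x₃ l₁ l₂ l₃ s ζ τ :=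
      lintegral_congr fun s ↦ lintegral_lintegral_swap
        (measurable.comp (f := fun q : ℝ × ℝ ↦ (s, q.2, q.1)) (by fun_prop)).aemeasurable

end Representation

section Symmetry

/-- The quadruple with its two middle entries exchanged: composed with `reflect`, this is the effect
of `-w₀` on the parameters of a fibre. -/
def Quadruple.swapMiddle (e : Quadruple) : Quadruple := ⟨e.e₁, e.e₃, e.e₂, e.e₄⟩

lemma Quadruple.interval_swapMiddle (e : Quadruple) : e.swapMiddle.interval = e.interval := by
  simp only [interval, swapMiddle, max_comm]

lemma Quadruple.density_swapMiddle (e : Quadruple) : e.swapMiddle.density = e.density := by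
  ext τ
  simp only [density, swapMiddle]
  ring

lemma Quadruple.ratio_swapMiddle (e : Quadruple) : e.swapMiddle.ratio = e.ratio := by
  ext τ
  simp only [ratio, quartic, swapMiddle]
  ring

variable {k l₁ l₂ l₃ : ℝ}

lemma swapMiddle_reflect_patternQuadruple (hl : l₁ + l₂ + l₃ = 0) (s ζ : ℝ) :
    (patternQuadruple l₁ l₂ l₃ s ζ).reflect.swapMiddle
      = patternQuadruple (-l₃) (-l₂) (-l₁) ζ s := by
  simp only [patternQuadruple, Quadruple.reflect, Quadruple.swapMiddle, Quadruple.mk.injEq]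
  refine ⟨?_, ?_, ?_, ?_⟩ <;> linear_combination (-1 / 2) * hl

lemma lintegral_patternIntegrand_eq_mul (k x₁ x₂ x₃ l₁ l₂ l₃ s ζ : ℝ) :
    ∫⁻ τ, patternIntegrand k x₁ x₂ x₃ l₁ l₂ l₃ s ζ τ
      = (∫⁻ τ in (patternQuadruple l₁ l₂ l₃ s ζ).interval,
          ENNReal.ofReal ((patternQuadruple l₁ l₂ l₃ s ζ).density τ)
            * ENNReal.ofReal ((patternQuadruple l₁ l₂ l₃ s ζ).ratio τ ^ (k - 1)))
        * ENNReal.ofReal (2 * rankOneConst k * exp (x₁ * ζ + x₂ * (s - ζ) - x₃ * s)) := by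
  simp only [patternIntegrand]
  rw [lintegral_indicator (Quadruple.measurableSet_interval _),
    ← lintegral_mul_const' _ _ ENNReal.ofReal_ne_top]
  refine setLIntegral_congr_fun (Quadruple.measurableSet_interval _) fun τ hτ ↦ ?_
  have density_nonneg := Quadruple.density_nonneg hτ
  have ratio_pos := Quadruple.ratio_pos hτ
  rw [← ENNReal.ofReal_mul density_nonneg, ← ENNReal.ofReal_mul (by positivity), patternDensity]

lemma lintegral_patternIntegrand_neg (k x₁ x₂ x₃ : ℝ) (hl : l₁ + l₂ + l₃ = 0) (s ζ : ℝ) :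
    ∫⁻ τ, patternIntegrand k (-x₃) (-x₂) (-x₁) (-l₃) (-l₂) (-l₁) ζ s τ
      = ∫⁻ τ, patternIntegrand k x₁ x₂ x₃ l₁ l₂ l₃ s ζ τ := by
  rw [lintegral_patternIntegrand_eq_mul, lintegral_patternIntegrand_eq_mul,
    ← swapMiddle_reflect_patternQuadruple hl, Quadruple.interval_swapMiddle,
    Quadruple.density_swapMiddle, Quadruple.ratio_swapMiddle,
    Quadruple.lintegral_fibre_reflect _ (φ := fun r ↦ ENNReal.ofReal (r ^ (k - 1))) (by fun_prop)]
  ring_nf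

lemma dunklLIntegral_neg (hk : 0 < k) (x₁ x₂ x₃ : ℝ) (hl : l₁ + l₂ + l₃ = 0) :
    dunklLIntegral k (-x₃) (-x₂) (-x₁) (-l₃) (-l₂) (-l₁) = dunklLIntegral k x₁ x₂ x₃ l₁ l₂ l₃ := by
  have measurable : Measurable fun p : (ℝ × ℝ) × ℝ ↦
      patternIntegrand k x₁ x₂ x₃ l₁ l₂ l₃ p.1.2 p.1.1 p.2 :=
    (measurable_patternIntegrand k x₁ x₂ x₃ l₁ l₂ l₃).comp
      (f := fun p : (ℝ × ℝ) × ℝ ↦ (p.1.2, p.1.1, p.2)) (by fun_prop)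
  rw [dunklLIntegral_eq_lintegral_patternIntegrand hk,
    dunklLIntegral_eq_lintegral_patternIntegrand hk]
  simp only [lintegral_patternIntegrand_neg k x₁ x₂ x₃ hl]
  exact lintegral_lintegral_swap measurable.lintegral_prod_right'.aemeasurable

lemma measurable_dunklIntegrand (hk : 0 < k) (x₁ x₂ x₃ l₁ l₂ l₃ : ℝ) :
    Measurable fun p : ℝ × ℝ ↦ dunklIntegrand k x₁ x₂ x₃ l₁ l₂ l₃ p.1 p.2 := by
  have := (continuous_Erk1 hk ((x₁ - x₂) / 2)).measurable
  have := (continuous_Erk1 hk (-(x₁ - x₂) / 2)).measurable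
  unfold dunklIntegrand Wk
  fun_prop

lemma dunklLIntegral_eq_lintegral_flip (hk : 0 < k) (x₁ x₂ x₃ : ℝ) (hl : l₁ + l₂ + l₃ = 0) :
    dunklLIntegral k x₁ x₂ x₃ l₁ l₂ l₃
      = ∫⁻ n₂ in Set.Ioo l₃ l₂, ∫⁻ n₁ in Set.Ioo l₂ l₁, ENNReal.ofReal
          (dunklIntegrand k (-x₃) (-x₂) (-x₁) (-l₃) (-l₂) (-l₁) (-n₂) (-n₁)) := by
  have measurable : Measurable fun p : ℝ × ℝ ↦ ENNReal.ofReal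
      (dunklIntegrand k (-x₃) (-x₂) (-x₁) (-l₃) (-l₂) (-l₁) (-p.2) (-p.1)) :=
    ((measurable_dunklIntegrand hk _ _ _ _ _ _).comp
      (f := fun p : ℝ × ℝ ↦ (-p.2, -p.1)) (by fun_prop)).ennreal_ofReal
  rw [← dunklLIntegral_neg hk x₁ x₂ x₃ hl, dunklLIntegral]
  simp only [setLIntegral_Ioo_neg_neg]
  exact lintegral_lintegral_swap measurable.aemeasurable

end Symmetry

section IteratedIntegral

variable {f g : ℝ → ℝ → ℝ} {s t : Set ℝ} {C : ℝ}

lemma intervalIntegral_intervalIntegral_eq_toReal_lintegral {a b c d : ℝ} (hab : a ≤ b)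
    (hcd : c ≤ d) (hf : Measurable (Function.uncurry f))
    (nonneg : ∀ y ∈ Set.Ioo c d, ∀ x ∈ Set.Ioo a b, 0 ≤ f x y)
    (integrable : ∀ y ∈ Set.Ioo c d, IntervalIntegrable (f · y) volume a b) :
    ∫ y in c..d, ∫ x in a..b, f x y
      = (∫⁻ y in Set.Ioo c d, ∫⁻ x in Set.Ioo a b, ENNReal.ofReal (f x y)).toReal := by
  have ae_nonneg (y : ℝ) (hy : y ∈ Set.Ioo c d) : 0 ≤ᵐ[volume.restrict (Set.Ioo a b)] (f · y) :=
    ae_restrict_of_forall_mem measurableSet_Ioo (nonneg y hy)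
  have lintegral_lt_top (y : ℝ) (hy : y ∈ Set.Ioo c d) :
      ∫⁻ x in Set.Ioo a b, ENNReal.ofReal (f x y) < ⊤ :=
    ((intervalIntegrable_iff_integrableOn_Ioo_of_le hab).1 (integrable y hy)).lintegral_lt_top
  have measurable : Measurable fun y ↦ ∫⁻ x in Set.Ioo a b, ENNReal.ofReal (f x y) :=
    (hf.comp measurable_swap).ennreal_ofReal.lintegral_prod_right'
  rw [intervalIntegral.integral_of_le hcd, integral_Ioc_eq_integral_Ioo,
    ← integral_toReal measurable.aemeasurable
      (ae_restrict_of_forall_mem measurableSet_Ioo lintegral_lt_top)]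
  refine setIntegral_congr_fun measurableSet_Ioo fun y hy ↦ ?_
  rw [intervalIntegral.integral_of_le hab, integral_Ioc_eq_integral_Ioo,
    integral_eq_lintegral_of_nonneg_ae (ae_nonneg y hy)
      (hf.comp measurable_prodMk_right).aestronglyMeasurable]

lemma lintegral_lintegral_ofReal_le_mul (hC : 0 ≤ C) (hs : MeasurableSet s) (ht : MeasurableSet t)
    (h : ∀ y ∈ t, ∀ x ∈ s, f x y ≤ C * g x y) :
    ∫⁻ y in t, ∫⁻ x in s, ENNReal.ofReal (f x y)
      ≤ ENNReal.ofReal C * ∫⁻ y in t, ∫⁻ x in s, ENNReal.ofReal (g x y) := by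
  simp only [← lintegral_const_mul' _ _ ENNReal.ofReal_ne_top, ← ENNReal.ofReal_mul hC]
  exact setLIntegral_mono' ht fun y hy ↦ setLIntegral_mono' hs fun x hx ↦
    ENNReal.ofReal_le_ofReal (h y hy x hx)

lemma isComparable_toReal {F G : ENNReal} (hC : 0 ≤ C) (hFG : F ≤ ENNReal.ofReal C * G)
    (hGF : G ≤ ENNReal.ofReal C * F) : IsComparable C F.toReal G.toReal := by
  have eq_top_of_eq_top {F G : ENNReal} (h : F ≤ ENNReal.ofReal C * G) (hF : F = ⊤) : G = ⊤ := by
    by_contra hG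
    exact ENNReal.mul_ne_top ENNReal.ofReal_ne_top hG (top_le_iff.1 (hF ▸ h))
  have toReal_le {F G : ENNReal} (hG : G ≠ ⊤) (h : F ≤ ENNReal.ofReal C * G) :
      F.toReal ≤ C * G.toReal := by
    simpa [ENNReal.toReal_ofReal hC] using
      ENNReal.toReal_mono (ENNReal.mul_ne_top ENNReal.ofReal_ne_top hG) h
  by_cases hF : F = ⊤
  · simp [IsComparable, hF, eq_top_of_eq_top hFG hF]
  · exact ⟨toReal_le (fun hG ↦ hF (eq_top_of_eq_top hGF hG)) hFG, toReal_le hF hGF⟩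

lemma IsComparable.toReal_lintegral_lintegral (hC : 0 ≤ C) (hs : MeasurableSet s)
    (ht : MeasurableSet t) (h : ∀ y ∈ t, ∀ x ∈ s, IsComparable C (f x y) (g x y)) :
    IsComparable C (∫⁻ y in t, ∫⁻ x in s, ENNReal.ofReal (f x y)).toReal
      (∫⁻ y in t, ∫⁻ x in s, ENNReal.ofReal (g x y)).toReal :=
  isComparable_toReal hC
    (lintegral_lintegral_ofReal_le_mul hC hs ht fun y hy x hx ↦ (h y hy x hx).1)
    (lintegral_lintegral_ofReal_le_mul hC hs ht fun y hy x hx ↦ (h y hy x hx).2)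

end IteratedIntegral

/-- The integrand of the comparison integral in the estimate (beta−). -/
noncomputable def betaMinusIntegrand (k x₁ x₂ x₃ l₁ l₂ l₃ n₁ n₂ : ℝ) : ℝ :=
  (n₁ - n₂) * ((l₂ - l₃) - (x₂ - x₃) * (n₁ - l₂) * (n₂ - l₃))
    / (1 - (x₂ - x₃) * (n₁ - n₂)) ^ (k + 1)
  * ((l₁ - n₁) * (l₁ - n₂)) * exp ((x₃ - x₁) * n₁ + (x₂ - x₁) * n₂)
  * Wk k l₁ l₂ l₃ n₁ n₂

section Comparison

variable {k x₁ x₂ x₃ l₁ l₂ l₃ n₁ n₂ : ℝ}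

lemma dunklIntegrand_flip (k x₁ x₂ x₃ l₁ l₂ l₃ n₁ n₂ : ℝ) :
    dunklIntegrand k (-x₃) (-x₂) (-x₁) (-l₃) (-l₂) (-l₁) (-n₂) (-n₁)
      = (l₁ - n₁) * (l₁ - n₂) * exp ((x₂ + x₃ - 2 * x₁) * (n₁ + n₂) / 2) * Wk k l₁ l₂ l₃ n₁ n₂
        * ((n₂ - l₃) * (n₁ - l₂) * Erk1 k ((x₃ - x₂) / 2) (n₁ - n₂)
          + (l₂ - n₂) * (n₁ - l₃) * Erk1 k (-((x₃ - x₂) / 2)) (n₁ - n₂)) := by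
  have Wk_flip : Wk k (-l₃) (-l₂) (-l₁) (-n₂) (-n₁) = Wk k l₁ l₂ l₃ n₁ n₂ := by
    unfold Wk
    ring_nf
  rw [dunklIntegrand, Wk_flip]
  ring_nf

lemma betaMinusIntegrand_eq (h : 0 < 1 + 2 * ((x₃ - x₂) / 2 * (n₁ - n₂))) :
    betaMinusIntegrand k x₁ x₂ x₃ l₁ l₂ l₃ n₁ n₂
      = (l₁ - n₁) * (l₁ - n₂) * exp ((x₂ + x₃ - 2 * x₁) * (n₁ + n₂) / 2) * Wk k l₁ l₂ l₃ n₁ n₂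
        * ((n₂ - l₃) * (n₁ - l₂) * (exp ((x₃ - x₂) / 2 * (n₁ - n₂))
            / (1 + 2 * ((x₃ - x₂) / 2 * (n₁ - n₂))) ^ k)
          + (l₂ - n₂) * (n₁ - l₃) * (exp ((x₃ - x₂) / 2 * (n₁ - n₂))
            / (1 + 2 * ((x₃ - x₂) / 2 * (n₁ - n₂))) ^ (k + 1))) := by
  have exp_eq : exp ((x₃ - x₁) * n₁ + (x₂ - x₁) * n₂)
      = exp ((x₃ - x₂) / 2 * (n₁ - n₂)) * exp ((x₂ + x₃ - 2 * x₁) * (n₁ + n₂) / 2) := by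
    rw [← exp_add]
    ring_nf
  have one_sub_eq : 1 - (x₂ - x₃) * (n₁ - n₂) = 1 + 2 * ((x₃ - x₂) / 2 * (n₁ - n₂)) := by ring
  have numerator_eq : (n₁ - n₂) * ((l₂ - l₃) - (x₂ - x₃) * (n₁ - l₂) * (n₂ - l₃))
      = (n₂ - l₃) * (n₁ - l₂) * (1 + 2 * ((x₃ - x₂) / 2 * (n₁ - n₂)))
        + (l₂ - n₂) * (n₁ - l₃) := by
    ring
  rw [betaMinusIntegrand, exp_eq, one_sub_eq, numerator_eq, rpow_add_one h.ne']
  generalize 1 + 2 * ((x₃ - x₂) / 2 * (n₁ - n₂)) = q at h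
  have := rpow_pos_of_pos h k
  field_simp

lemma exists_isComparable_dunklIntegrand_flip (hk : 0 < k) :
    ∃ C, 0 < C ∧ ∀ l₁ l₂ l₃ x₁ x₂ x₃ n₁ n₂ : ℝ, x₂ ≤ x₃ → Interlaces l₁ l₂ l₃ n₁ n₂ →
      IsComparable C (dunklIntegrand k (-x₃) (-x₂) (-x₁) (-l₃) (-l₂) (-l₁) (-n₂) (-n₁))
        (betaMinusIntegrand k x₁ x₂ x₃ l₁ l₂ l₃ n₁ n₂) := by
  obtain ⟨C, hC, comparable⟩ := exists_isComparable_Erk1 hk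
  refine ⟨C, hC, fun l₁ l₂ l₃ x₁ x₂ x₃ n₁ n₂ hx h ↦ ?_⟩
  obtain ⟨_, _, _, _⟩ := id h
  have nonneg : 0 ≤ (x₃ - x₂) / 2 * (n₁ - n₂) := mul_nonneg (by linarith) (by linarith)
  have prefactor_nonneg : 0 ≤ (l₁ - n₁) * (l₁ - n₂)
      * exp ((x₂ + x₃ - 2 * x₁) * (n₁ + n₂) / 2) * Wk k l₁ l₂ l₃ n₁ n₂ := by
    have := Wk_nonneg (k := k) h
    have : 0 ≤ (l₁ - n₁) * (l₁ - n₂) := mul_nonneg (by linarith) (by linarith)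
    positivity
  obtain ⟨comparable_pos, comparable_neg⟩ := comparable _ _ nonneg
  rw [dunklIntegrand_flip, betaMinusIntegrand_eq (by positivity)]
  exact ((comparable_pos.const_mul (mul_nonneg (by linarith) (by linarith))).add
    (comparable_neg.const_mul (mul_nonneg (by linarith) (by linarith)))).const_mul prefactor_nonneg

lemma dunklIntegrand_nonneg (hk : 0 < k) (h : Interlaces l₁ l₂ l₃ n₁ n₂) :
    0 ≤ dunklIntegrand k x₁ x₂ x₃ l₁ l₂ l₃ n₁ n₂ := by
  have := Wk_nonneg (k := k) h
  obtain ⟨_, _, _, _⟩ := h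
  unfold dunklIntegrand
  have : 0 ≤ (n₁ - l₂) * (l₁ - n₂) := mul_nonneg (by linarith) (by linarith)
  have : 0 ≤ (l₁ - n₁) * (l₂ - n₂) := mul_nonneg (by linarith) (by linarith)
  have : 0 ≤ (n₁ - l₃) * (n₂ - l₃) := mul_nonneg (by linarith) (by linarith)
  have := Erk1_nonneg hk ((x₁ - x₂) / 2) (n₁ - n₂)
  have := Erk1_nonneg hk (-(x₁ - x₂) / 2) (n₁ - n₂)
  positivity

lemma one_sub_mul_pos (hx : x₂ ≤ x₃) (hn : n₂ ≤ n₁) : 0 < 1 - (x₂ - x₃) * (n₁ - n₂) := by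
  nlinarith [mul_nonneg (sub_nonneg.2 hx) (sub_nonneg.2 hn)]

lemma betaMinusIntegrand_nonneg (hx : x₂ ≤ x₃) (h : Interlaces l₁ l₂ l₃ n₁ n₂) :
    0 ≤ betaMinusIntegrand k x₁ x₂ x₃ l₁ l₂ l₃ n₁ n₂ := by
  have := Wk_nonneg (k := k) h
  have := one_sub_mul_pos hx h.snd_lt_fst.le
  obtain ⟨_, _, _, _⟩ := h
  have numerator_nonneg : 0 ≤ (l₂ - l₃) - (x₂ - x₃) * (n₁ - l₂) * (n₂ - l₃) := by
    have : 0 ≤ (x₃ - x₂) * (n₁ - l₂) * (n₂ - l₃) := by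
      apply_rules [mul_nonneg] <;> linarith
    linarith
  have : 0 ≤ n₁ - n₂ := by linarith
  have : 0 ≤ (l₁ - n₁) * (l₁ - n₂) := mul_nonneg (by linarith) (by linarith)
  unfold betaMinusIntegrand
  positivity

lemma intervalIntegrable_mul_Wk (hk : 0 < k) (hl : l₂ < l₁) (hn₂ : n₂ ∈ Set.Ioo l₃ l₂)
    {f : ℝ → ℝ} (hf : ContinuousOn f (Set.Icc l₂ l₁)) :
    IntervalIntegrable (fun n₁ ↦ f n₁ * Wk k l₁ l₂ l₃ n₁ n₂) volume l₂ l₁ := by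
  obtain ⟨_, _⟩ := hn₂
  have continuousOn : ContinuousOn (fun n₁ ↦
      f n₁ * ((l₁ - n₂) * (l₂ - n₂) * (n₁ - l₃) * (n₂ - l₃)) ^ (k - 1)) (Set.uIcc l₂ l₁) := by
    rw [Set.uIcc_of_le hl.le]
    refine hf.mul (.rpow_const (by fun_prop) fun n₁ hn₁ ↦ .inl (ne_of_gt ?_))
    have := hn₁.1
    apply_rules [mul_pos] <;> linarith
  refine ((intervalIntegrable_beta_weight hk hk hl).continuousOn_mul continuousOn).congr
    fun n₁ hn₁ ↦ ?_
  rw [Set.uIoc_of_le hl.le] at hn₁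
  have := hn₁.1
  have := hn₁.2
  simp only [Wk]
  rw [mul_assoc, ← mul_rpow (by linarith) (by linarith), ← mul_rpow]
  · ring_nf
  · apply_rules [mul_nonneg] <;> linarith
  · apply_rules [mul_nonneg] <;> linarith

lemma intervalIntegrable_dunklIntegrand (hk : 0 < k) (hl : l₂ < l₁) (hn₂ : n₂ ∈ Set.Ioo l₃ l₂) :
    IntervalIntegrable (fun n₁ ↦ dunklIntegrand k x₁ x₂ x₃ l₁ l₂ l₃ n₁ n₂) volume l₂ l₁ := by
  have := continuous_Erk1 hk ((x₁ - x₂) / 2)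
  have := continuous_Erk1 hk (-(x₁ - x₂) / 2)
  unfold dunklIntegrand
  exact intervalIntegrable_mul_Wk hk hl hn₂ (by fun_prop)

lemma intervalIntegrable_betaMinusIntegrand (hk : 0 < k) (hx : x₂ ≤ x₃) (hl : l₂ < l₁)
    (hn₂ : n₂ ∈ Set.Ioo l₃ l₂) :
    IntervalIntegrable (fun n₁ ↦ betaMinusIntegrand k x₁ x₂ x₃ l₁ l₂ l₃ n₁ n₂) volume l₂ l₁ := by
  have denominator_pos (n₁ : ℝ) (hn₁ : n₁ ∈ Set.Icc l₂ l₁) : 0 < 1 - (x₂ - x₃) * (n₁ - n₂) :=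
    one_sub_mul_pos hx (hn₂.2.le.trans hn₁.1)
  have continuousOn : ContinuousOn (fun n₁ ↦ (n₁ - n₂)
      * ((l₂ - l₃) - (x₂ - x₃) * (n₁ - l₂) * (n₂ - l₃)) / (1 - (x₂ - x₃) * (n₁ - n₂)) ^ (k + 1))
      (Set.Icc l₂ l₁) :=
    .div (by fun_prop)
      (.rpow_const (by fun_prop) fun n₁ hn₁ ↦ .inl (denominator_pos n₁ hn₁).ne')
      fun n₁ hn₁ ↦ (rpow_pos_of_pos (denominator_pos n₁ hn₁) _).ne'
  unfold betaMinusIntegrand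
  exact intervalIntegrable_mul_Wk hk hl hn₂ (by fun_prop)

lemma measurable_betaMinusIntegrand (k x₁ x₂ x₃ l₁ l₂ l₃ : ℝ) :
    Measurable fun p : ℝ × ℝ ↦ betaMinusIntegrand k x₁ x₂ x₃ l₁ l₂ l₃ p.1 p.2 := by
  unfold betaMinusIntegrand Wk
  fun_prop

lemma intervalIntegral_dunklIntegrand (hk : 0 < k) (h₁₂ : l₂ < l₁) (h₂₃ : l₃ < l₂) :
    ∫ n₂ in l₃..l₂, ∫ n₁ in l₂..l₁, dunklIntegrand k x₁ x₂ x₃ l₁ l₂ l₃ n₁ n₂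
      = (dunklLIntegral k x₁ x₂ x₃ l₁ l₂ l₃).toReal :=
  intervalIntegral_intervalIntegral_eq_toReal_lintegral h₁₂.le h₂₃.le
    (measurable_dunklIntegrand hk ..)
    (fun _ hn₂ _ hn₁ ↦ dunklIntegrand_nonneg hk ⟨hn₁.1, hn₁.2, hn₂.1, hn₂.2⟩)
    fun _ ↦ intervalIntegrable_dunklIntegrand hk h₁₂

lemma intervalIntegral_betaMinusIntegrand (hk : 0 < k) (h₁₂ : l₂ < l₁) (h₂₃ : l₃ < l₂)
    (hx : x₂ ≤ x₃) :
    ∫ n₂ in l₃..l₂, ∫ n₁ in l₂..l₁, betaMinusIntegrand k x₁ x₂ x₃ l₁ l₂ l₃ n₁ n₂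
      = (∫⁻ n₂ in Set.Ioo l₃ l₂, ∫⁻ n₁ in Set.Ioo l₂ l₁,
          ENNReal.ofReal (betaMinusIntegrand k x₁ x₂ x₃ l₁ l₂ l₃ n₁ n₂)).toReal :=
  intervalIntegral_intervalIntegral_eq_toReal_lintegral h₁₂.le h₂₃.le
    (measurable_betaMinusIntegrand ..)
    (fun _ hn₂ _ hn₁ ↦ betaMinusIntegrand_nonneg hx ⟨hn₁.1, hn₁.2, hn₂.1, hn₂.2⟩)
    fun _ ↦ intervalIntegrable_betaMinusIntegrand hk hx h₁₂

lemma exists_isComparable_intervalIntegral_dunklIntegrand (hk : 0 < k) :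
    ∃ C, 0 < C ∧ ∀ l₁ l₂ l₃ x₁ x₂ x₃ : ℝ, l₁ + l₂ + l₃ = 0 → l₂ < l₁ → l₃ < l₂ → x₂ ≤ x₃ →
      IsComparable C
        (∫ n₂ in l₃..l₂, ∫ n₁ in l₂..l₁, dunklIntegrand k x₁ x₂ x₃ l₁ l₂ l₃ n₁ n₂)
        (∫ n₂ in l₃..l₂, ∫ n₁ in l₂..l₁, betaMinusIntegrand k x₁ x₂ x₃ l₁ l₂ l₃ n₁ n₂) := by
  obtain ⟨C, hC, comparable⟩ := exists_isComparable_dunklIntegrand_flip hk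
  refine ⟨C, hC, fun l₁ l₂ l₃ x₁ x₂ x₃ hl h₁₂ h₂₃ hx ↦ ?_⟩
  rw [intervalIntegral_dunklIntegrand hk h₁₂ h₂₃, dunklLIntegral_eq_lintegral_flip hk x₁ x₂ x₃ hl,
    intervalIntegral_betaMinusIntegrand hk h₁₂ h₂₃ hx]
  exact .toReal_lintegral_lintegral hC.le measurableSet_Ioo measurableSet_Ioo
    fun n₂ hn₂ n₁ hn₁ ↦ comparable _ _ _ _ _ _ _ _ hx ⟨hn₁.1, hn₁.2, hn₂.1, hn₂.2⟩

lemma Vlam_rpow_mul_EkA2 (hk : 0 < k) (h₁₂ : l₂ < l₁) (h₂₃ : l₃ < l₂) :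
    Vlam l₁ l₂ l₃ ^ (2 * k) * EkA2 k x₁ x₂ x₃ l₁ l₂ l₃
      = 3 * Gamma (3 * k) / Gamma k ^ 2
        * ∫ n₂ in l₃..l₂, ∫ n₁ in l₂..l₁, dunklIntegrand k x₁ x₂ x₃ l₁ l₂ l₃ n₁ n₂ := by
  have Vlam_pos : 0 < Vlam l₁ l₂ l₃ := by
    unfold Vlam
    apply_rules [mul_pos] <;> linarith
  have rpow_ne_zero := (rpow_pos_of_pos Vlam_pos (2 * k)).ne'
  have Gamma_ne_zero := (Gamma_pos_of_pos hk).ne'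
  unfold EkA2 dunklIntegrand
  rw [← mul_assoc]
  congr 1
  field_simp

end Comparison

/-- Lemma 5.x: two-sided estimate for `V(λ)^{2k} E_k(X,λ)`. -/
theorem lemma_beta_minus (k : ℝ) (hk : 0 < k) :
    ∃ C : ℝ, 0 < C ∧ ∀ l1 l2 l3 x1 x2 x3 : ℝ,
      l1 + l2 + l3 = 0 →
      l2 < l1 →
      l3 < l2 →
      x1 + x2 + x3 = 0 →
      x2 ≤ x3 →
      (C⁻¹ * (∫ n2 in l3..l2, ∫ n1 in l2..l1,
          (n1 - n2) * ((l2 - l3) - (x2 - x3) * (n1 - l2) * (n2 - l3))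
            / (1 - (x2 - x3) * (n1 - n2)) ^ (k + 1)
          * ((l1 - n1) * (l1 - n2)) * Real.exp ((x3 - x1) * n1 + (x2 - x1) * n2)
          * Wk k l1 l2 l3 n1 n2)
        ≤ Vlam l1 l2 l3 ^ (2 * k) * EkA2 k x1 x2 x3 l1 l2 l3 ∧
      Vlam l1 l2 l3 ^ (2 * k) * EkA2 k x1 x2 x3 l1 l2 l3
        ≤ C * (∫ n2 in l3..l2, ∫ n1 in l2..l1,
          (n1 - n2) * ((l2 - l3) - (x2 - x3) * (n1 - l2) * (n2 - l3))
            / (1 - (x2 - x3) * (n1 - n2)) ^ (k + 1)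
          * ((l1 - n1) * (l1 - n2)) * Real.exp ((x3 - x1) * n1 + (x2 - x1) * n2)
          * Wk k l1 l2 l3 n1 n2)) := by
  obtain ⟨C, hC, comparable⟩ := exists_isComparable_intervalIntegral_dunklIntegrand hk
  have normalization_pos : 0 < 3 * Gamma (3 * k) / Gamma k ^ 2 := by
    have := Gamma_pos_of_pos hk
    have := Gamma_pos_of_pos (mul_pos three_pos hk)
    positivity
  refine ⟨C * max (3 * Gamma (3 * k) / Gamma k ^ 2) (3 * Gamma (3 * k) / Gamma k ^ 2)⁻¹,
    by positivity, fun l1 l2 l3 x1 x2 x3 hl h₁₂ h₂₃ _ hx ↦ ?_⟩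
  rw [inv_mul_le_iff₀ (by positivity), and_comm, Vlam_rpow_mul_EkA2 hk h₁₂ h₂₃]
  refine (comparable l1 l2 l3 x1 x2 x3 hl h₁₂ h₂₃ hx).const_mul_left normalization_pos hC ?_ ?_
  · exact ENNReal.toReal_nonneg.trans_eq (intervalIntegral_dunklIntegrand hk h₁₂ h₂₃).symm
  · exact ENNReal.toReal_nonneg.trans_eq (intervalIntegral_betaMinusIntegrand hk h₁₂ h₂₃ hx).symm
end

section
/- (Corollary 4.3, heat kernel estimate, case X,Y in the positive chamber.) Uniformly over all t>0 and all X, Y ∈ C⁺, one has t^{−1−3k} e^{−(|X|²+|Y|²)/(4t)} E_k(X, Y/(2t)) ≍ t^{−1} e^{−|X−Y|²/(4t)} / [ (t+α_X α_Y)^k (t+β_X β_Y)^k (t+γ_X γ_Y)^k ]; that is, the Dunkl heat kernel p_t(X,Y), which is a fixed positive constant multiple of the left-hand side, satisfies the corresponding two-sided bound. -/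
open Real MeasureTheory

/-!
Put `α_λ = λ₁ - λ₂`, `u = λ₁ - ν₁`, `w = λ₂ - ν₂`. The rank-one kernel has the size
`E_k^{rk1}(x, v) ≍ exp (x v) / (1 + x v) ^ k` for `x v ≥ 0`, and inserting this into the
`A₂` kernel squeezes its integrand, after factoring out `exp (α_X α_λ / 2)`, between products of a
function of `u` and a function of `w`. Each factor is a Laplace-type density
`u ^ (p - 1) (A - u) ^ σ exp (-(r u))` times a weight of power growth, so its mass concentrates on
an interval of effective length `A / (1 + r A)` and its integral is read off there. The lower and
upper products have different `u`-factors, but their masses agree up to a constant. What remains is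
an algebraic comparison of the resulting rational function of the root values with
`∏ 1 / (1 + α_X α_λ)`, the product being over the positive roots. The heat kernel estimate is the
case `λ = Y / (2t)`, by `|X - Y|² = |X|² + |Y|² - 2 ⟨X, Y⟩`.
-/

/-! ### Two-sided bounds, effective lengths and weights of power growth -/

theorem exists_one_add_rpow_mul_exp_neg_le {p : ℝ} (hp : 0 ≤ p) :
    ∃ C : ℝ, 0 < C ∧ ∀ x, 0 ≤ x → (1 + x) ^ p * exp (-x) ≤ C * exp (-(x / 2)) := by
  refine ⟨(2 * p + 1) ^ p, by positivity, fun x hx ↦ ?_⟩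
  have hbase : 1 + x ≤ (2 * p + 1) * exp (x / (2 * p + 1)) :=
    calc 1 + x ≤ (2 * p + 1) * (x / (2 * p + 1) + 1) := by field_simp; linarith
      _ ≤ (2 * p + 1) * exp (x / (2 * p + 1)) := by gcongr; exact add_one_le_exp _
  have hexponent : x / (2 * p + 1) * p ≤ x / 2 := by
    rw [div_mul_eq_mul_div, div_le_div_iff₀ (by positivity) two_pos]
    linarith
  calc (1 + x) ^ p * exp (-x)
      ≤ ((2 * p + 1) * exp (x / (2 * p + 1))) ^ p * exp (-x) := by gcongr
    _ = (2 * p + 1) ^ p * exp (x / (2 * p + 1) * p - x) := by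
        rw [mul_rpow (by positivity) (exp_pos _).le, ← exp_mul, mul_assoc, ← exp_add,
          sub_eq_add_neg]
    _ ≤ (2 * p + 1) ^ p * exp (-(x / 2)) := by gcongr; linarith

/-- `f ≍ g` with an explicit constant `C`. A uniform estimate `f p ≍ g p` over parameters `p` is
stated as `∃ C, 0 < C ∧ ∀ p, ComparableWith C (f p) (g p)`, in the spirit of
`Asymptotics.IsBigOWith`. -/
def ComparableWith (C f g : ℝ) : Prop := C⁻¹ * g ≤ f ∧ f ≤ C * g

namespace ComparableWith

variable {C D c f g h f' g' s : ℝ}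

theorem of_le_of_le (hc : 0 < c) (hg : 0 ≤ g) (hcf : c * g ≤ f) (hfC : f ≤ C * g) :
    ComparableWith (max c⁻¹ C) f g := by
  have hmax : (max c⁻¹ C)⁻¹ ≤ c := inv_le_of_inv_le₀ hc (le_max_left _ _)
  exact ⟨(mul_le_mul_of_nonneg_right hmax hg).trans hcf,
    hfC.trans (mul_le_mul_of_nonneg_right (le_max_right _ _) hg)⟩

theorem const_mul_self (hc : 0 < c) (hf : 0 ≤ f) : ComparableWith (max c⁻¹ c) (c * f) f :=
  of_le_of_le hc hf le_rfl le_rfl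

theorem trans (hC : 0 ≤ C) (hfg : ComparableWith C f g) (hgh : ComparableWith D g h) :
    ComparableWith (C * D) f h := by
  constructor
  · calc (C * D)⁻¹ * h = C⁻¹ * (D⁻¹ * h) := by rw [mul_inv, mul_assoc]
      _ ≤ C⁻¹ * g := mul_le_mul_of_nonneg_left hgh.1 (inv_nonneg.2 hC)
      _ ≤ f := hfg.1
  · calc f ≤ C * g := hfg.2
      _ ≤ C * (D * h) := mul_le_mul_of_nonneg_left hgh.2 hC
      _ = C * D * h := (mul_assoc _ _ _).symm

theorem mul_left (hc : 0 ≤ c) (hfg : ComparableWith C f g) :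
    ComparableWith C (c * f) (c * g) :=
  ⟨(mul_left_comm _ _ _).trans_le (mul_le_mul_of_nonneg_left hfg.1 hc),
    (mul_le_mul_of_nonneg_left hfg.2 hc).trans_eq (mul_left_comm _ _ _)⟩

theorem mul (hC : 0 ≤ C) (hD : 0 ≤ D) (hg : 0 ≤ g) (hg' : 0 ≤ g')
    (hfg : ComparableWith C f g) (hfg' : ComparableWith D f' g') :
    ComparableWith (C * D) (f * f') (g * g') := by
  have hf : 0 ≤ f := le_trans (by positivity) hfg.1
  have hf' : 0 ≤ f' := le_trans (by positivity) hfg'.1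
  constructor
  · calc (C * D)⁻¹ * (g * g') = (C⁻¹ * g) * (D⁻¹ * g') := by rw [mul_inv]; ring
      _ ≤ f * f' := mul_le_mul hfg.1 hfg'.1 (by positivity) hf
  · calc f * f' ≤ (C * g) * (D * g') := mul_le_mul hfg.2 hfg'.2 hf' (by positivity)
      _ = C * D * (g * g') := mul_mul_mul_comm _ _ _ _

theorem inv (hC : 0 < C) (hg : 0 < g) (hfg : ComparableWith C f g) :
    ComparableWith C f⁻¹ g⁻¹ := by
  have hf : 0 < f := lt_of_lt_of_le (by positivity) hfg.1
  constructor
  · rw [← mul_inv]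
    exact inv_anti₀ hf hfg.2
  · rw [inv_le_comm₀ hf (by positivity), mul_inv, inv_inv]
    exact hfg.1

theorem rpow (hC : 0 ≤ C) (hg : 0 ≤ g) (hs : 0 ≤ s) (hfg : ComparableWith C f g) :
    ComparableWith (C ^ s) (f ^ s) (g ^ s) := by
  have hf : 0 ≤ f := le_trans (by positivity) hfg.1
  constructor
  · rw [← inv_rpow hC, ← mul_rpow (inv_nonneg.2 hC) hg]
    exact rpow_le_rpow (by positivity) hfg.1 hs
  · rw [← mul_rpow hC hg]
    exact rpow_le_rpow hf hfg.2 hs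

end ComparableWith

/-- The effective length of `[0, A]` under the weight `exp (-(r * u))`; it is comparable to
`min A r⁻¹`, but rational in `r` and `A`. -/
noncomputable def decayScale (r A : ℝ) : ℝ := A / (1 + r * A)

namespace decayScale

variable {r A A' c u : ℝ}

theorem pos (hr : 0 ≤ r) (hA : 0 < A) : 0 < decayScale r A := by
  unfold decayScale; positivity

theorem le_self (hr : 0 ≤ r) (hA : 0 < A) : decayScale r A ≤ A :=
  div_le_self hA.le (le_add_of_nonneg_right (by positivity))

theorem mul_le_one (hr : 0 ≤ r) (hA : 0 < A) : r * decayScale r A ≤ 1 := by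
  rw [decayScale, ← mul_div_assoc, div_le_one (by positivity)]
  linarith

theorem inv_eq (hA : 0 < A) : (decayScale r A)⁻¹ = r + A⁻¹ := by
  rw [decayScale, inv_div]
  field_simp
  ring

theorem mono (hr : 0 ≤ r) (hA : 0 < A) (h : A ≤ A') : decayScale r A ≤ decayScale r A' := by
  have hA' : 0 < A' := hA.trans_le h
  rw [← inv_le_inv₀ (pos hr hA') (pos hr hA), inv_eq hA', inv_eq hA]
  gcongr

theorem mul_le_mul (hr : 0 ≤ r) (hA : 0 < A) (hc : 1 ≤ c) :
    decayScale r (c * A) ≤ c * decayScale r A := by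
  unfold decayScale
  rw [← mul_div_assoc]
  gcongr
  exact le_mul_of_one_le_left hA.le hc

theorem exp_neg_mul_le (hA : 0 < A) (hu : u ≤ A) :
    exp (-(r * u)) ≤ exp 1 * exp (-(u / decayScale r A)) := by
  have hle : A⁻¹ * u ≤ 1 := by rwa [inv_mul_le_iff₀ hA, mul_one]
  rw [← exp_add, exp_le_exp, div_eq_mul_inv, inv_eq hA]
  linarith

end decayScale

/-- A nonnegative increasing weight on `(0, ∞)` that grows at most like the power `m`: dilating
the argument by `c ≥ 1` costs at most a factor `c ^ m`. -/
structure HasPowerGrowth (m : ℝ) (φ : ℝ → ℝ) : Prop where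
  nonneg : ∀ u, 0 < u → 0 ≤ φ u
  monotoneOn : MonotoneOn φ (Set.Ioi 0)
  map_mul_le : ∀ c u, 1 ≤ c → 0 < u → φ (c * u) ≤ c ^ m * φ u

namespace HasPowerGrowth

variable {m s r A q u : ℝ} {φ : ℝ → ℝ}

theorem one : HasPowerGrowth 0 fun _ ↦ 1 where
  nonneg _ _ := zero_le_one
  monotoneOn _ _ _ _ _ := le_rfl
  map_mul_le c _ _ _ := by simp

theorem rpow (hφ : HasPowerGrowth m φ) (hs : 0 ≤ s) :
    HasPowerGrowth (m * s) fun u ↦ φ u ^ s where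
  nonneg u hu := rpow_nonneg (hφ.nonneg u hu) s
  monotoneOn u hu v hv huv := rpow_le_rpow (hφ.nonneg u hu) (hφ.monotoneOn hu hv huv) hs
  map_mul_le c u hc hu := by
    have hc0 : 0 ≤ c := zero_le_one.trans hc
    rw [rpow_mul hc0, ← mul_rpow (rpow_nonneg hc0 m) (hφ.nonneg u hu)]
    exact rpow_le_rpow (hφ.nonneg _ (by positivity)) (hφ.map_mul_le c u hc hu) hs

theorem rpow_mul (hφ : HasPowerGrowth m φ) (hs : 0 ≤ s) :
    HasPowerGrowth (s + m) fun u ↦ u ^ s * φ u where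
  nonneg u hu := mul_nonneg (rpow_nonneg hu.le s) (hφ.nonneg u hu)
  monotoneOn u hu v hv huv := mul_le_mul (rpow_le_rpow (le_of_lt hu) huv hs)
    (hφ.monotoneOn hu hv huv) (hφ.nonneg u hu) (rpow_nonneg (le_of_lt hv) s)
  map_mul_le c u hc hu := by
    have hc0 : 0 < c := zero_lt_one.trans_le hc
    calc (c * u) ^ s * φ (c * u) ≤ (c * u) ^ s * (c ^ m * φ u) := by
          gcongr; exact hφ.map_mul_le c u hc hu
      _ = c ^ (s + m) * (u ^ s * φ u) := by
          rw [mul_rpow hc0.le hu.le, rpow_add hc0]; ring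

theorem one_add_const_mul (hr : 0 ≤ r) : HasPowerGrowth 1 fun u ↦ 1 + r * u where
  nonneg u hu := by positivity
  monotoneOn u _ v _ huv := by dsimp only; gcongr
  map_mul_le c u hc _ := by rw [rpow_one]; linarith

theorem decayScale_add (hr : 0 ≤ r) (hA : 0 ≤ A) :
    HasPowerGrowth 1 fun u ↦ decayScale r (A + u) where
  nonneg u hu := (decayScale.pos hr (by positivity)).le
  monotoneOn u hu v _ huv := decayScale.mono hr (add_pos_of_nonneg_of_pos hA hu) (by gcongr)
  map_mul_le c u hc hu := by
    have hcA : A + c * u ≤ c * (A + u) := by linarith [le_mul_of_one_le_left hA hc]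
    rw [rpow_one]
    exact (decayScale.mono hr (by positivity) hcA).trans
      (decayScale.mul_le_mul hr (by positivity) hc)

theorem le_one_add_div_rpow_mul (hφ : HasPowerGrowth m φ) (hq : 0 < q) (hu : 0 < u) :
    φ u ≤ (1 + u / q) ^ m * φ q := by
  have hle : u ≤ (1 + u / q) * q := by rw [one_add_mul, div_mul_cancel₀ u hq.ne']; linarith
  exact (hφ.monotoneOn hu (hu.trans_le hle) hle).trans
    (hφ.map_mul_le _ _ (le_add_of_nonneg_right (by positivity)) hq)

theorem div_rpow_mul_le (hφ : HasPowerGrowth m φ) (hu : 0 < u) (huq : u ≤ q) :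
    (u / q) ^ m * φ q ≤ φ u := by
  have hq : 0 < q := hu.trans_le huq
  have hle : φ (q / u * u) ≤ (q / u) ^ m * φ u := hφ.map_mul_le _ _ ((one_le_div hu).2 huq) hu
  rw [div_mul_cancel₀ q hu.ne'] at hle
  calc (u / q) ^ m * φ q ≤ (u / q) ^ m * ((q / u) ^ m * φ u) := by gcongr
    _ = φ u := by
      rw [← mul_assoc, ← mul_rpow (by positivity) (by positivity),
        div_mul_div_cancel₀ hq.ne', div_self hu.ne', one_rpow, one_mul]

theorem exists_exp_neg_mul_le (hm : 0 ≤ m) :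
    ∃ C : ℝ, 0 < C ∧ ∀ r A φ u, 0 ≤ r → HasPowerGrowth m φ → 0 < u → u ≤ A →
      exp (-(r * u)) * φ u ≤
        C * φ (decayScale r A) * exp (-(1 / (2 * decayScale r A) * u)) := by
  obtain ⟨C, hC, hexp⟩ := exists_one_add_rpow_mul_exp_neg_le hm
  refine ⟨exp 1 * C, by positivity, fun r A φ u hr hφ hu huA ↦ ?_⟩
  have hA : 0 < A := hu.trans_le huA
  set q := decayScale r A
  have hq : 0 < q := decayScale.pos hr hA
  have hφq : 0 ≤ φ q := hφ.nonneg q hq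
  calc exp (-(r * u)) * φ u
      ≤ (exp 1 * exp (-(u / q))) * ((1 + u / q) ^ m * φ q) :=
        mul_le_mul (decayScale.exp_neg_mul_le hA huA) (hφ.le_one_add_div_rpow_mul hq hu)
          (hφ.nonneg u hu) (by positivity)
    _ = exp 1 * φ q * ((1 + u / q) ^ m * exp (-(u / q))) := by ring
    _ ≤ exp 1 * φ q * (C * exp (-(u / q / 2))) := by
        exact mul_le_mul_of_nonneg_left (hexp _ (by positivity)) (by positivity)
    _ = exp 1 * C * φ q * exp (-(1 / (2 * q) * u)) := by ring_nf

end HasPowerGrowth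

/-! ### Laplace-type integrals on an interval -/

theorem intervalIntegrable_sub_rpow {A σ : ℝ} (hσ : -1 < σ) :
    IntervalIntegrable (fun u ↦ (A - u) ^ σ) volume 0 A := by
  simpa using
    ((intervalIntegral.intervalIntegrable_rpow' (a := 0) (b := A) hσ).comp_sub_left A).symm

theorem integral_sub_rpow {A σ : ℝ} (hσ : -1 < σ) :
    ∫ u in (0 : ℝ)..A, (A - u) ^ σ = A ^ (σ + 1) / (σ + 1) := by
  rw [intervalIntegral.integral_comp_sub_left (fun u ↦ u ^ σ) A, integral_rpow (Or.inl hσ),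
    sub_self, sub_zero, zero_rpow (by linarith), sub_zero]

theorem intervalIntegrable_rpow_mul_exp_neg_mul {p r A : ℝ} (hp : 0 < p) :
    IntervalIntegrable (fun u ↦ u ^ (p - 1) * exp (-(r * u))) volume 0 A :=
  (intervalIntegral.intervalIntegrable_rpow' (by linarith)).mul_continuousOn (by fun_prop)

theorem integrableOn_rpow_mul_exp_neg_mul_Ioi {p r : ℝ} (hp : 0 < p) (hr : 0 < r) :
    IntegrableOn (fun u : ℝ ↦ u ^ (p - 1) * exp (-(r * u))) (Set.Ioi 0) := by
  simpa using integrableOn_rpow_mul_exp_neg_mul_rpow (p := 1) (s := p - 1) (b := r)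
    (by linarith) one_pos hr

theorem integral_rpow_mul_exp_neg_mul_le {p r A : ℝ} (hp : 0 < p) (hr : 0 < r) (hA : 0 ≤ A) :
    ∫ u in (0 : ℝ)..A, u ^ (p - 1) * exp (-(r * u)) ≤ (1 / r) ^ p * Gamma p := by
  rw [← integral_rpow_mul_exp_neg_mul_Ioi hp hr, intervalIntegral.integral_of_le hA]
  refine setIntegral_mono_set (integrableOn_rpow_mul_exp_neg_mul_Ioi hp hr) ?_
    Set.Ioc_subset_Ioi_self.eventuallyLE
  filter_upwards [ae_restrict_mem measurableSet_Ioi] with u (hu : 0 < u)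
  simp only [Pi.zero_apply]
  positivity

theorem intervalIntegrable_of_nonneg_of_le {a b : ℝ} {f g : ℝ → ℝ} (hab : a ≤ b)
    (hf : AEMeasurable f (volume.restrict (Set.Ioo a b)))
    (hf0 : ∀ u ∈ Set.Ioo a b, 0 ≤ f u) (hfg : ∀ u ∈ Set.Ioo a b, f u ≤ g u)
    (hg : IntervalIntegrable g volume a b) : IntervalIntegrable f volume a b := by
  rw [intervalIntegrable_iff_integrableOn_Ioo_of_le hab] at hg ⊢
  refine Integrable.mono' hg hf.aestronglyMeasurable ?_
  filter_upwards [ae_restrict_mem measurableSet_Ioo] with u hu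
  rw [norm_of_nonneg (hf0 u hu)]
  exact hfg u hu

theorem intervalIntegral_nonneg_of_Ioo {a b : ℝ} {f : ℝ → ℝ} (hab : a ≤ b)
    (hf : ∀ u ∈ Set.Ioo a b, 0 ≤ f u) : 0 ≤ ∫ u in a..b, f u := by
  rw [intervalIntegral.integral_of_le hab, integral_Ioc_eq_integral_Ioo]
  exact setIntegral_nonneg measurableSet_Ioo hf

/-- The density on `(0, A)` whose total mass is, up to a Beta factor and a power of `A`, Kummer's
function `M (p, p + σ + 1, -r A)`. -/
noncomputable def kummerDensity (p σ r A u : ℝ) : ℝ :=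
  u ^ (p - 1) * (A - u) ^ σ * exp (-(r * u))

namespace kummerDensity

variable {p σ m r A u : ℝ} {φ : ℝ → ℝ}

theorem nonneg (hu : u ∈ Set.Ioo 0 A) : 0 ≤ kummerDensity p σ r A u := by
  have hu0 : 0 < u := hu.1
  have huA : 0 < A - u := sub_pos.2 hu.2
  unfold kummerDensity
  positivity

theorem add_exponent {s : ℝ} (hu : u < A) :
    kummerDensity p (σ + s) r A u = (A - u) ^ s * kummerDensity p σ r A u := by
  rw [kummerDensity, kummerDensity, rpow_add (sub_pos.2 hu)]
  ring

theorem measurable : Measurable (kummerDensity p σ r A) := by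
  unfold kummerDensity
  fun_prop

-- Writing `A = u + (A - u)` trades the mass between the two endpoint singularities, so that
-- each of the two resulting terms is singular at one endpoint only.
theorem mul_rpow_mul_rpow_le (hσ : -1 < σ) (hu : u ∈ Set.Ioo 0 A) :
    A * (u ^ (p - 1) * (A - u) ^ σ) ≤ u ^ p * (A - u) ^ σ + A ^ (σ + 1) * u ^ (p - 1) := by
  have hu0 : 0 < u := hu.1
  have huA : 0 < A - u := sub_pos.2 hu.2
  calc A * (u ^ (p - 1) * (A - u) ^ σ)
      = u ^ (p - 1 + 1) * (A - u) ^ σ + (A - u) ^ (σ + 1) * u ^ (p - 1) := by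
        rw [rpow_add_one hu0.ne', rpow_add_one huA.ne']; ring
    _ ≤ u ^ p * (A - u) ^ σ + A ^ (σ + 1) * u ^ (p - 1) := by
        rw [sub_add_cancel]
        gcongr <;> linarith

theorem exists_mul_le (hp : 0 < p) (hσ : -1 < σ) (hm : 0 ≤ m) :
    ∃ C : ℝ, 0 < C ∧ ∀ r A φ u, 0 ≤ r → HasPowerGrowth m φ → u ∈ Set.Ioo 0 A →
      A * (kummerDensity p σ r A u * φ u) ≤ C * φ (decayScale r A) *
        (decayScale r A ^ p * (A - u) ^ σ +
          A ^ (σ + 1) * (u ^ (p - 1) * exp (-(1 / (2 * decayScale r A) * u)))) := by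
  obtain ⟨C₁, hC₁, hlow⟩ := HasPowerGrowth.exists_exp_neg_mul_le (add_nonneg hp.le hm)
  obtain ⟨C₂, hC₂, hhigh⟩ := HasPowerGrowth.exists_exp_neg_mul_le hm
  refine ⟨C₁ + C₂, by positivity, fun r A φ u hr hφ hu ↦ ?_⟩
  have hu0 : 0 < u := hu.1
  have huA : 0 < A - u := sub_pos.2 hu.2
  have hA : 0 < A := hu0.trans hu.2
  set q := decayScale r A
  have hq : 0 < q := decayScale.pos hr hA
  have hφu : 0 ≤ φ u := hφ.nonneg u hu0
  have hφq : 0 ≤ φ q := hφ.nonneg q hq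
  set E := exp (-(1 / (2 * q) * u))
  have hE : E ≤ 1 := exp_le_one_iff.2 (neg_nonpos.2 (by positivity))
  calc A * (kummerDensity p σ r A u * φ u)
      = A * (u ^ (p - 1) * (A - u) ^ σ) * (exp (-(r * u)) * φ u) := by
        unfold kummerDensity; ring
    _ ≤ (u ^ p * (A - u) ^ σ + A ^ (σ + 1) * u ^ (p - 1)) * (exp (-(r * u)) * φ u) := by
        gcongr; exact mul_rpow_mul_rpow_le hσ hu
    _ = (A - u) ^ σ * (exp (-(r * u)) * (u ^ p * φ u)) +
          A ^ (σ + 1) * u ^ (p - 1) * (exp (-(r * u)) * φ u) := by ring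
    _ ≤ (A - u) ^ σ * (C₁ * (q ^ p * φ q) * 1) +
          A ^ (σ + 1) * u ^ (p - 1) * (C₂ * φ q * E) :=
        add_le_add
          (mul_le_mul_of_nonneg_left ((hlow r A _ u hr (hφ.rpow_mul hp.le) hu0 hu.2.le).trans
            (mul_le_mul_of_nonneg_left hE (by positivity))) (by positivity))
          (mul_le_mul_of_nonneg_left (hhigh r A φ u hr hφ hu0 hu.2.le) (by positivity))
    _ = C₁ * (φ q * (q ^ p * (A - u) ^ σ)) +
          C₂ * (φ q * (A ^ (σ + 1) * (u ^ (p - 1) * E))) := by ring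
    _ ≤ (C₁ + C₂) * (φ q * (q ^ p * (A - u) ^ σ)) +
          (C₁ + C₂) * (φ q * (A ^ (σ + 1) * (u ^ (p - 1) * E))) := by
        gcongr <;> linarith
    _ = _ := by ring

theorem intervalIntegrable_mul (hp : 0 < p) (hσ : -1 < σ) (hm : 0 ≤ m) (hr : 0 ≤ r) (hA : 0 < A)
    (hφ : HasPowerGrowth m φ) :
    IntervalIntegrable (fun u ↦ kummerDensity p σ r A u * φ u) volume 0 A := by
  obtain ⟨C, -, hle⟩ := exists_mul_le hp hσ hm
  have hmeas : AEMeasurable (fun u ↦ kummerDensity p σ r A u * φ u)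
      (volume.restrict (Set.Ioo 0 A)) :=
    measurable.aemeasurable.mul (aemeasurable_restrict_of_monotoneOn measurableSet_Ioo
      (hφ.monotoneOn.mono Set.Ioo_subset_Ioi_self))
  have hint : IntervalIntegrable (fun u ↦ A * (kummerDensity p σ r A u * φ u)) volume 0 A :=
    intervalIntegrable_of_nonneg_of_le hA.le (hmeas.const_mul A)
      (fun u hu ↦ mul_nonneg hA.le (mul_nonneg (nonneg hu) (hφ.nonneg u hu.1)))
      (fun u hu ↦ hle r A φ u hr hφ hu)
      (((intervalIntegrable_sub_rpow hσ).const_mul _).add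
        ((intervalIntegrable_rpow_mul_exp_neg_mul hp).const_mul _) |>.const_mul _)
  simpa [hA.ne'] using hint.const_mul A⁻¹

theorem exists_integral_mul_le (hp : 0 < p) (hσ : -1 < σ) (hm : 0 ≤ m) :
    ∃ C : ℝ, 0 < C ∧ ∀ r A φ, 0 ≤ r → 0 < A → HasPowerGrowth m φ →
      ∫ u in (0 : ℝ)..A, kummerDensity p σ r A u * φ u ≤
        C * (A ^ σ * decayScale r A ^ p * φ (decayScale r A)) := by
  obtain ⟨C, hC, hle⟩ := exists_mul_le hp hσ hm
  have hσ1 : 0 < σ + 1 := by linarith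
  refine ⟨C * (1 / (σ + 1) + 2 ^ p * Gamma p), by positivity, fun r A φ hr hA hφ ↦ ?_⟩
  set q := decayScale r A
  have hq : 0 < q := decayScale.pos hr hA
  have hφq : 0 ≤ φ q := hφ.nonneg q hq
  have hbeta := (intervalIntegrable_sub_rpow (A := A) hσ).const_mul (q ^ p)
  have hgamma := (intervalIntegrable_rpow_mul_exp_neg_mul (r := 1 / (2 * q)) (A := A) hp).const_mul
    (A ^ (σ + 1))
  refine le_of_mul_le_mul_left ?_ hA
  calc A * ∫ u in (0 : ℝ)..A, kummerDensity p σ r A u * φ u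
      ≤ C * φ q * (q ^ p * (A ^ (σ + 1) / (σ + 1)) +
          A ^ (σ + 1) * ∫ u in (0 : ℝ)..A, u ^ (p - 1) * exp (-(1 / (2 * q) * u))) := by
        rw [← integral_sub_rpow hσ, ← intervalIntegral.integral_const_mul,
          ← intervalIntegral.integral_const_mul, ← intervalIntegral.integral_const_mul,
          ← intervalIntegral.integral_add hbeta hgamma, ← intervalIntegral.integral_const_mul]
        exact intervalIntegral.integral_mono_on_of_le_Ioo hA.le
          ((intervalIntegrable_mul hp hσ hm hr hA hφ).const_mul A)
          ((hbeta.add hgamma).const_mul _) fun u hu ↦ hle r A φ u hr hφ hu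
    _ ≤ C * φ q * (q ^ p * (A ^ (σ + 1) / (σ + 1)) +
          A ^ (σ + 1) * ((1 / (1 / (2 * q))) ^ p * Gamma p)) := by
        gcongr
        exact integral_rpow_mul_exp_neg_mul_le hp (by positivity) hA.le
    _ = A * (C * (1 / (σ + 1) + 2 ^ p * Gamma p) * (A ^ σ * q ^ p * φ q)) := by
        rw [one_div_one_div, mul_rpow two_pos.le hq.le, rpow_add_one hA.ne']
        ring

theorem le_mul (hσ : -1 < σ) (hr : 0 ≤ r) (hφ : HasPowerGrowth m φ) (hu : 0 < u)
    (huq : u ≤ decayScale r A / 2) (hA : 0 < A) :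
    exp (-1) * (1 / 2) ^ (σ + 1) * A ^ σ * (decayScale r A ^ m)⁻¹ * φ (decayScale r A) *
      u ^ (p + m - 1) ≤ kummerDensity p σ r A u * φ u := by
  set q := decayScale r A
  have hq : 0 < q := decayScale.pos hr hA
  have hqA : q ≤ A := decayScale.le_self hr hA
  have hφq : 0 ≤ φ q := hφ.nonneg q hq
  have huA : 0 < A - u := by linarith
  have hbeta : (1 / 2) ^ (σ + 1) * A ^ σ ≤ (A - u) ^ σ :=
    calc (1 / 2) ^ (σ + 1) * A ^ σ = (1 / 2 * A) ^ (σ + 1) / A := by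
          rw [mul_rpow (by positivity) hA.le, rpow_add_one hA.ne', ← mul_assoc,
            mul_div_cancel_right₀ _ hA.ne']
      _ ≤ (A - u) ^ (σ + 1) / (A - u) := by gcongr <;> linarith
      _ = (A - u) ^ σ := by rw [rpow_add_one huA.ne', mul_div_cancel_right₀ _ huA.ne']
  have hexp : -1 ≤ -(r * u) := by
    have hrq : r * q ≤ 1 := decayScale.mul_le_one hr hA
    have hru : r * u ≤ r * q := by gcongr; linarith
    linarith
  calc exp (-1) * (1 / 2) ^ (σ + 1) * A ^ σ * (q ^ m)⁻¹ * φ q * u ^ (p + m - 1)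
      = u ^ (p - 1) * ((1 / 2) ^ (σ + 1) * A ^ σ) * exp (-1) * ((u / q) ^ m * φ q) := by
        rw [div_rpow hu.le hq.le, add_sub_right_comm, rpow_add hu]; ring
    _ ≤ u ^ (p - 1) * (A - u) ^ σ * exp (-(r * u)) * φ u := by
        gcongr
        exact hφ.div_rpow_mul_le hu (by linarith)

theorem exists_comparableWith_integral_mul (hp : 0 < p) (hσ : -1 < σ) (hm : 0 ≤ m) :
    ∃ C : ℝ, 0 < C ∧ ∀ r A φ, 0 ≤ r → 0 < A → HasPowerGrowth m φ →
      ComparableWith C (∫ u in (0 : ℝ)..A, kummerDensity p σ r A u * φ u)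
        (A ^ σ * decayScale r A ^ p * φ (decayScale r A)) := by
  obtain ⟨C, hC, hupper⟩ := exists_integral_mul_le hp hσ hm
  set c : ℝ := exp (-1) * (1 / 2) ^ (σ + 1) * ((1 / 2) ^ (p + m) / (p + m))
  have hc : 0 < c := by positivity
  refine ⟨max c⁻¹ C, hC.trans_le (le_max_right _ _), fun r A φ hr hA hφ ↦ ?_⟩
  have hint := intervalIntegrable_mul hp hσ hm hr hA hφ
  set q := decayScale r A
  have hq : 0 < q := decayScale.pos hr hA
  have hqA : q / 2 ≤ A := by linarith [decayScale.le_self hr hA]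
  have hsubset : Set.uIcc 0 (q / 2) ⊆ Set.uIcc 0 A :=
    Set.uIcc_subset_uIcc_left (Set.mem_uIcc_of_le (by positivity) hqA)
  have hφq : 0 ≤ φ q := hφ.nonneg q hq
  refine .of_le_of_le hc (by positivity) ?_ (hupper r A φ hr hA hφ)
  calc c * (A ^ σ * q ^ p * φ q)
      = exp (-1) * (1 / 2) ^ (σ + 1) * A ^ σ * (q ^ m)⁻¹ * φ q *
          ((q / 2) ^ (p + m) / (p + m)) := by
        simp only [c]
        rw [div_eq_mul_one_div q 2, mul_rpow hq.le (by positivity), rpow_add hq]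
        field_simp
    _ = ∫ u in (0 : ℝ)..q / 2, exp (-1) * (1 / 2) ^ (σ + 1) * A ^ σ * (q ^ m)⁻¹ * φ q *
          u ^ (p + m - 1) := by
        rw [intervalIntegral.integral_const_mul, integral_rpow (Or.inl (by linarith)),
          sub_add_cancel, zero_rpow (by positivity), sub_zero]
    _ ≤ ∫ u in (0 : ℝ)..q / 2, kummerDensity p σ r A u * φ u :=
        intervalIntegral.integral_mono_on_of_le_Ioo (by positivity)
          ((intervalIntegral.intervalIntegrable_rpow' (by linarith)).const_mul _)
          (hint.mono_set hsubset)
          fun u hu ↦ le_mul hσ hr hφ hu.1 hu.2.le hA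
    _ ≤ ∫ u in (0 : ℝ)..A, kummerDensity p σ r A u * φ u := by
        refine intervalIntegral.integral_mono_interval le_rfl (by positivity) hqA ?_ hint
        rw [Filter.EventuallyLE, ← Measure.restrict_congr_set Ioo_ae_eq_Ioc]
        filter_upwards [ae_restrict_mem measurableSet_Ioo] with u hu
        exact mul_nonneg (nonneg hu) (hφ.nonneg u hu.1)

theorem intervalIntegrable (hp : 0 < p) (hσ : -1 < σ) (hr : 0 ≤ r) (hA : 0 < A) :
    IntervalIntegrable (kummerDensity p σ r A) volume 0 A := by
  simpa only [mul_one] using intervalIntegrable_mul hp hσ le_rfl hr hA .one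

theorem exists_comparableWith_integral (hp : 0 < p) (hσ : -1 < σ) :
    ∃ C : ℝ, 0 < C ∧ ∀ r A, 0 ≤ r → 0 < A →
      ComparableWith C (∫ u in (0 : ℝ)..A, kummerDensity p σ r A u)
        (A ^ σ * decayScale r A ^ p) := by
  obtain ⟨C, hC, h⟩ := exists_comparableWith_integral_mul hp hσ le_rfl
  refine ⟨C, hC, fun r A hr hA ↦ ?_⟩
  simpa only [mul_one] using h r A _ hr hA .one

end kummerDensity

/-! ### The rank-one kernel -/

theorem intervalIntegral_nonneg_of_add_neg_nonneg {a : ℝ} {f : ℝ → ℝ} (ha : 0 ≤ a)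
    (hf : IntervalIntegrable f volume (-a) a) (h : ∀ z ∈ Set.Ioo (-a) a, 0 ≤ f z + f (-z)) :
    0 ≤ ∫ z in -a..a, f z := by
  have hfneg : IntervalIntegrable (fun z ↦ f (-z)) volume (-a) a := by
    simpa using (hf.comp_sub_left 0).symm
  have hsum : ∫ z in -a..a, (f z + f (-z)) = 2 * ∫ z in -a..a, f z := by
    rw [intervalIntegral.integral_add hf hfneg, intervalIntegral.integral_comp_neg, neg_neg,
      two_mul]
  have := intervalIntegral_nonneg_of_Ioo (by linarith) h
  linarith

namespace Erk1

variable {k x v : ℝ}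

theorem const_pos (hk : 0 < k) : 0 < Gamma (k + 1 / 2) / (√π * Gamma k) :=
  div_pos (Gamma_pos_of_pos (by positivity))
    (mul_pos (sqrt_pos.2 pi_pos) (Gamma_pos_of_pos hk))

theorem eq_exp_mul_integral_kummerDensity (k x v : ℝ) :
    Erk1 k x v = Gamma (k + 1 / 2) / (√π * Gamma k) *
      (exp (x * v) * ∫ s in (0 : ℝ)..2, kummerDensity k k (x * v) 2 s) := by
  have hsubst := intervalIntegral.integral_comp_sub_left (a := 0) (b := 2)
    (fun z ↦ exp (z * x * v) * (1 - z) ^ (k - 1) * (1 + z) ^ k) 1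
  rw [sub_zero, show (1 - 2 : ℝ) = -1 by norm_num] at hsubst
  rw [Erk1, ← hsubst, ← intervalIntegral.integral_const_mul (exp (x * v))]
  congr 2
  funext s
  rw [kummerDensity, sub_sub_cancel, show 1 + (1 - s) = 2 - s by ring,
    show (1 - s) * x * v = x * v + -(x * v * s) by ring, exp_add]
  ring

theorem nonneg (hk : 0 < k) : 0 ≤ Erk1 k x v := by
  rw [eq_exp_mul_integral_kummerDensity]
  exact mul_nonneg (const_pos hk).le <| mul_nonneg (exp_pos _).le <|
    intervalIntegral_nonneg_of_Ioo zero_le_two fun _ hs ↦ kummerDensity.nonneg hs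

theorem measurable (k x : ℝ) : Measurable (Erk1 k x) := by
  have hparam : StronglyMeasurable fun v ↦ ∫ s in Set.Ioc (0 : ℝ) 2,
      kummerDensity k k (x * v) 2 s := by
    refine StronglyMeasurable.integral_prod_right
      (f := fun v s ↦ kummerDensity k k (x * v) 2 s) (Measurable.stronglyMeasurable ?_)
    simp only [Function.uncurry_def, kummerDensity]
    fun_prop
  have heq : Erk1 k x = fun v ↦ Gamma (k + 1 / 2) / (√π * Gamma k) *
      (exp (x * v) * ∫ s in Set.Ioc (0 : ℝ) 2, kummerDensity k k (x * v) 2 s) := by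
    funext v
    rw [eq_exp_mul_integral_kummerDensity, intervalIntegral.integral_of_le zero_le_two]
  have hparam' := hparam.measurable
  rw [heq]
  fun_prop

theorem exists_comparableWith (hk : 0 < k) :
    ∃ C : ℝ, 0 < C ∧ ∀ x v, 0 ≤ x * v →
      ComparableWith C (Erk1 k x v) (exp (x * v) * ((1 + x * v) ^ k)⁻¹) := by
  obtain ⟨C, hC, hmass⟩ :=
    kummerDensity.exists_comparableWith_integral hk (by linarith : -1 < k)
  set c := Gamma (k + 1 / 2) / (√π * Gamma k) * 2 ^ k
  have hc : 0 < c := mul_pos (const_pos hk) (rpow_pos_of_pos two_pos k)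
  refine ⟨C * 2 ^ k * max c⁻¹ c, by positivity, fun x v hy ↦ ?_⟩
  set y := x * v
  have hscale : ComparableWith 2 (decayScale y 2) (1 + y)⁻¹ := by
    rw [ComparableWith, decayScale, ← mul_inv, ← div_eq_mul_inv, ← one_div,
      div_le_div_iff₀ (by positivity) (by positivity),
      div_le_div_iff₀ (by positivity) (by positivity)]
    constructor <;> linarith
  have hmass' : ComparableWith (C * 2 ^ k) (∫ s in (0 : ℝ)..2, kummerDensity k k y 2 s)
      (2 ^ k * ((1 + y) ^ k)⁻¹) := by
    rw [← inv_rpow (by positivity)]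
    exact (hmass y 2 hy two_pos).trans hC.le
      ((hscale.rpow zero_le_two (by positivity) hk.le).mul_left (by positivity))
  have hErk1 := hmass'.mul_left (mul_pos (const_pos hk) (exp_pos y)).le
  rw [mul_assoc, ← eq_exp_mul_integral_kummerDensity] at hErk1
  refine hErk1.trans (by positivity) ?_
  convert ComparableWith.const_mul_self hc (f := exp y * ((1 + y) ^ k)⁻¹) (by positivity) using 1
  ring

theorem intervalIntegrable_integrand (hk : 0 < k) (x v : ℝ) :
    IntervalIntegrable (fun z ↦ exp (z * x * v) * (1 - z) ^ (k - 1) * (1 + z) ^ k)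
      volume (-1) 1 := by
  have hsing : IntervalIntegrable (fun z : ℝ ↦ (1 - z) ^ (k - 1)) volume (-1) 1 := by
    have h := (intervalIntegral.intervalIntegrable_rpow' (a := 2) (b := 0) (r := k - 1)
      (by linarith)).comp_sub_left 1
    rwa [sub_zero, show (1 - 2 : ℝ) = -1 by norm_num] at h
  refine (hsing.continuousOn_mul (by fun_prop)).mul_continuousOn (Continuous.continuousOn ?_)
  exact (continuous_const.add continuous_id).rpow_const fun _ ↦ Or.inr hk.le

-- Symmetrizing in `z`, the two integrands differ by
-- `2 z (1 - z²)^(k - 1) (exp (z x v) - exp (-z x v)) ≥ 0`.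
theorem neg_le (hk : 0 < k) (hxv : 0 ≤ x * v) : Erk1 k (-x) v ≤ Erk1 k x v := by
  refine mul_le_mul_of_nonneg_left ?_ (const_pos hk).le
  rw [← sub_nonneg, ← intervalIntegral.integral_sub (intervalIntegrable_integrand hk x v)
    (intervalIntegrable_integrand hk (-x) v)]
  refine intervalIntegral_nonneg_of_add_neg_nonneg zero_le_one
    ((intervalIntegrable_integrand hk x v).sub (intervalIntegrable_integrand hk (-x) v))
    fun z ⟨hz₁, hz₂⟩ ↦ ?_
  have hz₁' : 0 < 1 + z := by linarith
  have hz₂' : 0 < 1 - z := by linarith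
  have hodd : 0 ≤ z * (exp (z * x * v) - exp (z * -x * v)) := by
    rcases le_total 0 z with hz | hz
    · exact mul_nonneg hz (sub_nonneg.2 (exp_le_exp.2 (by nlinarith)))
    · exact mul_nonneg_of_nonpos_of_nonpos hz (sub_nonpos.2 (exp_le_exp.2 (by nlinarith)))
  have hsplit₁ : (1 + z) ^ k = (1 + z) ^ (k - 1) * (1 + z) := by
    rw [← rpow_add_one hz₁'.ne', sub_add_cancel]
  have hsplit₂ : (1 - z) ^ k = (1 - z) ^ (k - 1) * (1 - z) := by
    rw [← rpow_add_one hz₂'.ne', sub_add_cancel]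
  rw [neg_mul_neg, neg_mul_comm z x, sub_neg_eq_add, ← sub_eq_add_neg, hsplit₁, hsplit₂]
  refine le_of_le_of_eq (b := 2 * ((1 + z) ^ (k - 1) * (1 - z) ^ (k - 1)) *
    (z * (exp (z * x * v) - exp (z * -x * v)))) (by positivity) (by ring)

end Erk1

/-! ### The `A₂` kernel -/

theorem iterated_integral_mem_Icc {A B : ℝ} {D : ℝ → ℝ → ℝ} {F₁ F₂ G : ℝ → ℝ} (hA : 0 ≤ A)
    (hB : 0 ≤ B) (hD : Measurable (Function.uncurry D))
    (hF₁ : IntervalIntegrable F₁ volume 0 A) (hF₂ : IntervalIntegrable F₂ volume 0 A)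
    (hG : IntervalIntegrable G volume 0 B)
    (hF₁G : ∀ u ∈ Set.Ioo 0 A, ∀ w ∈ Set.Ioo 0 B, 0 ≤ F₁ u * G w)
    (hle : ∀ u ∈ Set.Ioo 0 A, ∀ w ∈ Set.Ioo 0 B, F₁ u * G w ≤ D u w ∧ D u w ≤ F₂ u * G w) :
    ∫ w in (0 : ℝ)..B, ∫ u in (0 : ℝ)..A, D u w ∈
      Set.Icc ((∫ u in (0 : ℝ)..A, F₁ u) * ∫ w in (0 : ℝ)..B, G w)
        ((∫ u in (0 : ℝ)..A, F₂ u) * ∫ w in (0 : ℝ)..B, G w) := by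
  have hD0 : ∀ w ∈ Set.Ioo 0 B, ∀ u ∈ Set.Ioo 0 A, 0 ≤ D u w := fun w hw u hu ↦
    (hF₁G u hu w hw).trans (hle u hu w hw).1
  have hDint : ∀ w ∈ Set.Ioo 0 B, IntervalIntegrable (D · w) volume 0 A := fun w hw ↦
    intervalIntegrable_of_nonneg_of_le hA (hD.comp measurable_prodMk_right).aemeasurable (hD0 w hw)
      (fun u hu ↦ (hle u hu w hw).2) (hF₂.mul_const (G w))
  have hlower : ∀ w ∈ Set.Ioo 0 B, (∫ u in (0 : ℝ)..A, F₁ u) * G w ≤ ∫ u in (0 : ℝ)..A, D u w := by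
    intro w hw
    rw [← intervalIntegral.integral_mul_const]
    exact intervalIntegral.integral_mono_on_of_le_Ioo hA (hF₁.mul_const _) (hDint w hw)
      fun u hu ↦ (hle u hu w hw).1
  have hupper : ∀ w ∈ Set.Ioo 0 B, ∫ u in (0 : ℝ)..A, D u w ≤ (∫ u in (0 : ℝ)..A, F₂ u) * G w := by
    intro w hw
    rw [← intervalIntegral.integral_mul_const]
    exact intervalIntegral.integral_mono_on_of_le_Ioo hA (hDint w hw) (hF₂.mul_const _)
      fun u hu ↦ (hle u hu w hw).2
  have hmeas : Measurable fun w ↦ ∫ u in (0 : ℝ)..A, D u w := by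
    simp only [intervalIntegral.integral_of_le hA]
    exact (StronglyMeasurable.integral_prod_right (f := fun w u ↦ D u w)
      (hD.comp measurable_swap).stronglyMeasurable).measurable
  have hint : IntervalIntegrable (fun w ↦ ∫ u in (0 : ℝ)..A, D u w) volume 0 B :=
    intervalIntegrable_of_nonneg_of_le hB hmeas.aemeasurable
      (fun w hw ↦ intervalIntegral_nonneg_of_Ioo hA (hD0 w hw)) hupper (hG.const_mul _)
  rw [← intervalIntegral.integral_const_mul, ← intervalIntegral.integral_const_mul]
  exact ⟨intervalIntegral.integral_mono_on_of_le_Ioo hB (hG.const_mul _) hint hlower,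
    intervalIntegral.integral_mono_on_of_le_Ioo hB hint (hG.const_mul _) hupper⟩

/-- The combination of rank-one kernels in the integrand of `EkA2`, in the coordinates
`u = λ₁ - ν₁` and `w = λ₂ - ν₂`, for `a = α_X` and `A = α_λ`. -/
noncomputable def rankOneBracket (k a A u w : ℝ) : ℝ :=
  (A - u) * (A + w) * Erk1 k (a / 2) (A - u + w) + u * w * Erk1 k (-a / 2) (A - u + w)

namespace rankOneBracket

variable {k a A u w : ℝ}

theorem le_mul_Erk1 (hk : 0 < k) (ha : 0 ≤ a) (hu : u ∈ Set.Ioo 0 A) (hw : 0 < w) :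
    rankOneBracket k a A u w ≤ A * (A - u + w) * Erk1 k (a / 2) (A - u + w) := by
  have hu0 : 0 < u := hu.1
  have huA : 0 < A - u := sub_pos.2 hu.2
  calc rankOneBracket k a A u w
      ≤ (A - u) * (A + w) * Erk1 k (a / 2) (A - u + w) +
          u * w * Erk1 k (a / 2) (A - u + w) := by
        unfold rankOneBracket
        gcongr
        rw [neg_div]
        exact Erk1.neg_le hk (by positivity)
    _ = A * (A - u + w) * Erk1 k (a / 2) (A - u + w) := by ring

theorem mul_Erk1_le (hk : 0 < k) (hu : 0 < u) (hw : 0 < w) :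
    (A - u) * (A + w) * Erk1 k (a / 2) (A - u + w) ≤ rankOneBracket k a A u w :=
  le_add_of_nonneg_right (mul_nonneg (by positivity) (Erk1.nonneg hk))

theorem nonneg (hk : 0 < k) (hu : u ∈ Set.Ioo 0 A) (hw : 0 < w) :
    0 ≤ rankOneBracket k a A u w :=
  have hu0 : 0 < u := hu.1
  have huA : 0 < A - u := sub_pos.2 hu.2
  add_nonneg (mul_nonneg (mul_nonneg huA.le (by linarith)) (Erk1.nonneg hk))
    (mul_nonneg (by positivity) (Erk1.nonneg hk))

theorem inv_one_add_half_rpow_le (hk : 0 ≤ k) (ha : 0 ≤ a) (hu : u ∈ Set.Ioo 0 A) (hw : 0 < w) :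
    ((1 + a * (A - u + w) / 2) ^ k)⁻¹ ≤
      2 ^ k * ((1 + a * u) ^ k * ((1 + a * (A + w)) ^ k)⁻¹) := by
  have hu0 : 0 < u := hu.1
  have huA : 0 < A - u := sub_pos.2 hu.2
  have hA : 0 < A := hu0.trans hu.2
  have hle : 1 + a * (A + w) ≤ 2 * (1 + a * u) * (1 + a * (A - u + w) / 2) := by
    rw [← sub_nonneg]
    exact le_of_le_of_eq (b := 1 + a * u + a * u * (a * (A - u + w))) (by positivity) (by ring)
  rw [← mul_assoc, ← div_eq_mul_inv, le_div_iff₀ (by positivity), inv_mul_le_iff₀ (by positivity),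
    ← mul_rpow (by positivity) (by positivity), ← mul_rpow (by positivity) (by positivity)]
  exact rpow_le_rpow (by positivity) (hle.trans_eq (mul_comm _ _)) hk

theorem exists_bounds (hk : 0 < k) :
    ∃ C : ℝ, 0 < C ∧ ∀ a A u w, 0 ≤ a → u ∈ Set.Ioo 0 A → 0 < w →
      C⁻¹ * ((A - u) * (A + w) * ((1 + a * (A + w)) ^ k)⁻¹) ≤
        exp (-(a * (A - u + w) / 2)) * rankOneBracket k a A u w ∧
      exp (-(a * (A - u + w) / 2)) * rankOneBracket k a A u w ≤
        C * (A * (A + w) * ((1 + a * u) ^ k * ((1 + a * (A + w)) ^ k)⁻¹)) := by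
  obtain ⟨C, hC, hErk1⟩ := Erk1.exists_comparableWith hk
  refine ⟨C * 2 ^ k, by positivity, fun a A u w ha hu hw ↦ ?_⟩
  have hu0 : 0 < u := hu.1
  have huA : 0 < A - u := sub_pos.2 hu.2
  have hA : 0 < A := hu0.trans hu.2
  have hErk1_nonneg : 0 ≤ Erk1 k (a / 2) (A - u + w) := Erk1.nonneg hk
  obtain ⟨hlower, hupper⟩ := (hErk1 (a / 2) (A - u + w) (by positivity)).mul_left
    (exp_pos (-(a * (A - u + w) / 2))).le
  rw [← mul_assoc (exp _), div_mul_eq_mul_div, ← exp_add, neg_add_cancel, exp_zero, one_mul]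
    at hlower hupper
  have hdenom_le : (1 + a * (A - u + w) / 2) ^ k ≤ (1 + a * (A + w)) ^ k := by
    gcongr
    nlinarith [mul_nonneg ha hu0.le, mul_nonneg ha hA.le, mul_nonneg ha hw.le]
  constructor
  · calc (C * 2 ^ k)⁻¹ * ((A - u) * (A + w) * ((1 + a * (A + w)) ^ k)⁻¹)
        ≤ C⁻¹ * ((A - u) * (A + w) * ((1 + a * (A - u + w) / 2) ^ k)⁻¹) := by
          gcongr
          exact le_mul_of_one_le_right hC.le (one_le_rpow one_le_two hk.le)
      _ = (A - u) * (A + w) * (C⁻¹ * ((1 + a * (A - u + w) / 2) ^ k)⁻¹) := by ring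
      _ ≤ (A - u) * (A + w) *
            (exp (-(a * (A - u + w) / 2)) * Erk1 k (a / 2) (A - u + w)) := by gcongr
      _ = exp (-(a * (A - u + w) / 2)) *
            ((A - u) * (A + w) * Erk1 k (a / 2) (A - u + w)) := by ring
      _ ≤ _ := by gcongr; exact mul_Erk1_le hk hu0 hw
  · calc exp (-(a * (A - u + w) / 2)) * rankOneBracket k a A u w
        ≤ exp (-(a * (A - u + w) / 2)) * (A * (A - u + w) * Erk1 k (a / 2) (A - u + w)) := by
          gcongr; exact le_mul_Erk1 hk ha hu hw
      _ = A * (A - u + w) *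
            (exp (-(a * (A - u + w) / 2)) * Erk1 k (a / 2) (A - u + w)) := by ring
      _ ≤ A * (A + w) *
            (C * (2 ^ k * ((1 + a * u) ^ k * ((1 + a * (A + w)) ^ k)⁻¹))) := by
          refine mul_le_mul (by gcongr; linarith) (hupper.trans ?_) (by positivity) (by positivity)
          gcongr
          exact inv_one_add_half_rpow_le hk.le ha hu hw
      _ = _ := by ring

end rankOneBracket

/-- The integrand of `EkA2` in the coordinates `u = λ₁ - ν₁` and `w = λ₂ - ν₂`, without the factor
`exp ((x₁ + x₂ - 2 x₃) (λ₁ + λ₂) / 2)`. Here `a = α_X`, `b = β_X`, `A = α_λ` and `B = β_λ`. -/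
noncomputable def shiftedIntegrand (k a b A B u w : ℝ) : ℝ :=
  rankOneBracket k a A u w * ((A + B - u) * (B - w)) * exp (-((a + 2 * b) * (u + w) / 2)) *
    (u * (A + w) * (A - u) * w * (A + B - u) * (B - w)) ^ (k - 1)

theorem rpow_mul_inv_rpow_mul_sub_rpow_le {k A B u : ℝ} (hk : 0 ≤ k) (hA : 0 < A) (hB : 0 ≤ B)
    (hu : 0 ≤ u) (huA : u ≤ A) : (A + B) ^ k * (A ^ k)⁻¹ * (A - u) ^ k ≤ (A + B - u) ^ k := by
  have hAu : 0 ≤ A - u := sub_nonneg.2 huA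
  rw [← div_eq_mul_inv, ← div_rpow (by positivity) hA.le, ← mul_rpow (by positivity) hAu]
  gcongr
  rw [div_mul_eq_mul_div, div_le_iff₀ hA]
  linarith [mul_nonneg hB hu]

namespace shiftedIntegrand

variable {k a b A B u w : ℝ}

theorem measurable (k a b A B : ℝ) :
    Measurable (Function.uncurry (shiftedIntegrand k a b A B)) := by
  have h₁ := Erk1.measurable k (a / 2)
  have h₂ := Erk1.measurable k (-a / 2)
  simp only [Function.uncurry_def, shiftedIntegrand, rankOneBracket]
  fun_prop

theorem eq_mul_kummerDensity (hu : u ∈ Set.Ioo 0 A) (hw : w ∈ Set.Ioo 0 B) :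
    shiftedIntegrand k a b A B u w =
      exp (a * A / 2) * (exp (-(a * (A - u + w) / 2)) * rankOneBracket k a A u w) *
        (A + w) ^ (k - 1) * (A + B - u) ^ k * kummerDensity k (k - 1) (a + b) A u *
        kummerDensity k k b B w := by
  have hu0 : 0 < u := hu.1
  have huA : 0 < A - u := sub_pos.2 hu.2
  have hw0 : 0 < w := hw.1
  have hwB : 0 < B - w := sub_pos.2 hw.2
  have hA : 0 < A := hu0.trans hu.2
  have hAB : 0 < A + B - u := by linarith
  have hexp : exp (-((a + 2 * b) * (u + w) / 2)) = exp (a * A / 2) *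
      exp (-(a * (A - u + w) / 2)) * exp (-((a + b) * u)) * exp (-(b * w)) := by
    rw [← exp_add, ← exp_add, ← exp_add]; ring_nf
  rw [shiftedIntegrand, kummerDensity, kummerDensity, hexp, mul_rpow (by positivity) hwB.le,
    mul_rpow (by positivity) hAB.le, mul_rpow (by positivity) hw0.le,
    mul_rpow (by positivity) huA.le, mul_rpow hu0.le (by positivity),
    rpow_sub_one hAB.ne' k, rpow_sub_one hwB.ne' k]
  field_simp

theorem exists_bounds (hk : 0 < k) :
    ∃ C : ℝ, 0 < C ∧ ∀ a b A B u w, 0 ≤ a → u ∈ Set.Ioo 0 A → w ∈ Set.Ioo 0 B →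
      C⁻¹ * exp (a * A / 2) * (A + B) ^ k * (A ^ k)⁻¹ * kummerDensity k (2 * k) (a + b) A u *
          (kummerDensity k k b B w * decayScale a (A + w) ^ k) ≤ shiftedIntegrand k a b A B u w ∧
      shiftedIntegrand k a b A B u w ≤ C * exp (a * A / 2) * (A + B) ^ k * A *
        (kummerDensity k (k - 1) (a + b) A u * (1 + a * u) ^ k) *
          (kummerDensity k k b B w * decayScale a (A + w) ^ k) := by
  obtain ⟨C, hC, hbracket⟩ := rankOneBracket.exists_bounds hk
  refine ⟨C, hC, fun a b A B u w ha hu hw ↦ ?_⟩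
  have hu0 : 0 < u := hu.1
  have huA : 0 < A - u := sub_pos.2 hu.2
  have hw0 : 0 < w := hw.1
  have hA : 0 < A := hu0.trans hu.2
  have hB : 0 < B := hw0.trans hw.2
  have hAB : 0 < A + B - u := by linarith
  obtain ⟨hlower, hupper⟩ := hbracket a A u w ha hu hw0
  have hbracket_nonneg : 0 ≤ rankOneBracket k a A u w := rankOneBracket.nonneg hk hu hw0
  have hdensA : 0 ≤ kummerDensity k (k - 1) (a + b) A u := kummerDensity.nonneg hu
  have hdensB : 0 ≤ kummerDensity k k b B w := kummerDensity.nonneg hw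
  have hscale : decayScale a (A + w) ^ k =
      (A + w) * (A + w) ^ (k - 1) * ((1 + a * (A + w)) ^ k)⁻¹ := by
    rw [decayScale, div_rpow (by positivity) (by positivity), mul_comm (A + w),
      ← rpow_add_one (by positivity), sub_add_cancel, div_eq_mul_inv]
  rw [eq_mul_kummerDensity hu hw, hscale]
  constructor
  · have hratio := rpow_mul_inv_rpow_mul_sub_rpow_le hk.le hA hB.le hu0.le hu.2.le
    have hdens : kummerDensity k (2 * k) (a + b) A u =
        (A - u) * (A - u) ^ k * kummerDensity k (k - 1) (a + b) A u := by
      rw [show 2 * k = k - 1 + (k + 1) by ring, kummerDensity.add_exponent hu.2,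
        rpow_add_one huA.ne', mul_comm (A - u)]
    calc _ = exp (a * A / 2) * (C⁻¹ * ((A - u) * (A + w) * ((1 + a * (A + w)) ^ k)⁻¹)) *
          (A + w) ^ (k - 1) * ((A + B) ^ k * (A ^ k)⁻¹ * (A - u) ^ k) *
          kummerDensity k (k - 1) (a + b) A u * kummerDensity k k b B w := by rw [hdens]; ring
      _ ≤ _ := by gcongr
  · calc _ ≤ exp (a * A / 2) *
            (C * (A * (A + w) * ((1 + a * u) ^ k * ((1 + a * (A + w)) ^ k)⁻¹))) *
          (A + w) ^ (k - 1) * (A + B) ^ k * kummerDensity k (k - 1) (a + b) A u *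
          kummerDensity k k b B w := by
          gcongr
          linarith
      _ = _ := by ring

end shiftedIntegrand

/-- The size of `∫∫ shiftedIntegrand k a b A B`: up to constants and the factor `exp (a * A / 2)`,
that integral is the `k`-th power of `laplaceScale a b A B`. The factors `A + B`, `A` and `B` come
from the power weights, the others from the effective lengths on which the integrand lives. -/
noncomputable def laplaceScale (a b A B : ℝ) : ℝ :=
  (A + B) * A * decayScale (a + b) A * B * decayScale b B * decayScale a (A + decayScale b B)

namespace laplaceScale

variable {a b A B : ℝ}

theorem pos (ha : 0 ≤ a) (hb : 0 ≤ b) (hA : 0 < A) (hB : 0 < B) : 0 < laplaceScale a b A B := by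
  have hinner := decayScale.pos (add_nonneg ha hb) hA
  have houter := decayScale.pos hb hB
  have hweight := decayScale.pos ha (add_pos hA houter)
  unfold laplaceScale
  positivity

theorem rpow_eq {k : ℝ} (ha : 0 ≤ a) (hb : 0 ≤ b) (hA : 0 < A) (hB : 0 < B) :
    laplaceScale a b A B ^ k = (A + B) ^ k * A ^ k * decayScale (a + b) A ^ k * B ^ k *
      decayScale b B ^ k * decayScale a (A + decayScale b B) ^ k := by
  have hinner := decayScale.pos (add_nonneg ha hb) hA
  have houter := decayScale.pos hb hB
  have hweight := decayScale.pos ha (add_pos hA houter)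
  rw [laplaceScale, mul_rpow (by positivity) hweight.le, mul_rpow (by positivity) houter.le,
    mul_rpow (by positivity) hB.le, mul_rpow (by positivity) hinner.le,
    mul_rpow (by positivity) hA.le]

theorem comparableWith_div_sq (ha : 0 ≤ a) (hb : 0 ≤ b) (hA : 0 < A) (hB : 0 < B) :
    ComparableWith 8 (laplaceScale a b A B / (A * (A + B) * B) ^ 2)
      (((1 + a * A) * (1 + b * B) * (1 + (a + b) * (A + B)))⁻¹) := by
  set S := A * (1 + b * B) + B with hS
  have hφ : decayScale a (A + decayScale b B) = S / (1 + b * B + a * S) := by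
    have hsum : A + decayScale b B = S / (1 + b * B) := by
      rw [decayScale, hS, add_div, mul_div_cancel_right₀ _ (by positivity)]
    rw [hsum, decayScale]
    field_simp
  have hratio : laplaceScale a b A B / (A * (A + B) * B) ^ 2 =
      S / ((A + B) * (1 + b * B + a * S) * (1 + (a + b) * A) * (1 + b * B)) := by
    rw [laplaceScale, hφ]
    unfold decayScale
    field_simp
  have hpoly_le : S * ((1 + a * A) * (1 + b * B) * (1 + (a + b) * (A + B))) ≤
      8 * ((A + B) * (1 + b * B + a * S) * (1 + (a + b) * A) * (1 + b * B)) := by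
    rw [hS, ← sub_nonneg]; ring_nf; positivity
  have hle_poly : (A + B) * (1 + b * B + a * S) * (1 + (a + b) * A) * (1 + b * B) ≤
      8 * (S * ((1 + a * A) * (1 + b * B) * (1 + (a + b) * (A + B)))) := by
    rw [hS, ← sub_nonneg]; ring_nf; positivity
  rw [hratio, ComparableWith, ← div_eq_mul_inv, ← div_eq_mul_inv,
    div_le_div_iff₀ (by positivity) (by positivity),
    div_le_div_iff₀ (by positivity) (by positivity)]
  constructor <;> linarith

end laplaceScale

namespace shiftedIntegrand

variable {k : ℝ}

theorem exists_integral_integral_bounds (hk : 0 < k) :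
    ∃ C : ℝ, 0 < C ∧ ∀ a b A B, 0 ≤ a → 0 ≤ b → 0 < A → 0 < B →
      C⁻¹ * exp (a * A / 2) * (A + B) ^ k * (A ^ k)⁻¹ *
          (∫ u in (0 : ℝ)..A, kummerDensity k (2 * k) (a + b) A u) *
          (∫ w in (0 : ℝ)..B, kummerDensity k k b B w * decayScale a (A + w) ^ k) ≤
        ∫ w in (0 : ℝ)..B, ∫ u in (0 : ℝ)..A, shiftedIntegrand k a b A B u w ∧
      ∫ w in (0 : ℝ)..B, ∫ u in (0 : ℝ)..A, shiftedIntegrand k a b A B u w ≤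
        C * exp (a * A / 2) * (A + B) ^ k * A *
          (∫ u in (0 : ℝ)..A, kummerDensity k (k - 1) (a + b) A u * (1 + a * u) ^ k) *
          (∫ w in (0 : ℝ)..B, kummerDensity k k b B w * decayScale a (A + w) ^ k) := by
  obtain ⟨C, hC, hbounds⟩ := exists_bounds hk
  refine ⟨C, hC, fun a b A B ha hb hA hB ↦ ?_⟩
  have hab : 0 ≤ a + b := add_nonneg ha hb
  have hweight := (HasPowerGrowth.one_add_const_mul ha).rpow hk.le
  have hweight' := (HasPowerGrowth.decayScale_add ha hA.le).rpow hk.le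
  obtain ⟨hlower, hupper⟩ := iterated_integral_mem_Icc hA.le hB.le (measurable k a b A B)
    ((kummerDensity.intervalIntegrable hk (by linarith) hab hA).const_mul _)
    ((kummerDensity.intervalIntegrable_mul hk (by linarith) (by linarith) hab hA
      hweight).const_mul _)
    (kummerDensity.intervalIntegrable_mul hk (by linarith) (by linarith) hb hB hweight')
    (fun u hu w hw ↦ mul_nonneg (mul_nonneg (by positivity) (kummerDensity.nonneg hu))
      (mul_nonneg (kummerDensity.nonneg hw) (hweight'.nonneg w hw.1)))
    (fun u hu w hw ↦ hbounds a b A B u w ha hu hw)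
  rw [intervalIntegral.integral_const_mul] at hlower hupper
  exact ⟨hlower, hupper⟩

theorem exists_integral_kummerDensity_mul_le (hk : 0 < k) :
    ∃ C : ℝ, 0 < C ∧ ∀ a b A, 0 ≤ a → 0 ≤ b → 0 < A →
      ∫ u in (0 : ℝ)..A, kummerDensity k (k - 1) (a + b) A u * (1 + a * u) ^ k ≤
        C * (A ^ (k - 1) * decayScale (a + b) A ^ k) := by
  obtain ⟨C, hC, hmass⟩ := kummerDensity.exists_comparableWith_integral_mul hk
    (by linarith : -1 < k - 1) (by linarith : 0 ≤ 1 * k)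
  refine ⟨C * 2 ^ k, by positivity, fun a b A ha hb hA ↦ ?_⟩
  have hab : 0 ≤ a + b := add_nonneg ha hb
  set q := decayScale (a + b) A
  have hq : 0 < q := decayScale.pos hab hA
  have haq : 1 + a * q ≤ 2 := by
    have : (a + b) * q ≤ 1 := decayScale.mul_le_one hab hA
    linarith [mul_nonneg hb hq.le]
  calc _ ≤ C * (A ^ (k - 1) * q ^ k * (1 + a * q) ^ k) :=
        (hmass _ A _ hab hA ((HasPowerGrowth.one_add_const_mul ha).rpow hk.le)).2
    _ ≤ C * (A ^ (k - 1) * q ^ k * 2 ^ k) := by gcongr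
    _ = C * 2 ^ k * (A ^ (k - 1) * q ^ k) := by ring

theorem exists_comparableWith_integral_integral (hk : 0 < k) :
    ∃ C : ℝ, 0 < C ∧ ∀ a b A B, 0 ≤ a → 0 ≤ b → 0 < A → 0 < B →
      ComparableWith C
        (∫ w in (0 : ℝ)..B, ∫ u in (0 : ℝ)..A, shiftedIntegrand k a b A B u w)
        (exp (a * A / 2) * laplaceScale a b A B ^ k) := by
  obtain ⟨C, hC, hbounds⟩ := exists_integral_integral_bounds hk
  obtain ⟨C₁, hC₁, hlower⟩ :=
    kummerDensity.exists_comparableWith_integral hk (by linarith : -1 < 2 * k)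
  obtain ⟨C₂, hC₂, hupper⟩ := exists_integral_kummerDensity_mul_le hk
  obtain ⟨C₃, hC₃, houter⟩ := kummerDensity.exists_comparableWith_integral_mul hk
    (by linarith : -1 < k) (by linarith : 0 ≤ 1 * k)
  refine ⟨max (C⁻¹ * C₁⁻¹ * C₃⁻¹)⁻¹ (C * C₂ * C₃), by positivity, fun a b A B ha hb hA hB ↦ ?_⟩
  have hab : 0 ≤ a + b := add_nonneg ha hb
  obtain ⟨hlower', hupper'⟩ := hbounds a b A B ha hb hA hB
  have hM : 0 < laplaceScale a b A B := laplaceScale.pos ha hb hA hB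
  have hsplit := laplaceScale.rpow_eq (k := k) ha hb hA hB
  have houter' := houter b B _ hb hB ((HasPowerGrowth.decayScale_add ha hA.le).rpow hk.le)
  set q := decayScale (a + b) A
  set q' := decayScale b B
  have hq : 0 < q := decayScale.pos hab hA
  have hq' : 0 < q' := decayScale.pos hb hB
  have hφ : 0 < decayScale a (A + q') := decayScale.pos ha (by positivity)
  set G := ∫ w in (0 : ℝ)..B, kummerDensity k k b B w * decayScale a (A + w) ^ k
  have hG : 0 ≤ G := le_trans (by positivity) houter'.1
  refine .of_le_of_le (by positivity) (by positivity) (le_trans ?_ hlower') (hupper'.trans ?_)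
  · calc _ = C⁻¹ * exp (a * A / 2) * (A + B) ^ k * (A ^ k)⁻¹ *
            (C₁⁻¹ * (A ^ (2 * k) * q ^ k)) *
            (C₃⁻¹ * (B ^ k * q' ^ k * decayScale a (A + q') ^ k)) := by
          rw [hsplit, two_mul, rpow_add hA]
          field_simp
      _ ≤ _ := mul_le_mul (mul_le_mul_of_nonneg_left (hlower _ A hab hA).1 (by positivity))
          houter'.1 (by positivity) (mul_nonneg (by positivity)
            (le_trans (by positivity) (hlower _ A hab hA).1))
  · calc _ ≤ C * exp (a * A / 2) * (A + B) ^ k * A * (C₂ * (A ^ (k - 1) * q ^ k)) *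
            (C₃ * (B ^ k * q' ^ k * decayScale a (A + q') ^ k)) := by
          gcongr
          · exact hupper a b A ha hb hA
          · exact houter'.2
      _ = _ := by
          rw [hsplit, rpow_sub_one hA.ne']
          field_simp

end shiftedIntegrand

namespace EkA2

theorem eq_const_mul_integral_shiftedIntegrand (k x1 x2 x3 l1 l2 l3 : ℝ) :
    EkA2 k x1 x2 x3 l1 l2 l3 =
      3 * Gamma (3 * k) / (Vlam l1 l2 l3 ^ (2 * k) * Gamma k ^ 2) *
        (exp ((x1 + x2 - 2 * x3) * (l1 + l2) / 2) *
          ∫ w in (0 : ℝ)..l2 - l3, ∫ u in (0 : ℝ)..l1 - l2,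
            shiftedIntegrand k (x1 - x2) (x2 - x3) (l1 - l2) (l2 - l3) u w) := by
  unfold EkA2
  congr 1
  set f : ℝ → ℝ → ℝ := fun n1 n2 ↦
    ((n1 - l2) * (l1 - n2) * Erk1 k ((x1 - x2) / 2) (n1 - n2) +
      (l1 - n1) * (l2 - n2) * Erk1 k (-(x1 - x2) / 2) (n1 - n2)) * ((n1 - l3) * (n2 - l3)) *
      exp ((x1 + x2 - 2 * x3) * (n1 + n2) / 2) * Wk k l1 l2 l3 n1 n2
  have hf : ∀ u w, f (l1 - u) (l2 - w) = exp ((x1 + x2 - 2 * x3) * (l1 + l2) / 2) *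
      shiftedIntegrand k (x1 - x2) (x2 - x3) (l1 - l2) (l2 - l3) u w := by
    intro u w
    have hexp : exp ((x1 + x2 - 2 * x3) * (l1 - u + (l2 - w)) / 2) =
        exp ((x1 + x2 - 2 * x3) * (l1 + l2) / 2) *
          exp (-((x1 - x2 + 2 * (x2 - x3)) * (u + w) / 2)) := by
      rw [← exp_add]; ring_nf
    simp only [f, Wk, shiftedIntegrand, rankOneBracket]
    rw [hexp]
    ring_nf
  calc ∫ n2 in l3..l2, ∫ n1 in l2..l1, f n1 n2
      = ∫ w in (0 : ℝ)..l2 - l3, ∫ n1 in l2..l1, f n1 (l2 - w) := by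
        rw [intervalIntegral.integral_comp_sub_left (fun n2 ↦ ∫ n1 in l2..l1, f n1 n2) l2,
          sub_zero, sub_sub_cancel]
    _ = ∫ w in (0 : ℝ)..l2 - l3, ∫ u in (0 : ℝ)..l1 - l2, f (l1 - u) (l2 - w) := by
        congr 1 with w
        rw [intervalIntegral.integral_comp_sub_left (f · (l2 - w)) l1, sub_zero, sub_sub_cancel]
    _ = _ := by simp only [hf, intervalIntegral.integral_const_mul]

variable {k : ℝ}

theorem exists_comparableWith_laplaceScale (hk : 0 < k) :
    ∃ C : ℝ, 0 < C ∧ ∀ x1 x2 x3 l1 l2 l3, x2 ≤ x1 → x3 ≤ x2 → l2 < l1 → l3 < l2 →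
      ComparableWith C (EkA2 k x1 x2 x3 l1 l2 l3)
        (exp ((x1 - x3) * l1 + (x2 - x3) * l2) *
          (laplaceScale (x1 - x2) (x2 - x3) (l1 - l2) (l2 - l3) / Vlam l1 l2 l3 ^ 2) ^ k) := by
  obtain ⟨C, hC, hintegral⟩ := shiftedIntegrand.exists_comparableWith_integral_integral hk
  set c := 3 * Gamma (3 * k) / Gamma k ^ 2 with hc_def
  have hc : 0 < c := by positivity
  refine ⟨C * max c⁻¹ c, by positivity, fun x1 x2 x3 l1 l2 l3 hx₁₂ hx₂₃ hl₁₂ hl₂₃ ↦ ?_⟩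
  have ha : 0 ≤ x1 - x2 := sub_nonneg.2 hx₁₂
  have hb : 0 ≤ x2 - x3 := sub_nonneg.2 hx₂₃
  have hA : 0 < l1 - l2 := sub_pos.2 hl₁₂
  have hB : 0 < l2 - l3 := sub_pos.2 hl₂₃
  have hV : 0 < Vlam l1 l2 l3 := mul_pos (mul_pos hA (by linarith)) hB
  set M := laplaceScale (x1 - x2) (x2 - x3) (l1 - l2) (l2 - l3)
  have hM : 0 < M := laplaceScale.pos ha hb hA hB
  have hnormalize : 3 * Gamma (3 * k) / (Vlam l1 l2 l3 ^ (2 * k) * Gamma k ^ 2) *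
      (exp ((x1 + x2 - 2 * x3) * (l1 + l2) / 2) *
        (exp ((x1 - x2) * (l1 - l2) / 2) * M ^ k)) =
      c * (exp ((x1 - x3) * l1 + (x2 - x3) * l2) * (M / Vlam l1 l2 l3 ^ 2) ^ k) := by
    have hexp : (x1 - x3) * l1 + (x2 - x3) * l2 =
        (x1 + x2 - 2 * x3) * (l1 + l2) / 2 + (x1 - x2) * (l1 - l2) / 2 := by ring
    rw [hc_def, hexp, exp_add, div_rpow hM.le (by positivity), rpow_mul hV.le, rpow_two]
    field_simp
  rw [eq_const_mul_integral_shiftedIntegrand]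
  refine (((hintegral _ _ _ _ ha hb hA hB).mul_left (exp_pos _).le).mul_left
    (by positivity)).trans hC.le ?_
  rw [hnormalize]
  exact .const_mul_self hc (by positivity)

theorem exists_comparableWith (hk : 0 < k) :
    ∃ C : ℝ, 0 < C ∧ ∀ x1 x2 x3 l1 l2 l3, x2 ≤ x1 → x3 ≤ x2 → l2 < l1 → l3 < l2 →
      ComparableWith C (EkA2 k x1 x2 x3 l1 l2 l3)
        (exp ((x1 - x3) * l1 + (x2 - x3) * l2) *
          (((1 + (x1 - x2) * (l1 - l2)) * (1 + (x2 - x3) * (l2 - l3)) *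
            (1 + (x1 - x3) * (l1 - l3))) ^ k)⁻¹) := by
  obtain ⟨C, hC, hkernel⟩ := exists_comparableWith_laplaceScale hk
  refine ⟨C * 8 ^ k, by positivity, fun x1 x2 x3 l1 l2 l3 hx₁₂ hx₂₃ hl₁₂ hl₂₃ ↦ ?_⟩
  have ha : 0 ≤ x1 - x2 := sub_nonneg.2 hx₁₂
  have hb : 0 ≤ x2 - x3 := sub_nonneg.2 hx₂₃
  have hA : 0 < l1 - l2 := sub_pos.2 hl₁₂
  have hB : 0 < l2 - l3 := sub_pos.2 hl₂₃
  have hratio := (laplaceScale.comparableWith_div_sq ha hb hA hB).rpow (by norm_num)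
    (by positivity) hk.le
  rw [inv_rpow (by positivity)] at hratio
  simp only [sub_add_sub_cancel] at hratio
  exact (hkernel _ _ _ _ _ _ hx₁₂ hx₂₃ hl₁₂ hl₂₃).trans hC.le (hratio.mul_left (exp_pos _).le)

end EkA2

/-! ### The heat kernel -/

theorem comparableWith_one_add_div_two_mul {t z : ℝ} (ht : 0 < t) (hz : 0 ≤ z) :
    ComparableWith 2 (1 + z / (2 * t)) (t⁻¹ * (t + z)) := by
  have hzt : 0 ≤ z / t := by positivity
  have hhalf : z / (2 * t) = z / t / 2 := by rw [mul_comm, div_div]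
  have hsum : t⁻¹ * (t + z) = 1 + z / t := by field_simp
  rw [ComparableWith, hhalf, hsum]
  constructor <;> linarith

theorem exists_comparableWith_EkA2_div_two_mul {k : ℝ} (hk : 0 < k) :
    ∃ C : ℝ, 0 < C ∧ ∀ t x1 x2 x3 y1 y2 y3 : ℝ,
      0 < t → x2 ≤ x1 → x3 ≤ x2 → y2 < y1 → y3 < y2 →
      ComparableWith C
        (EkA2 k x1 x2 x3 (y1 / (2 * t)) (y2 / (2 * t)) (y3 / (2 * t)))
        (t ^ (3 * k) * exp (((x1 - x3) * y1 + (x2 - x3) * y2) / (2 * t)) /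
          ((t + (x1 - x2) * (y1 - y2)) ^ k * (t + (x2 - x3) * (y2 - y3)) ^ k *
            (t + (x1 - x3) * (y1 - y3)) ^ k)) := by
  obtain ⟨C, hC, hkernel⟩ := EkA2.exists_comparableWith hk
  refine ⟨C * (2 * 2 * 2) ^ k, by positivity, fun t x1 x2 x3 y1 y2 y3 ht hx₁₂ hx₂₃ hy₁₂ hy₂₃ ↦ ?_⟩
  have hα : 0 ≤ (x1 - x2) * (y1 - y2) := mul_nonneg (by linarith) (by linarith)
  have hβ : 0 ≤ (x2 - x3) * (y2 - y3) := mul_nonneg (by linarith) (by linarith)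
  have hγ : 0 ≤ (x1 - x3) * (y1 - y3) := mul_nonneg (by linarith) (by linarith)
  have hE := hkernel x1 x2 x3 (y1 / (2 * t)) (y2 / (2 * t)) (y3 / (2 * t)) hx₁₂ hx₂₃
    (by gcongr) (by gcongr)
  simp only [← sub_div, ← mul_div_assoc, ← add_div] at hE
  have hprod := ((comparableWith_one_add_div_two_mul ht hα).mul (by norm_num) (by norm_num)
    (by positivity) (by positivity) (comparableWith_one_add_div_two_mul ht hβ)).mul (by norm_num)
    (by norm_num) (by positivity) (by positivity) (comparableWith_one_add_div_two_mul ht hγ)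
  have hdenom : ((t⁻¹ * (t + (x1 - x2) * (y1 - y2)) * (t⁻¹ * (t + (x2 - x3) * (y2 - y3))) *
      (t⁻¹ * (t + (x1 - x3) * (y1 - y3)))) ^ k)⁻¹ =
        t ^ (3 * k) / ((t + (x1 - x2) * (y1 - y2)) ^ k * (t + (x2 - x3) * (y2 - y3)) ^ k *
          (t + (x1 - x3) * (y1 - y3)) ^ k) := by
    have hpow : t ^ (3 * k) = t ^ k * t ^ k * t ^ k := by
      rw [← rpow_add ht, ← rpow_add ht]; ring_nf
    rw [mul_rpow (by positivity) (by positivity), mul_rpow (by positivity) (by positivity),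
      mul_rpow (by positivity) (by positivity), mul_rpow (by positivity) (by positivity),
      mul_rpow (by positivity) (by positivity), inv_rpow ht.le, hpow]
    field_simp
  rw [mul_div_right_comm, mul_comm (_ / _), ← hdenom]
  exact hE.trans hC.le (((hprod.rpow (by norm_num) (by positivity) hk.le).inv (by positivity)
    (by positivity)).mul_left (exp_pos _).le)

theorem heat_kernel_estimate_Cplus_general (k : ℝ) (hk : 0 < k) :
    ∃ C : ℝ, 0 < C ∧ ∀ t x1 x2 x3 y1 y2 y3 : ℝ,
      0 < t → x2 ≤ x1 → x3 ≤ x2 → y1 + y2 + y3 = 0 → y2 < y1 → y3 < y2 →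
      ComparableWith C
        (t ^ (-1 - 3 * k)
          * exp (-(x1 ^ 2 + x2 ^ 2 + x3 ^ 2 + (y1 ^ 2 + y2 ^ 2 + y3 ^ 2)) / (4 * t))
          * EkA2 k x1 x2 x3 (y1 / (2 * t)) (y2 / (2 * t)) (y3 / (2 * t)))
        (t⁻¹ * exp (-((x1 - y1) ^ 2 + (x2 - y2) ^ 2 + (x3 - y3) ^ 2) / (4 * t)) /
          ((t + (x1 - x2) * (y1 - y2)) ^ k * (t + (x2 - x3) * (y2 - y3)) ^ k
            * (t + (x1 - x3) * (y1 - y3)) ^ k)) := by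
  obtain ⟨C, hC, hkernel⟩ := exists_comparableWith_EkA2_div_two_mul hk
  refine ⟨C, hC, fun t x1 x2 x3 y1 y2 y3 ht hx₁₂ hx₂₃ hy hy₁₂ hy₂₃ ↦ ?_⟩
  have hpow : t ^ (-1 - 3 * k) * t ^ (3 * k) = t⁻¹ := by
    rw [← rpow_add ht, sub_add_cancel, rpow_neg_one]
  have hexp : exp (-(x1 ^ 2 + x2 ^ 2 + x3 ^ 2 + (y1 ^ 2 + y2 ^ 2 + y3 ^ 2)) / (4 * t)) *
      exp (((x1 - x3) * y1 + (x2 - x3) * y2) / (2 * t)) =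
        exp (-((x1 - y1) ^ 2 + (x2 - y2) ^ 2 + (x3 - y3) ^ 2) / (4 * t)) := by
    obtain rfl : y3 = -y1 - y2 := by linarith
    rw [← exp_add]
    congr 1
    field_simp
    ring
  rw [← hpow, ← hexp, mul_mul_mul_comm, mul_div_assoc]
  exact (hkernel t x1 x2 x3 y1 y2 y3 ht hx₁₂ hx₂₃ hy₁₂ hy₂₃).mul_left (by positivity)

/-- Corollary 4.3: sharp heat kernel estimate for `X, Y ∈ C⁺`. -/
theorem heat_kernel_estimate_Cplus (k : ℝ) (hk : 0 < k) :
    ∃ C : ℝ, 0 < C ∧ ∀ t x1 x2 x3 y1 y2 y3 : ℝ,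
      0 < t →
      x1 + x2 + x3 = 0 → x2 < x1 → x3 < x2 →
      y1 + y2 + y3 = 0 → y2 < y1 → y3 < y2 →
      (C⁻¹ * (t⁻¹ * Real.exp (-((x1 - y1) ^ 2 + (x2 - y2) ^ 2 + (x3 - y3) ^ 2) / (4 * t)) /
            ((t + (x1 - x2) * (y1 - y2)) ^ k * (t + (x2 - x3) * (y2 - y3)) ^ k
              * (t + (x1 - x3) * (y1 - y3)) ^ k))
        ≤ t ^ (-1 - 3 * k)
            * Real.exp (-(x1 ^ 2 + x2 ^ 2 + x3 ^ 2 + (y1 ^ 2 + y2 ^ 2 + y3 ^ 2)) / (4 * t))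
            * EkA2 k x1 x2 x3 (y1 / (2 * t)) (y2 / (2 * t)) (y3 / (2 * t)) ∧
      t ^ (-1 - 3 * k)
            * Real.exp (-(x1 ^ 2 + x2 ^ 2 + x3 ^ 2 + (y1 ^ 2 + y2 ^ 2 + y3 ^ 2)) / (4 * t))
            * EkA2 k x1 x2 x3 (y1 / (2 * t)) (y2 / (2 * t)) (y3 / (2 * t))
        ≤ C * (t⁻¹ * Real.exp (-((x1 - y1) ^ 2 + (x2 - y2) ^ 2 + (x3 - y3) ^ 2) / (4 * t)) /
            ((t + (x1 - x2) * (y1 - y2)) ^ k * (t + (x2 - x3) * (y2 - y3)) ^ k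
              * (t + (x1 - x3) * (y1 - y3)) ^ k))) := by
  obtain ⟨C, hC, h⟩ := heat_kernel_estimate_Cplus_general k hk
  exact ⟨C, hC, fun t x1 x2 x3 y1 y2 y3 ht _ hx₁₂ hx₂₃ ↦
    h t x1 x2 x3 y1 y2 y3 ht hx₁₂.le hx₂₃.le⟩
end
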